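/- arXiv:2402.16376 — 2 statements merged into one kernel-verified Lean document; each statement's English description precedes it below -/
import Mathlib

section
/- Let m : [0,∞) × ℝ → [0,∞) be smooth in (t,x), with m(t,·) a Schwartz function and a probability density for every t ≥ 0, and suppose m solves the Dyson equation classically: ∂ₜm(t,x) + ∂ₓ(m(t,·)H[m(t,·)])(x) = 0 for all (t,x) ∈ (0,∞) × ℝ. Then for all 0 ≤ t′ ≤ t, E(m_t) = E(m_{t′}) + ∫_{t′}^{t} ∫_ℝ H[m(s,·)](x)² m(s,x) dx ds, where E(m_s) denotes the free entropy of the probability measure with density m(s,·). In particular, s ↦ E(m_s) is non-decreasing. -/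
open MeasureTheory Filter Set
open scoped ENNReal Topology

/-- Truncated (unnormalized) Hilbert transform: `∫_{|x−y|≥δ} u(y)/(x−y) dy`. -/
noncomputable def truncHilbert (u : ℝ → ℝ) (δ x : ℝ) : ℝ :=
  ∫ y in {y : ℝ | δ ≤ |x - y|}, u y / (x - y)

/-- The (unnormalized) Hilbert transform, defined as the principal value
`H[u](x) = lim_{δ→0⁺} ∫_{|x−y|≥δ} u(y)/(x−y) dy`. -/
noncomputable def hilbert (u : ℝ → ℝ) (x : ℝ) : ℝ :=
  limUnder (𝓝[>] (0 : ℝ)) (fun δ => truncHilbert u δ x)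

/-- The free entropy `E(mu) = (1/2)∫∫ log|x−y| dmu dmu`, as an extended real number:
one half of the difference between the lintegral of the positive part and the lintegral of
the negative part of `log|x−y|` with respect to the product measure. -/
noncomputable def freeEntropy (mu : Measure ℝ) : EReal :=
  ((1 / 2 : ℝ) : EReal) *
    (((∫⁻ p : ℝ × ℝ, ENNReal.ofReal (Real.log |p.1 - p.2|) ∂(mu.prod mu)) : EReal)
      - ((∫⁻ p : ℝ × ℝ, ENNReal.ofReal (-Real.log |p.1 - p.2|) ∂(mu.prod mu)) : EReal))

/-- The probability measure on `ℝ` with density `m(t,·)`. -/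
noncomputable def densMeasure (m : ℝ → ℝ → ℝ) (t : ℝ) : Measure ℝ :=
  volume.withDensity (fun x => ENNReal.ofReal (m t x))

namespace DysonFlow

theorem exists_sq_decay (f : SchwartzMap ℝ ℝ) :
    ∃ C, 0 ≤ C ∧ ∀ x, |f x| ≤ C * (1 + x ^ 2)⁻¹ := by
  obtain ⟨C0, hC0, h0⟩ := f.decay 0 0
  obtain ⟨C2, hC2, h2⟩ := f.decay 2 0
  refine ⟨C0 + C2, by positivity, fun x => ?_⟩
  have h0 := h0 x
  have h2 := h2 x
  simp only [norm_iteratedFDeriv_zero, Real.norm_eq_abs, pow_zero, one_mul, sq_abs] at h0 h2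
  rw [← div_eq_mul_inv, le_div_iff₀ (by positivity)]
  nlinarith

theorem exists_abs_le (f : SchwartzMap ℝ ℝ) : ∃ C, 0 ≤ C ∧ ∀ x, |f x| ≤ C := by
  obtain ⟨C0, hC0, h0⟩ := f.decay 0 0
  exact ⟨C0, hC0.le, fun x => by simpa using h0 x⟩

theorem exists_lipschitz (f : SchwartzMap ℝ ℝ) :
    ∃ L, 0 ≤ L ∧ ∀ x y, |f x - f y| ≤ L * |x - y| := by
  obtain ⟨L, hL, h⟩ := exists_abs_le (SchwartzMap.derivCLM ℝ ℝ f)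
  refine ⟨L, hL, fun x y => ?_⟩
  have := Convex.norm_image_sub_le_of_norm_deriv_le (𝕜 := ℝ) (f := f) (s := Set.univ) (x := y)
    (y := x) (C := L) (fun z _ => f.differentiableAt)
    (fun z _ => by simpa using h z) convex_univ (mem_univ _) (mem_univ _)
  simpa using this

/-- Antisymmetric increment of `f` around `x`. -/
def oddDiff (f : ℝ → ℝ) (x y : ℝ) : ℝ := f (x - y) - f (x + y)

theorem continuous_oddDiff {f : ℝ → ℝ} (hf : Continuous f) (x : ℝ) : Continuous (oddDiff f x) := by
  unfold oddDiff; fun_prop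

theorem exists_oddDiff_le (f : SchwartzMap ℝ ℝ) :
    ∃ K, 0 ≤ K ∧ ∀ x y, |oddDiff f x y| ≤ K * (1 + x ^ 2) * (1 + y ^ 2)⁻¹ * |y| := by
  obtain ⟨C, hC, hCf⟩ := exists_sq_decay f
  obtain ⟨L, hL, hLf⟩ := exists_lipschitz f
  refine ⟨4 * L + 4 * C, by positivity, fun x y => ?_⟩
  unfold oddDiff
  have key : |f (x - y) - f (x + y)| * (1 + y ^ 2) ≤ (4 * L + 4 * C) * (1 + x ^ 2) * |y| := by
    have hy0 := abs_nonneg y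
    have hy2 := sq_abs y
    rcases le_total |y| 1 with hy | hy
    · have h1 := hLf (x - y) (x + y)
      have : |x - y - (x + y)| = 2 * |y| := by
        rw [show x - y - (x + y) = -(2 * y) by ring, abs_neg, abs_mul]; norm_num
      rw [this] at h1
      have h2 : (1 + y ^ 2) ≤ 2 := by nlinarith
      calc |f (x - y) - f (x + y)| * (1 + y ^ 2) ≤ (L * (2 * |y|)) * 2 := by gcongr
        _ = 4 * L * 1 * |y| := by ring
        _ ≤ (4 * L + 4 * C) * (1 + x ^ 2) * |y| := by
          gcongr
          · linarith
          · nlinarith [sq_nonneg x]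
    · have e : ∀ z, z ^ 2 = x ^ 2 + y ^ 2 + 2 * x * y ∨ z ^ 2 = x ^ 2 + y ^ 2 - 2 * x * y →
          C * (1 + z ^ 2)⁻¹ * (1 + y ^ 2) ≤ 2 * C * (1 + x ^ 2) := by
        intro z hz
        have : (1 + z ^ 2)⁻¹ * (1 + y ^ 2) ≤ 2 * (1 + x ^ 2) := by
          rw [inv_mul_le_iff₀ (by positivity)]
          rcases hz with hz | hz <;> rw [hz] <;>
            nlinarith [sq_nonneg (x + y), sq_nonneg (x - y), sq_nonneg (2 * x + y),
              sq_nonneg (2 * x - y), mul_nonneg (sq_nonneg x) (sq_nonneg (x + y)),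
              mul_nonneg (sq_nonneg x) (sq_nonneg (x - y))]
        nlinarith
      have e1 := e (x - y) (Or.inr (by ring))
      have e2 := e (x + y) (Or.inl (by ring))
      have hp : (0 : ℝ) ≤ 1 + y ^ 2 := by positivity
      have h1 := mul_le_mul_of_nonneg_right (hCf (x - y)) hp
      have h2 := mul_le_mul_of_nonneg_right (hCf (x + y)) hp
      calc |f (x - y) - f (x + y)| * (1 + y ^ 2)
          ≤ (|f (x - y)| + |f (x + y)|) * (1 + y ^ 2) := by
            gcongr; exact abs_sub _ _
        _ ≤ 4 * C * (1 + x ^ 2) * 1 := by linarith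
        _ ≤ (4 * L + 4 * C) * (1 + x ^ 2) * |y| := by
          gcongr
          linarith
  rw [mul_right_comm, ← div_eq_mul_inv, le_div_iff₀ (by positivity)]
  exact key

theorem exists_oddDiff_mul_le (f : SchwartzMap ℝ ℝ) :
    ∃ K, 0 ≤ K ∧ ∀ x y c, |c| ≤ |y|⁻¹ →
      |oddDiff f x y * c| ≤ K * (1 + x ^ 2) * (1 + y ^ 2)⁻¹ := by
  obtain ⟨K, hK, h⟩ := exists_oddDiff_le f
  refine ⟨K, hK, fun x y c hc => ?_⟩
  rw [abs_mul]
  have hp : 0 ≤ K * (1 + x ^ 2) * (1 + y ^ 2)⁻¹ := by positivity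
  calc |oddDiff f x y| * |c| ≤ (K * (1 + x ^ 2) * (1 + y ^ 2)⁻¹ * |y|) * |y|⁻¹ := by
        gcongr; exact h x y
    _ = (K * (1 + x ^ 2) * (1 + y ^ 2)⁻¹) * (|y| * |y|⁻¹) := by ring
    _ ≤ (K * (1 + x ^ 2) * (1 + y ^ 2)⁻¹) * 1 := by
        gcongr; exact mul_inv_le_one
    _ = _ := mul_one _

theorem exists_integral_oddDiff_le (f : SchwartzMap ℝ ℝ) :
    ∃ M, 0 ≤ M ∧ ∀ (x : ℝ) (k : ℝ → ℝ), (∀ y, |k y| ≤ |y|⁻¹) →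
      |∫ y, oddDiff f x y * k y| ≤ M := by
  obtain ⟨L, hL, hLf⟩ := exists_lipschitz f
  have hi : Integrable (fun y => |f y|) := f.integrable.abs
  have hind : Integrable ((Icc (-1 : ℝ) 1).indicator (fun _ => 2 * L)) :=
    (integrable_indicator_iff measurableSet_Icc).2 (integrableOn_const (by simp))
  refine ⟨(∫ y, (Icc (-1 : ℝ) 1).indicator (fun _ => 2 * L) y) + (∫ y, |f y|) + ∫ y, |f y|,
    ?_, fun x k hk => ?_⟩
  · have : 0 ≤ ∫ y, (Icc (-1 : ℝ) 1).indicator (fun _ => 2 * L) y :=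
      integral_nonneg fun y => Set.indicator_nonneg (fun _ _ => by positivity) _
    have : 0 ≤ ∫ y, |f y| := integral_nonneg fun y => abs_nonneg _
    linarith
  · have h1 : Integrable (fun y => |f (x - y)|) := hi.comp_sub_left x
    have h2 : Integrable (fun y => |f (x + y)|) := hi.comp_add_left x
    have e1 : ∫ y, |f (x - y)| = ∫ y, |f y| := integral_sub_left_eq_self (fun y => |f y|) volume x
    have e2 : ∫ y, |f (x + y)| = ∫ y, |f y| := integral_add_left_eq_self (fun y => |f y|) x
    have := norm_integral_le_of_norm_le (f := fun y => oddDiff f x y * k y)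
      ((hind.add h1).add h2) (Eventually.of_forall fun y => ?_)
    · rw [Real.norm_eq_abs] at this
      refine this.trans (le_of_eq ?_)
      rw [integral_add' (hind.add h1) h2, integral_add' hind h1, e1, e2]
    · simp only [Pi.add_apply, Real.norm_eq_abs, abs_mul]
      have hk := hk y
      unfold oddDiff
      by_cases hy : |y| ≤ 1
      · have hm : y ∈ Icc (-1 : ℝ) 1 := abs_le.1 hy
        rw [Set.indicator_of_mem hm]
        have h3 := hLf (x - y) (x + y)
        have : |x - y - (x + y)| = 2 * |y| := by
          rw [show x - y - (x + y) = -(2 * y) by ring, abs_neg, abs_mul]; norm_num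
        rw [this] at h3
        have : |f (x - y) - f (x + y)| * |k y| ≤ 2 * L := by
          calc _ ≤ (L * (2 * |y|)) * |y|⁻¹ := by gcongr
            _ = 2 * L * (|y| * |y|⁻¹) := by ring
            _ ≤ 2 * L * 1 := by gcongr; exact mul_inv_le_one
            _ = _ := mul_one _
        linarith [abs_nonneg (f (x - y)), abs_nonneg (f (x + y))]
      · have hm : y ∉ Icc (-1 : ℝ) 1 := fun h => hy (abs_le.2 h)
        rw [Set.indicator_of_notMem hm]
        have h1' : |k y| ≤ 1 := hk.trans (inv_le_one_of_one_le₀ (not_le.1 hy).le)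
        calc _ ≤ (|f (x - y)| + |f (x + y)|) * 1 := by gcongr; exact abs_sub _ _
          _ = _ := by ring

theorem integral_mul_odd (f : SchwartzMap ℝ ℝ) {k : ℝ → ℝ} {c : ℝ} (hk : Measurable k)
    (hkc : ∀ y, |k y| ≤ c) (hodd : ∀ y, k (-y) = -k y) (x : ℝ) :
    ∫ y, f y * k (x - y) = (1 / 2) * ∫ y, oddDiff f x y * k y := by
  have hbd : ∀ g : ℝ → ℝ, Integrable g → Integrable (fun y => g y * k y) := fun g hg =>
    hg.mul_bdd (c := c) hk.aestronglyMeasurable (Eventually.of_forall hkc)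
  have i1 := hbd _ (f.integrable.comp_sub_left (μ := volume) x)
  have i2 := hbd _ (f.integrable.comp_add_left (μ := volume) x)
  have e1 : ∫ y, f y * k (x - y) = ∫ y, f (x - y) * k y := by
    rw [← integral_sub_left_eq_self (fun y => f (x - y) * k y) volume x]
    simp
  have e2 : ∫ y, f (x + y) * k y = -∫ y, f (x - y) * k y := by
    rw [← integral_neg_eq_self, ← integral_neg]
    simp [hodd, sub_eq_add_neg]
  simp only [oddDiff, sub_mul]
  rw [integral_sub i1 i2, e1, e2]
  ring

theorem tendsto_integral_oddDiff (f : SchwartzMap ℝ ℝ) {k : ℝ → ℝ → ℝ}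
    (hk : ∀ δ, Measurable (k δ)) (hb : ∀ δ y, |k δ y| ≤ |y|⁻¹)
    (hlim : ∀ y, Tendsto (fun δ => k δ y) (𝓝[>] 0) (𝓝 y⁻¹)) (x : ℝ) :
    Tendsto (fun δ => ∫ y, oddDiff f x y * k δ y) (𝓝[>] 0) (𝓝 (∫ y, oddDiff f x y * y⁻¹)) := by
  obtain ⟨K, hK, h⟩ := exists_oddDiff_mul_le f
  refine tendsto_integral_filter_of_dominated_convergence
    (fun y => K * (1 + x ^ 2) * (1 + y ^ 2)⁻¹) ?_ ?_ (integrable_inv_one_add_sq.const_mul _) ?_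
  · exact Eventually.of_forall fun δ =>
      ((continuous_oddDiff f.continuous x).measurable.mul (hk δ)).aestronglyMeasurable
  · exact Eventually.of_forall fun δ => Eventually.of_forall fun y => h x y _ (hb δ y)
  · exact Eventually.of_forall fun y => (hlim y).const_mul _

theorem hilbert_eq (f : SchwartzMap ℝ ℝ) (x : ℝ) :
    hilbert f x = (1 / 2) * ∫ y, oddDiff f x y * y⁻¹ := by
  let k : ℝ → ℝ → ℝ := fun δ => {y : ℝ | δ ≤ |y|}.indicator fun y => y⁻¹
  have hset : ∀ δ : ℝ, MeasurableSet {y : ℝ | δ ≤ |y|} := fun δ =>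
    measurableSet_le measurable_const continuous_abs.measurable
  have hk : ∀ δ, Measurable (k δ) := fun δ => measurable_inv.indicator (hset δ)
  have hb : ∀ δ y, |k δ y| ≤ |y|⁻¹ := by
    intro δ y
    simp only [k, Set.indicator]
    split_ifs
    · rw [abs_inv]
    · simp
  have hlim := tendsto_integral_oddDiff f hk hb (fun y => by
    rcases eq_or_ne y 0 with rfl | hy
    · have : ∀ δ, k δ 0 = (0 : ℝ)⁻¹ := fun δ => by simp [k, Set.indicator]
      simp only [this]
      exact tendsto_const_nhds
    · refine tendsto_const_nhds.congr' ?_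
      have : Iio |y| ∈ 𝓝[>] (0 : ℝ) := mem_nhdsWithin_of_mem_nhds (Iio_mem_nhds (abs_pos.2 hy))
      filter_upwards [this] with δ hδ
      have : y ∈ {y : ℝ | δ ≤ |y|} := le_of_lt (show δ < |y| from hδ)
      simp [k, Set.indicator_of_mem this]) x
  refine Tendsto.limUnder_eq ((hlim.const_mul (1 / 2)).congr' ?_)
  filter_upwards [self_mem_nhdsWithin] with δ hδ
  have hδ : 0 < δ := hδ
  rw [← integral_mul_odd f (hk δ) (c := δ⁻¹), truncHilbert, ← integral_indicator]
  · refine integral_congr_ae (Eventually.of_forall fun y => ?_)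
    simp only [k, Set.indicator, Set.mem_ofPred_eq]
    split_ifs
    · rw [div_eq_mul_inv]
    · simp
  · exact (hset δ).preimage (measurable_const.sub measurable_id)
  · intro y
    simp only [k, Set.indicator, Set.mem_ofPred_eq]
    split_ifs with h
    · rw [abs_inv]
      gcongr
    · simp [hδ.le]
  · intro y
    simp only [k, Set.indicator, Set.mem_ofPred_eq, abs_neg]
    split_ifs
    · rw [inv_neg]
    · simp

theorem hasDerivAt_hilbert (f : SchwartzMap ℝ ℝ) (x : ℝ) :
    HasDerivAt (hilbert f) (hilbert (SchwartzMap.derivCLM ℝ ℝ f) x) x := by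
  have e : hilbert f = fun x => (1 / 2) * ∫ y, oddDiff f x y * y⁻¹ := funext (hilbert_eq f)
  rw [e, hilbert_eq]
  refine HasDerivAt.const_mul _ ?_
  obtain ⟨K, hK, h⟩ := exists_oddDiff_mul_le f
  obtain ⟨K', hK', h'⟩ := exists_oddDiff_mul_le (SchwartzMap.derivCLM ℝ ℝ f)
  have hmeas : ∀ (g : SchwartzMap ℝ ℝ) z,
      AEStronglyMeasurable (fun y => oddDiff g z y * y⁻¹) volume := fun g z =>
    ((continuous_oddDiff g.continuous z).measurable.mul measurable_inv).aestronglyMeasurable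
  have habs : ∀ y : ℝ, |y⁻¹| ≤ |y|⁻¹ := fun y => (abs_inv y).le
  refine (hasDerivAt_integral_of_dominated_loc_of_deriv_le
    (F' := fun z y => oddDiff (SchwartzMap.derivCLM ℝ ℝ f) z y * y⁻¹)
    (bound := fun y => K' * (1 + (|x| + 1) ^ 2) * (1 + y ^ 2)⁻¹)
    (Metric.ball_mem_nhds x one_pos) (Eventually.of_forall fun z => hmeas f z) ?_ (hmeas _ x)
    ?_ (integrable_inv_one_add_sq.const_mul _) ?_).2
  · exact (integrable_inv_one_add_sq.const_mul _).mono' (hmeas f x)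
      (Eventually.of_forall fun y => h x y _ (habs y))
  · refine Eventually.of_forall fun y z hz => (h' z y _ (habs y)).trans ?_
    have hz : |z - x| < 1 := by simpa [Real.dist_eq] using hz
    have : |z| ≤ |x| + 1 := by
      have := abs_add_le (z - x) x
      rw [sub_add_cancel] at this
      linarith
    have : z ^ 2 ≤ (|x| + 1) ^ 2 := by
      rw [← sq_abs z]; gcongr
    gcongr
  · refine Eventually.of_forall fun y z _ => ?_
    have h1 := (f.hasDerivAt (z - y)).comp_sub_const z y
    have h2 := (f.hasDerivAt (z + y)).comp_add_const z y
    exact (h1.sub h2).mul_const y⁻¹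

/-- Smooth truncation of the kernel `1 / y`. -/
noncomputable def regKernel (ε y : ℝ) : ℝ := y / (y ^ 2 + ε ^ 2)

/-- The Hilbert transform with kernel `regKernel ε`. -/
noncomputable def regHilbert (ε : ℝ) (u : ℝ → ℝ) (x : ℝ) : ℝ := ∫ y, u y * regKernel ε (x - y)

theorem measurable_regKernel (ε : ℝ) : Measurable (regKernel ε) := by
  unfold regKernel; fun_prop

theorem regKernel_neg (ε y : ℝ) : regKernel ε (-y) = -regKernel ε y := by
  simp [regKernel, neg_div]

theorem abs_regKernel_le_inv (ε y : ℝ) : |regKernel ε y| ≤ |y|⁻¹ := by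
  rcases eq_or_ne y 0 with rfl | hy
  · simp [regKernel]
  · have h : 0 < |y| := abs_pos.2 hy
    have : 0 < y ^ 2 := by positivity
    unfold regKernel
    rw [abs_div, abs_of_nonneg (by positivity : 0 ≤ y ^ 2 + ε ^ 2), div_le_iff₀ (by positivity),
      ← sq_abs y]
    field_simp
    nlinarith [sq_nonneg ε]

theorem abs_regKernel_le {ε : ℝ} (hε : 0 < ε) (y : ℝ) : |regKernel ε y| ≤ ε⁻¹ := by
  unfold regKernel
  rw [abs_div, abs_of_nonneg (by positivity : 0 ≤ y ^ 2 + ε ^ 2), div_le_iff₀ (by positivity),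
    ← sq_abs y, inv_mul_eq_div, le_div_iff₀ hε]
  nlinarith [sq_nonneg (|y| - ε), abs_nonneg y]

theorem abs_regKernel_sub_le {ε : ℝ} (hε : 0 < ε) (x y : ℝ) :
    |regKernel ε x - regKernel ε y| ≤ (ε ^ 2)⁻¹ * |x - y| := by
  unfold regKernel
  have hx : 0 < x ^ 2 + ε ^ 2 := by positivity
  have hy : 0 < y ^ 2 + ε ^ 2 := by positivity
  have e : x / (x ^ 2 + ε ^ 2) - y / (y ^ 2 + ε ^ 2)
      = (ε ^ 2 - x * y) / ((x ^ 2 + ε ^ 2) * (y ^ 2 + ε ^ 2)) * (x - y) := by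
    field_simp; ring
  rw [e, abs_mul]
  gcongr
  rw [abs_div, abs_of_pos (mul_pos hx hy), div_le_iff₀ (mul_pos hx hy), inv_mul_eq_div,
    le_div_iff₀ (by positivity)]
  have h2 : |ε ^ 2 - x * y| ≤ ε ^ 2 + |x| * |y| := by
    rw [← abs_mul]
    calc _ ≤ |ε ^ 2| + |x * y| := abs_sub _ _
      _ = _ := by rw [abs_of_pos (by positivity : 0 < ε ^ 2)]
  have : |x| * |y| * 2 ≤ x ^ 2 + y ^ 2 := by
    rw [← sq_abs x, ← sq_abs y]; nlinarith [sq_nonneg (|x| - |y|)]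
  nlinarith [mul_nonneg (sq_nonneg x) (sq_nonneg y), sq_nonneg ε,
    mul_nonneg (sq_nonneg ε) (sq_nonneg x), mul_nonneg (sq_nonneg ε) (sq_nonneg y)]

theorem tendsto_regKernel (y : ℝ) : Tendsto (fun ε => regKernel ε y) (𝓝[>] 0) (𝓝 y⁻¹) := by
  refine tendsto_nhdsWithin_of_tendsto_nhds ?_
  rcases eq_or_ne y 0 with rfl | hy
  · simp [regKernel]
  · have : ContinuousAt (fun ε => regKernel ε y) 0 := by
      unfold regKernel
      refine ContinuousAt.div (by fun_prop) (by fun_prop) (by positivity)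
    have h := this.tendsto
    have e : regKernel 0 y = y⁻¹ := by simp [regKernel]; field_simp
    rwa [e] at h

theorem regHilbert_eq (f : SchwartzMap ℝ ℝ) {ε : ℝ} (hε : 0 < ε) (x : ℝ) :
    regHilbert ε f x = (1 / 2) * ∫ y, oddDiff f x y * regKernel ε y :=
  integral_mul_odd f (measurable_regKernel ε) (abs_regKernel_le hε) (regKernel_neg ε) x

theorem tendsto_regHilbert (f : SchwartzMap ℝ ℝ) (x : ℝ) :
    Tendsto (fun ε => regHilbert ε f x) (𝓝[>] 0) (𝓝 (hilbert f x)) := by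
  rw [hilbert_eq]
  refine ((tendsto_integral_oddDiff f measurable_regKernel abs_regKernel_le_inv
    tendsto_regKernel x).const_mul (1 / 2)).congr' ?_
  filter_upwards [self_mem_nhdsWithin] with ε hε using (regHilbert_eq f hε x).symm

theorem exists_regHilbert_le (f : SchwartzMap ℝ ℝ) :
    ∃ M, 0 ≤ M ∧ ∀ ε, 0 < ε → ∀ x, |regHilbert ε f x| ≤ M := by
  obtain ⟨M, hM, h⟩ := exists_integral_oddDiff_le f
  refine ⟨M, hM, fun ε hε x => ?_⟩
  have := h x _ (abs_regKernel_le_inv ε)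
  rw [regHilbert_eq f hε, abs_mul, abs_of_pos (by norm_num : (0 : ℝ) < 1 / 2)]
  linarith

/-- `ψ` is Lipschitz with constant `L`. -/
def LipBound (L : ℝ) (ψ : ℝ → ℝ) : Prop := ∀ x y, |ψ x - ψ y| ≤ L * |x - y|

theorem LipBound.continuous {L : ℝ} {ψ : ℝ → ℝ} (h : LipBound L ψ) : Continuous ψ :=
  (LipschitzWith.of_dist_le' (K := L) fun x y => by simpa [Real.dist_eq] using h x y).continuous

theorem LipBound.add {L L' : ℝ} {ψ ψ' : ℝ → ℝ} (h : LipBound L ψ) (h' : LipBound L' ψ') :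
    LipBound (L + L') (fun x => ψ x + ψ' x) := fun x y => by
  have := abs_add_le (ψ x - ψ y) (ψ' x - ψ' y)
  have h1 := h x y
  have h2 := h' x y
  rw [show ψ x + ψ' x - (ψ y + ψ' y) = (ψ x - ψ y) + (ψ' x - ψ' y) by ring]
  linarith

/-- Difference quotient of `ψ`, equal to `0` on the diagonal. -/
noncomputable def diffQuot (ψ : ℝ → ℝ) (p : ℝ × ℝ) : ℝ := (ψ p.1 - ψ p.2) * (p.1 - p.2)⁻¹

/-- The quadratic form `(1/2) ∬ (ψ x - ψ y) / (x - y) u(x) u(y) dx dy`. -/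
noncomputable def interaction (ψ u : ℝ → ℝ) : ℝ :=
  (1 / 2) * ∫ p : ℝ × ℝ, diffQuot ψ p * (u p.1 * u p.2)

theorem LipBound.abs_diffQuot_le {L : ℝ} {ψ : ℝ → ℝ} (hL : 0 ≤ L) (h : LipBound L ψ)
    (p : ℝ × ℝ) : |diffQuot ψ p| ≤ L := by
  unfold diffQuot
  rw [abs_mul, abs_inv]
  calc _ ≤ (L * |p.1 - p.2|) * |p.1 - p.2|⁻¹ := by gcongr; exact h _ _
    _ = L * (|p.1 - p.2| * |p.1 - p.2|⁻¹) := by ring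
    _ ≤ L * 1 := by gcongr; exact mul_inv_le_one
    _ = L := mul_one L

theorem measurable_diffQuot {ψ : ℝ → ℝ} (h : Continuous ψ) : Measurable (diffQuot ψ) := by
  have := h.measurable
  unfold diffQuot
  fun_prop

theorem LipBound.integrable_diffQuot_mul {L : ℝ} {ψ : ℝ → ℝ} (hL : 0 ≤ L) (h : LipBound L ψ)
    {g : ℝ × ℝ → ℝ} (hg : Integrable g) : Integrable (fun p => diffQuot ψ p * g p) :=
  hg.bdd_mul (c := L) (measurable_diffQuot h.continuous).aestronglyMeasurable
    (Eventually.of_forall fun p => h.abs_diffQuot_le hL p)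

theorem LipBound.abs_integral_diffQuot_mul_le {L : ℝ} {ψ : ℝ → ℝ} (hL : 0 ≤ L)
    (h : LipBound L ψ) {g G : ℝ × ℝ → ℝ} (hG : Integrable G) (hgG : ∀ p, |g p| ≤ G p) :
    |∫ p, diffQuot ψ p * g p| ≤ L * ∫ p, G p := by
  rw [← integral_const_mul, ← Real.norm_eq_abs]
  refine norm_integral_le_of_norm_le (hG.const_mul L) (Eventually.of_forall fun p => ?_)
  rw [Real.norm_eq_abs, abs_mul]
  gcongr
  · exact h.abs_diffQuot_le hL p
  · exact hgG p

theorem LipBound.abs_interaction_le {L : ℝ} {ψ u : ℝ → ℝ} (hL : 0 ≤ L) (h : LipBound L ψ)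
    (hu : Integrable u) : |interaction ψ u| ≤ (1 / 2) * (L * (∫ x, |u x|) ^ 2) := by
  unfold interaction
  rw [abs_mul, abs_of_pos (by norm_num : (0 : ℝ) < 1 / 2)]
  gcongr
  refine (h.abs_integral_diffQuot_mul_le hL (hu.abs.mul_prod hu.abs)
    (fun p => (abs_mul _ _).le)).trans (le_of_eq ?_)
  rw [Measure.volume_eq_prod, integral_prod_mul (fun x => |u x|) (fun x => |u x|), sq]

theorem LipBound.abs_interaction_sub_le {L : ℝ} {ψ u v : ℝ → ℝ} (hL : 0 ≤ L) (h : LipBound L ψ)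
    (hu : Integrable u) (hv : Integrable v) :
    |interaction ψ u - interaction ψ v|
      ≤ (1 / 2) * (L * ((∫ x, |u x - v x|) * ((∫ x, |u x|) + ∫ x, |v x|))) := by
  have hd := (hu.sub hv).abs
  unfold interaction
  rw [← mul_sub, abs_mul, abs_of_pos (by norm_num : (0 : ℝ) < 1 / 2),
    ← integral_sub (h.integrable_diffQuot_mul hL (hu.mul_prod hu))
      (h.integrable_diffQuot_mul hL (hv.mul_prod hv))]
  simp only [← mul_sub]
  gcongr
  refine (h.abs_integral_diffQuot_mul_le hL
    (G := fun p => |u p.1 - v p.1| * |u p.2| + |v p.1| * |u p.2 - v p.2|)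
    ((hd.mul_prod hu.abs).add (hv.abs.mul_prod hd)) (fun p => ?_)).trans (le_of_eq ?_)
  · rw [← abs_mul, ← abs_mul]
    refine le_trans (le_of_eq ?_) (abs_add_le _ _)
    congr 1
    ring
  · rw [Measure.volume_eq_prod]
    have e := integral_add (hd.mul_prod hu.abs) (hv.abs.mul_prod hd)
    simp only [Pi.sub_apply] at e
    rw [e, integral_prod_mul (fun x => |u x - v x|) (fun x => |u x|),
      integral_prod_mul (fun x => |v x|) (fun x => |u x - v x|)]
    ring

theorem interaction_sub {L L' : ℝ} {ψ ψ' u : ℝ → ℝ} (hL : 0 ≤ L) (h : LipBound L ψ)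
    (hL' : 0 ≤ L') (h' : LipBound L' ψ') (hu : Integrable u) :
    interaction ψ u - interaction ψ' u = interaction (fun x => ψ x - ψ' x) u := by
  unfold interaction
  rw [← mul_sub, ← integral_sub (h.integrable_diffQuot_mul hL (hu.mul_prod hu))
      (h'.integrable_diffQuot_mul hL' (hu.mul_prod hu))]
  congr 2
  ext p
  simp only [diffQuot]
  ring

theorem integrable_mul_regKernel {ε : ℝ} (hε : 0 < ε) {u : ℝ → ℝ} (hu : Integrable u) (x : ℝ) :
    Integrable (fun y => u y * regKernel ε (x - y)) :=
  hu.mul_bdd (c := ε⁻¹)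
    ((measurable_regKernel ε).comp (measurable_const.sub measurable_id)).aestronglyMeasurable
    (Eventually.of_forall fun _ => abs_regKernel_le hε _)

theorem lipBound_regHilbert {ε : ℝ} (hε : 0 < ε) {u : ℝ → ℝ} (hu : Integrable u) :
    LipBound ((ε ^ 2)⁻¹ * ∫ y, |u y|) (regHilbert ε u) := by
  intro x x'
  unfold regHilbert
  rw [← integral_sub (integrable_mul_regKernel hε hu x) (integrable_mul_regKernel hε hu x'),
    mul_right_comm, ← integral_const_mul, ← Real.norm_eq_abs]
  refine norm_integral_le_of_norm_le (hu.abs.const_mul _) (Eventually.of_forall fun y => ?_)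
  rw [← mul_sub, Real.norm_eq_abs, abs_mul, mul_comm]
  gcongr
  have := abs_regKernel_sub_le hε (x - y) (x' - y)
  rwa [sub_sub_sub_cancel_right] at this

theorem regHilbert_sub {ε : ℝ} (hε : 0 < ε) {u v : ℝ → ℝ} (hu : Integrable u)
    (hv : Integrable v) (x : ℝ) :
    regHilbert ε u x - regHilbert ε v x = regHilbert ε (fun y => u y - v y) x := by
  unfold regHilbert
  rw [← integral_sub (integrable_mul_regKernel hε hu x) (integrable_mul_regKernel hε hv x)]
  simp only [sub_mul]

theorem integral_mul_regHilbert {ε : ℝ} (hε : 0 < ε) {u ψ : ℝ → ℝ} (hu : Integrable u)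
    (hψ : Continuous ψ) {B : ℝ} (hB : ∀ x, |ψ x| ≤ B) :
    ∫ x, ψ x * (u x * regHilbert ε u x)
      = (1 / 2) * ∫ p : ℝ × ℝ, (ψ p.1 - ψ p.2) * regKernel ε (p.1 - p.2) * (u p.1 * u p.2) := by
  have hmk : Measurable (fun p : ℝ × ℝ => regKernel ε (p.1 - p.2)) :=
    (measurable_regKernel ε).comp (measurable_fst.sub measurable_snd)
  have hi : ∀ q : ℝ × ℝ → ℝ, Measurable q → (∀ p, |q p| ≤ B) →
      Integrable (fun p : ℝ × ℝ => q p * regKernel ε (p.1 - p.2) * (u p.1 * u p.2)) := by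
    intro q hq hqB
    refine (hu.mul_prod hu).bdd_mul (c := B * ε⁻¹) (hq.mul hmk).aestronglyMeasurable
      (Eventually.of_forall fun p => ?_)
    rw [Real.norm_eq_abs, abs_mul]
    gcongr
    · exact (abs_nonneg _).trans (hqB p)
    · exact hqB p
    · exact abs_regKernel_le hε _
  have hψm := hψ.measurable
  have i1 := hi (fun p => ψ p.1) (by fun_prop) (fun p => hB _)
  have i2 := hi (fun p => ψ p.2) (by fun_prop) (fun p => hB _)
  have e1 : ∫ x, ψ x * (u x * regHilbert ε u x)
      = ∫ p : ℝ × ℝ, ψ p.1 * regKernel ε (p.1 - p.2) * (u p.1 * u p.2) := by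
    rw [Measure.volume_eq_prod, integral_prod _ (by rwa [← Measure.volume_eq_prod])]
    refine integral_congr_ae (Eventually.of_forall fun x => ?_)
    simp only [regHilbert]
    rw [← integral_const_mul, ← integral_const_mul]
    refine integral_congr_ae (Eventually.of_forall fun y => ?_)
    simp only
    ring
  have e2 : ∫ p : ℝ × ℝ, ψ p.2 * regKernel ε (p.1 - p.2) * (u p.1 * u p.2)
      = -∫ p : ℝ × ℝ, ψ p.1 * regKernel ε (p.1 - p.2) * (u p.1 * u p.2) := by
    rw [Measure.volume_eq_prod, ← integral_prod_swap, ← integral_neg]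
    refine integral_congr_ae (Eventually.of_forall fun p => ?_)
    simp only [Prod.fst_swap, Prod.snd_swap]
    rw [← neg_sub p.1 p.2, regKernel_neg]
    ring
  have e3 : ∫ p : ℝ × ℝ, (ψ p.1 - ψ p.2) * regKernel ε (p.1 - p.2) * (u p.1 * u p.2)
      = (∫ p : ℝ × ℝ, ψ p.1 * regKernel ε (p.1 - p.2) * (u p.1 * u p.2))
        - ∫ p : ℝ × ℝ, ψ p.2 * regKernel ε (p.1 - p.2) * (u p.1 * u p.2) := by
    rw [← integral_sub i1 i2]
    simp only [sub_mul]
  rw [e3, e2, e1]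
  ring

theorem tendsto_integral_mul_regHilbert (f : SchwartzMap ℝ ℝ) {ψ : ℝ → ℝ} (hψ : Continuous ψ)
    {B : ℝ} (hB : ∀ x, |ψ x| ≤ B) :
    Tendsto (fun ε => ∫ x, ψ x * (f x * regHilbert ε f x)) (𝓝[>] 0)
      (𝓝 (∫ x, ψ x * (f x * hilbert f x))) := by
  obtain ⟨M, hM, h⟩ := exists_regHilbert_le f
  refine tendsto_integral_filter_of_dominated_convergence (fun x => B * (|f x| * M)) ?_ ?_
    ((f.integrable.abs.mul_const M).const_mul B) ?_
  · filter_upwards [self_mem_nhdsWithin] with ε hε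
    have := (lipBound_regHilbert hε (f.integrable (μ := volume))).continuous
    exact (hψ.mul (f.continuous.mul this)).aestronglyMeasurable
  · filter_upwards [self_mem_nhdsWithin] with ε hε
    refine Eventually.of_forall fun x => ?_
    rw [Real.norm_eq_abs, abs_mul, abs_mul]
    gcongr
    · exact (abs_nonneg _).trans (hB x)
    · exact hB x
    · exact h ε hε x
  · exact Eventually.of_forall fun x => ((tendsto_regHilbert f x).const_mul _).const_mul _

theorem integral_mul_hilbert (f : SchwartzMap ℝ ℝ) {ψ : ℝ → ℝ} {L B : ℝ} (hL : 0 ≤ L)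
    (hψ : LipBound L ψ) (hB : ∀ x, |ψ x| ≤ B) :
    ∫ x, ψ x * (f x * hilbert f x) = interaction ψ f := by
  refine tendsto_nhds_unique (tendsto_integral_mul_regHilbert f hψ.continuous hB) ?_
  have hf : Integrable f := f.integrable
  have hψm := hψ.continuous.measurable
  have : Tendsto (fun ε => (1 / 2) * ∫ p : ℝ × ℝ,
      (ψ p.1 - ψ p.2) * regKernel ε (p.1 - p.2) * (f p.1 * f p.2)) (𝓝[>] 0)
      (𝓝 (interaction ψ f)) := by
    refine Tendsto.const_mul _ ?_
    refine tendsto_integral_filter_of_dominated_convergence (fun p => L * (|f p.1| * |f p.2|))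
      ?_ ?_ ((hf.abs.mul_prod hf.abs).const_mul L) ?_
    · refine Eventually.of_forall fun ε => ?_
      refine Measurable.aestronglyMeasurable ?_
      have h1 := measurable_regKernel ε
      have h2 := f.continuous.measurable
      fun_prop
    · refine Eventually.of_forall fun ε => Eventually.of_forall fun p => ?_
      rw [Real.norm_eq_abs, abs_mul, abs_mul (f p.1)]
      gcongr
      rw [abs_mul]
      calc _ ≤ (L * |p.1 - p.2|) * |p.1 - p.2|⁻¹ := by
            gcongr
            · exact hψ _ _
            · exact abs_regKernel_le_inv _ _
        _ = L * (|p.1 - p.2| * |p.1 - p.2|⁻¹) := by ring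
        _ ≤ L * 1 := by gcongr; exact mul_inv_le_one
        _ = L := mul_one L
    · exact Eventually.of_forall fun p =>
        ((tendsto_regKernel (p.1 - p.2)).const_mul _).mul_const _
  refine this.congr' ?_
  filter_upwards [self_mem_nhdsWithin] with ε hε
  exact (integral_mul_regHilbert hε hf hψ.continuous hB).symm

/-- A family of Schwartz probability densities, continuous in `L¹`, which solves the Dyson
equation in weak form. -/
structure IsWeakSolution (ρ : ℝ → SchwartzMap ℝ ℝ) : Prop where
  nonneg : ∀ t x, 0 ≤ ρ t x
  mass : ∀ t, ∫ x, ρ t x = 1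
  tendsto_dist : ∀ t, Tendsto (fun s => ∫ x, |ρ s x - ρ t x|) (𝓝 t) (𝓝 0)
  weak : ∀ (φ ψ : ℝ → ℝ) (L : ℝ), 0 ≤ L → (∀ x, HasDerivAt φ (ψ x) x) → HasCompactSupport φ →
    LipBound L ψ → ∀ a b, 0 ≤ a → a ≤ b →
      (∫ x, φ x * ρ b x) - (∫ x, φ x * ρ a x) = ∫ s in a..b, interaction ψ (ρ s)

namespace IsWeakSolution

variable {ρ : ℝ → SchwartzMap ℝ ℝ}

theorem integral_abs (hρ : IsWeakSolution ρ) (t : ℝ) : ∫ x, |ρ t x| = 1 := by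
  rw [← hρ.mass t]
  exact integral_congr_ae (Eventually.of_forall fun x => abs_of_nonneg (hρ.nonneg t x))

theorem abs_interaction_le (hρ : IsWeakSolution ρ) {L : ℝ} {ψ : ℝ → ℝ} (hL : 0 ≤ L)
    (hψ : LipBound L ψ) (t : ℝ) : |interaction ψ (ρ t)| ≤ (1 / 2) * L := by
  have := hψ.abs_interaction_le hL ((ρ t).integrable (μ := volume))
  rwa [hρ.integral_abs, one_pow, mul_one] at this

theorem abs_interaction_sub_le (hρ : IsWeakSolution ρ) {L : ℝ} {ψ : ℝ → ℝ} (hL : 0 ≤ L)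
    (hψ : LipBound L ψ) (s t : ℝ) :
    |interaction ψ (ρ s) - interaction ψ (ρ t)| ≤ L * ∫ x, |ρ s x - ρ t x| := by
  have := hψ.abs_interaction_sub_le hL ((ρ s).integrable (μ := volume))
    ((ρ t).integrable (μ := volume))
  rw [hρ.integral_abs, hρ.integral_abs] at this
  linarith

theorem continuous_interaction (hρ : IsWeakSolution ρ) {L : ℝ} {ψ : ℝ → ℝ} (hL : 0 ≤ L)
    (hψ : LipBound L ψ) : Continuous fun s => interaction ψ (ρ s) := by
  refine continuous_iff_continuousAt.2 fun t => ?_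
  refine tendsto_iff_dist_tendsto_zero.2 ?_
  refine squeeze_zero (fun _ => dist_nonneg) (fun s => ?_)
    (by simpa using (hρ.tendsto_dist t).const_mul L)
  rw [Real.dist_eq]
  exact hρ.abs_interaction_sub_le hL hψ s t

theorem weak_of_bounded_deriv (hρ : IsWeakSolution ρ) {φ ψ : ℝ → ℝ} {L B : ℝ} (hL : 0 ≤ L)
    (hφ : ∀ x, HasDerivAt φ (ψ x) x) (hB : ∀ x, |ψ x| ≤ B) (hψ : LipBound L ψ) {a b : ℝ}
    (ha : 0 ≤ a) (hab : a ≤ b) :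
    (∫ x, φ x * ρ b x) - (∫ x, φ x * ρ a x) = ∫ s in a..b, interaction ψ (ρ s) := by
  have hB0 : 0 ≤ B := (abs_nonneg _).trans (hB 0)
  have hφc : Continuous φ := continuous_iff_continuousAt.2 fun x => (hφ x).continuousAt
  have hφle : ∀ x, |φ x| ≤ |φ 0| + B * |x| := by
    intro x
    have := Convex.norm_image_sub_le_of_norm_deriv_le (𝕜 := ℝ) (f := φ) (s := Set.univ) (x := 0)
      (y := x) (C := B) (fun z _ => (hφ z).differentiableAt)
      (fun z _ => by rw [(hφ z).deriv]; exact hB z) convex_univ (mem_univ _) (mem_univ _)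
    simp only [Real.norm_eq_abs, sub_zero] at this
    have h2 := abs_add_le (φ x - φ 0) (φ 0)
    rw [sub_add_cancel] at h2
    linarith
  let χ : ContDiffBump (0 : ℝ) := ⟨1, 2, one_pos, one_lt_two⟩
  have hχ : ContDiff ℝ 2 χ := χ.contDiff
  have hχ1 : ContDiff ℝ 1 (deriv χ) := hχ.iterate_deriv' 1 1
  have hχ2 : Continuous (deriv (deriv χ)) := (hχ1.continuous_deriv le_rfl)
  have hχs : HasCompactSupport χ := χ.hasCompactSupport
  obtain ⟨c₁, hc₁⟩ := hχs.deriv.exists_bound_of_continuous hχ1.continuous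
  obtain ⟨c₂, hc₂⟩ := hχs.deriv.deriv.exists_bound_of_continuous hχ2
  simp only [Real.norm_eq_abs] at hc₁ hc₂
  have hc₁0 : 0 ≤ c₁ := (abs_nonneg _).trans (hc₁ 0)
  have hc₂0 : 0 ≤ c₂ := (abs_nonneg _).trans (hc₂ 0)
  have hd0 : ∀ x, HasDerivAt χ (deriv χ x) x := fun x =>
    (hχ.differentiable (by norm_num) x).hasDerivAt
  have hd1 : ∀ x, HasDerivAt (deriv χ) (deriv (deriv χ) x) x := fun x =>
    (hχ1.differentiable (by norm_num) x).hasDerivAt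
  have hχabs : ∀ x, |χ x| ≤ 1 := fun x => by rw [abs_of_nonneg χ.nonneg]; exact χ.le_one
  have hχlip : ∀ x y, |χ x - χ y| ≤ c₁ * |x - y| := fun x y => by
    have := Convex.norm_image_sub_le_of_norm_deriv_le (𝕜 := ℝ) (f := χ) (s := Set.univ) (x := y)
      (y := x) (C := c₁) (fun z _ => (hd0 z).differentiableAt)
      (fun z _ => hc₁ z) convex_univ (mem_univ _) (mem_univ _)
    simpa using this
  let r : ℕ → ℝ := fun n => 1 / ((n : ℝ) + 1)
  have hr0 : ∀ n, 0 < r n := fun n => by positivity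
  have hr1 : ∀ n, r n ≤ 1 := fun n => by
    simp only [r]
    rw [div_le_one (by positivity)]
    linarith [(Nat.cast_nonneg n : (0 : ℝ) ≤ n)]
  have hrlim : Tendsto r atTop (𝓝 0) := tendsto_one_div_add_atTop_nhds_zero_nat
  have hdr : ∀ n x, HasDerivAt (fun x => χ (r n * x)) (r n * deriv χ (r n * x)) x := fun n x => by
    have h := (hd0 (r n * x)).comp x ((hasDerivAt_id x).const_mul (r n))
    rw [mul_one, mul_comm] at h
    exact h
  have hdr1 : ∀ n x, HasDerivAt (fun x => deriv χ (r n * x))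
      (r n * deriv (deriv χ) (r n * x)) x := fun n x => by
    have h := (hd1 (r n * x)).comp x ((hasDerivAt_id x).const_mul (r n))
    rw [mul_one, mul_comm] at h
    exact h
  let ψ' : ℕ → ℝ → ℝ := fun n x => ψ x * χ (r n * x) + φ x * (r n * deriv χ (r n * x))
  let K : ℝ := (L + B * c₁) + (B * c₁ + (|φ 0| + B * 2) * c₂)
  have hK : 0 ≤ K := by positivity
  have hψ' : ∀ n, LipBound K (ψ' n) := by
    intro n
    refine LipBound.add (fun x y => ?_) (fun x y => ?_)
    · have e : ψ x * χ (r n * x) - ψ y * χ (r n * y)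
          = (ψ x - ψ y) * χ (r n * x) + ψ y * (χ (r n * x) - χ (r n * y)) := by ring
      rw [e]
      refine (abs_add_le _ _).trans ?_
      rw [abs_mul, abs_mul, add_mul]
      have h1 := hχlip (r n * x) (r n * y)
      rw [← mul_sub, abs_mul, abs_of_pos (hr0 n)] at h1
      have h2 : r n * |x - y| ≤ 1 * |x - y| := by gcongr; exact hr1 n
      have h3 : |χ (r n * x) - χ (r n * y)| ≤ c₁ * |x - y| := h1.trans (by gcongr; linarith)
      calc |ψ x - ψ y| * |χ (r n * x)| + |ψ y| * |χ (r n * x) - χ (r n * y)|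
          ≤ (L * |x - y|) * 1 + B * (c₁ * |x - y|) := by
            gcongr
            · exact hψ x y
            · exact hχabs _
            · exact hB y
        _ = _ := by ring
    · have hd : ∀ z, HasDerivAt (fun x => φ x * (r n * deriv χ (r n * x)))
          (ψ z * (r n * deriv χ (r n * z)) + φ z * (r n * (r n * deriv (deriv χ) (r n * z)))) z :=
        fun z => (hφ z).mul ((hdr1 n z).const_mul (r n))
      have := Convex.norm_image_sub_le_of_norm_deriv_le (𝕜 := ℝ)
        (f := fun x => φ x * (r n * deriv χ (r n * x))) (s := Set.univ) (x := y)
        (y := x) (C := B * c₁ + (|φ 0| + B * 2) * c₂) (fun z _ => (hd z).differentiableAt)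
        (fun z _ => ?_) convex_univ (mem_univ _) (mem_univ _)
      · simpa using this
      · rw [(hd z).deriv, Real.norm_eq_abs]
        refine (abs_add_le _ _).trans (add_le_add ?_ ?_)
        · rw [abs_mul, abs_mul, abs_of_pos (hr0 n)]
          calc |ψ z| * (r n * |deriv χ (r n * z)|) ≤ B * (1 * c₁) := by
                gcongr
                · exact hB z
                · exact hr1 n
                · exact hc₁ _
            _ = _ := by ring
        · by_cases hz : |r n * z| ≤ 2
          · rw [abs_mul, abs_mul, abs_mul, abs_of_pos (hr0 n)]
            rw [abs_mul, abs_of_pos (hr0 n)] at hz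
            have h1 : r n * |φ z| ≤ |φ 0| + B * 2 := by
              calc r n * |φ z| ≤ r n * (|φ 0| + B * |z|) := by
                    gcongr
                    exact hφle z
                _ = r n * |φ 0| + B * (r n * |z|) := by ring
                _ ≤ 1 * |φ 0| + B * 2 := by gcongr; exact hr1 n
                _ = _ := by ring
            calc |φ z| * (r n * (r n * |deriv (deriv χ) (r n * z)|))
                = (r n * |φ z|) * (r n * |deriv (deriv χ) (r n * z)|) := by ring
              _ ≤ (|φ 0| + B * 2) * (1 * c₂) := by
                  gcongr
                  · exact hr1 n
                  · exact hc₂ _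
              _ = _ := by ring
          · have : deriv (deriv χ) (r n * z) = 0 := by
              refine image_eq_zero_of_notMem_tsupport fun h => hz ?_
              have h := tsupport_deriv_subset (tsupport_deriv_subset h)
              rw [χ.tsupport_eq] at h
              simpa using h
            rw [this]
            simp only [mul_zero, abs_zero]
            positivity
  have hid : ∀ n, (∫ x, (φ x * χ (r n * x)) * ρ b x) - (∫ x, (φ x * χ (r n * x)) * ρ a x)
      = ∫ s in a..b, interaction (ψ' n) (ρ s) := by
    intro n
    refine hρ.weak (fun x => φ x * χ (r n * x)) (ψ' n) K hK
      (fun x => (hφ x).mul (hdr n x)) ?_ (hψ' n) a b ha hab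
    exact (hχs.comp_homeomorph (Homeomorph.mulLeft₀ (r n) (hr0 n).ne')).mul_left
  have hχlim : ∀ x, Tendsto (fun n => χ (r n * x)) atTop (𝓝 1) := fun x => by
    have h1 : Tendsto (fun n => r n * x) atTop (𝓝 0) := by simpa using hrlim.mul_const x
    have h2 := (hχ.continuous.tendsto 0).comp h1
    rwa [χ.one_of_mem_closedBall (by simp [χ])] at h2
  have hψlim : ∀ x, Tendsto (fun n => ψ' n x) atTop (𝓝 (ψ x)) := fun x => by
    have h1 : Tendsto (fun n => r n * x) atTop (𝓝 0) := by simpa using hrlim.mul_const x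
    have h2 := (hχ1.continuous.tendsto 0).comp h1
    have h3 := ((hχlim x).const_mul (ψ x)).add ((hrlim.mul h2).const_mul (φ x))
    simpa using h3
  have hlim1 : ∀ t, Tendsto (fun n => ∫ x, (φ x * χ (r n * x)) * ρ t x) atTop
      (𝓝 (∫ x, φ x * ρ t x)) := by
    intro t
    have hρi : Integrable (fun x => |φ 0| * |ρ t x| + B * (|x| * |ρ t x|)) := by
      refine ((ρ t).integrable.abs.const_mul _).add (Integrable.const_mul ?_ B)
      simpa using (ρ t).integrable_pow_mul volume 1
    refine tendsto_integral_filter_of_dominated_convergence _ ?_ ?_ hρi ?_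
    · refine Eventually.of_forall fun n => Continuous.aestronglyMeasurable ?_
      have := hχ.continuous
      have := (ρ t).continuous
      fun_prop
    · refine Eventually.of_forall fun n => Eventually.of_forall fun x => ?_
      rw [Real.norm_eq_abs, abs_mul, abs_mul]
      calc |φ x| * |χ (r n * x)| * |ρ t x| ≤ (|φ 0| + B * |x|) * 1 * |ρ t x| := by
            gcongr
            · exact hφle x
            · exact hχabs _
        _ = _ := by ring
    · refine Eventually.of_forall fun x => ?_
      simpa using ((hχlim x).const_mul (φ x)).mul_const (ρ t x)
  have hlim2 : ∀ s, Tendsto (fun n => interaction (ψ' n) (ρ s)) atTop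
      (𝓝 (interaction ψ (ρ s))) := by
    intro s
    have hi : Integrable (ρ s) := (ρ s).integrable
    refine Tendsto.const_mul _ ?_
    refine tendsto_integral_filter_of_dominated_convergence
      (fun p => K * (|ρ s p.1| * |ρ s p.2|)) ?_ ?_ ((hi.abs.mul_prod hi.abs).const_mul K) ?_
    · exact Eventually.of_forall fun n =>
        ((hψ' n).integrable_diffQuot_mul hK (hi.mul_prod hi)).aestronglyMeasurable
    · refine Eventually.of_forall fun n => Eventually.of_forall fun p => ?_
      rw [Real.norm_eq_abs, abs_mul, abs_mul (ρ s p.1)]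
      gcongr
      exact (hψ' n).abs_diffQuot_le hK p
    · exact Eventually.of_forall fun p =>
        (((hψlim p.1).sub (hψlim p.2)).mul_const _).mul_const _
  refine tendsto_nhds_unique ((hlim1 b).sub (hlim1 a)) ?_
  simp only [hid]
  refine intervalIntegral.tendsto_integral_filter_of_dominated_convergence
    (fun _ => (1 / 2) * K) ?_ ?_ intervalIntegrable_const ?_
  · exact Eventually.of_forall fun n =>
      (hρ.continuous_interaction hK (hψ' n)).aestronglyMeasurable
  · exact Eventually.of_forall fun n => Eventually.of_forall fun s _ =>
      hρ.abs_interaction_le hK (hψ' n) s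
  · exact Eventually.of_forall fun s _ => hlim2 s

end IsWeakSolution

theorem continuous_hilbert (f : SchwartzMap ℝ ℝ) : Continuous (hilbert f) :=
  continuous_iff_continuousAt.2 fun x => (hasDerivAt_hilbert f x).continuousAt

/-- Pointwise convergence of probability densities implies convergence in `L¹`. -/
theorem tendsto_integral_abs_sub {ι : Type*} {l : Filter ι} [l.IsCountablyGenerated]
    {u : ι → ℝ → ℝ} {v : ℝ → ℝ} (hu : ∀ i, Integrable (u i)) (hv : Integrable v)
    (hu0 : ∀ i x, 0 ≤ u i x) (hu1 : ∀ i, ∫ x, u i x = 1) (hv1 : ∫ x, v x = 1)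
    (hlim : ∀ x, Tendsto (fun i => u i x) l (𝓝 (v x))) :
    Tendsto (fun i => ∫ x, |u i x - v x|) l (𝓝 0) := by
  have e : ∀ i, ∫ x, |u i x - v x| = 2 * ∫ x, max (v x - u i x) 0 := by
    intro i
    have hp : Integrable (fun x => max (v x - u i x) 0) := (hv.sub (hu i)).pos_part
    have : ∀ x, |u i x - v x| = (u i x - v x) + 2 * max (v x - u i x) 0 := by
      intro x
      rcases le_total (u i x) (v x) with h | h
      · rw [abs_of_nonpos (by linarith), max_eq_left (by linarith)]; ring
      · rw [abs_of_nonneg (by linarith), max_eq_right (by linarith)]; ring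
    simp only [this]
    have h1 := integral_add ((hu i).sub hv) (hp.const_mul 2)
    simp only [Pi.sub_apply] at h1
    rw [h1, integral_sub (hu i) hv, hu1, hv1, integral_const_mul]
    ring
  simp only [e]
  have h0 : Tendsto (fun i => ∫ x, max (v x - u i x) 0) l (𝓝 (∫ _ : ℝ, (0 : ℝ))) := by
    refine tendsto_integral_filter_of_dominated_convergence (fun x => |v x|) ?_ ?_ hv.abs ?_
    · exact Eventually.of_forall fun i => ((hv.sub (hu i)).pos_part).aestronglyMeasurable
    · refine Eventually.of_forall fun i => Eventually.of_forall fun x => ?_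
      rw [Real.norm_eq_abs, abs_of_nonneg (le_max_right _ _)]
      exact max_le (by linarith [hu0 i x, le_abs_self (v x)]) (abs_nonneg _)
    · refine Eventually.of_forall fun x => ?_
      have := ((hlim x).const_sub (v x)).max (tendsto_const_nhds (x := (0 : ℝ)))
      simpa using this
  simpa using h0.const_mul 2

theorem integral_mul_deriv_mul_hilbert (f : SchwartzMap ℝ ℝ) {φ ψ : ℝ → ℝ} {L : ℝ} (hL : 0 ≤ L)
    (hφ : ∀ x, HasDerivAt φ (ψ x) x) (hc : HasCompactSupport φ) (hψ : LipBound L ψ) :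
    ∫ x, φ x * deriv (fun y => f y * hilbert f y) x = -interaction ψ f := by
  have hφc : Continuous φ := continuous_iff_continuousAt.2 fun x => (hφ x).continuousAt
  have hψe : ψ = deriv φ := funext fun x => (hφ x).deriv.symm
  have hψs : HasCompactSupport ψ := hψe ▸ hc.deriv
  obtain ⟨B, hB⟩ := hψs.exists_bound_of_continuous hψ.continuous
  have hv : ∀ x, HasDerivAt (fun y => f y * hilbert f y)
      (SchwartzMap.derivCLM ℝ ℝ f x * hilbert f x
        + f x * hilbert (SchwartzMap.derivCLM ℝ ℝ f) x) x := fun x =>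
    (f.hasDerivAt x).mul (hasDerivAt_hilbert f x)
  have hcv : Continuous fun x => f x * hilbert f x := f.continuous.mul (continuous_hilbert f)
  have hcv' : Continuous fun x => SchwartzMap.derivCLM ℝ ℝ f x * hilbert f x
      + f x * hilbert (SchwartzMap.derivCLM ℝ ℝ f) x :=
    ((SchwartzMap.continuous _).mul (continuous_hilbert f)).add
      (f.continuous.mul (continuous_hilbert _))
  simp only [(hv _).deriv]
  rw [integral_mul_deriv_eq_deriv_mul_of_integrable (fun x _ => hφ x) (fun x _ => hv x)
    ((hφc.mul hcv').integrable_of_hasCompactSupport hc.mul_right)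
    ((hψ.continuous.mul hcv).integrable_of_hasCompactSupport hψs.mul_right)
    ((hφc.mul hcv).integrable_of_hasCompactSupport hc.mul_right),
    integral_mul_hilbert f hL hψ hB]

theorem exists_isWeakSolution {m : ℝ → ℝ → ℝ}
    (hsmooth : ContDiffOn ℝ (⊤ : ℕ∞) (Function.uncurry m) (Ici 0 ×ˢ univ))
    (hschwartz : ∀ t, 0 ≤ t → ∃ f : SchwartzMap ℝ ℝ, ∀ x, f x = m t x)
    (hnonneg : ∀ t x, 0 ≤ t → 0 ≤ m t x)
    (hprob : ∀ t, 0 ≤ t → ∫ x, m t x = 1)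
    (hpde : ∀ t x, 0 < t →
      deriv (fun s => m s x) t + deriv (fun y => m t y * hilbert (m t) y) x = 0) :
    ∃ ρ, IsWeakSolution ρ ∧ ∀ t, 0 ≤ t → m t = ρ t := by
  choose! F hF using hschwartz
  have hFm : ∀ t, 0 ≤ t → m t = F t := fun t ht => funext fun x => (hF t ht x).symm
  have hmax : ∀ t : ℝ, 0 ≤ max t 0 := fun t => le_max_right _ _
  have hdist : ∀ t, Tendsto (fun s => ∫ x, |F (max s 0) x - F (max t 0) x|) (𝓝 t) (𝓝 0) := by
    intro t
    refine tendsto_integral_abs_sub (fun _ => (F _).integrable) (F _).integrable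
      (fun s x => by rw [hF _ (hmax s)]; exact hnonneg _ _ (hmax s))
      (fun s => by rw [← hFm _ (hmax s)]; exact hprob _ (hmax s))
      (by rw [← hFm _ (hmax t)]; exact hprob _ (hmax t)) fun x => ?_
    simp only [hF _ (hmax _)]
    have h1 : ContinuousWithinAt (Function.uncurry m) (Ici 0 ×ˢ univ) (max t 0, x) :=
      hsmooth.continuousOn _ ⟨hmax t, mem_univ x⟩
    have h2 : Tendsto (fun s : ℝ => (max s 0, x)) (𝓝 t) (𝓝[Ici 0 ×ˢ univ] (max t 0, x)) := by
      refine tendsto_nhdsWithin_iff.2 ⟨?_, Eventually.of_forall fun s => ⟨hmax s, mem_univ x⟩⟩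
      have : Continuous fun s : ℝ => (max s 0, x) := by fun_prop
      exact this.tendsto t
    exact h1.tendsto.comp h2
  have hopen : IsOpen (Ioi (0 : ℝ) ×ˢ (univ : Set ℝ)) := isOpen_Ioi.prod isOpen_univ
  have hsm : ContDiffOn ℝ (⊤ : ℕ∞) (Function.uncurry m) (Ioi 0 ×ˢ univ) :=
    hsmooth.mono (prod_mono Ioi_subset_Ici_self subset_rfl)
  let g : ℝ × ℝ → ℝ := fun p => fderiv ℝ (Function.uncurry m) p (1, 0)
  have hg : ContinuousOn g (Ioi 0 ×ˢ univ) :=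
    (hsm.continuousOn_fderiv_of_isOpen hopen (by simp)).clm_apply continuousOn_const
  have hgd : ∀ s x, 0 < s → HasDerivAt (fun s => m s x) (g (s, x)) s := by
    intro s x hs
    have h1 : HasFDerivAt (Function.uncurry m) (fderiv ℝ (Function.uncurry m) (s, x)) (s, x) :=
      ((hsm.contDiffAt (hopen.mem_nhds ⟨mem_Ioi.2 hs, mem_univ x⟩)).differentiableAt
        (by simp)).hasFDerivAt
    exact h1.comp_hasDerivAt s ((hasDerivAt_id s).prodMk (hasDerivAt_const s x))
  refine ⟨fun t => F (max t 0), ⟨fun t x => ?_, fun t => ?_, hdist, ?_⟩, fun t ht => ?_⟩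
  · rw [hF _ (hmax t)]; exact hnonneg _ _ (hmax t)
  · rw [← hFm _ (hmax t)]; exact hprob _ (hmax t)
  · intro φ ψ L hL hφ hc hψ a b ha hab
    have hφc : Continuous φ := continuous_iff_continuousAt.2 fun x => (hφ x).continuousAt
    obtain ⟨B, hB⟩ := hc.exists_bound_of_continuous hφc
    have hφi : ∀ f : SchwartzMap ℝ ℝ, Integrable fun x => φ x * f x := fun f =>
      f.integrable.bdd_mul hφc.aestronglyMeasurable (Eventually.of_forall hB)
    have hmass : ∀ t, ∫ x, |F (max t 0) x| = 1 := by
      intro t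
      rw [← hprob _ (hmax t), hFm _ (hmax t)]
      refine integral_congr_ae (Eventually.of_forall fun x => abs_of_nonneg ?_)
      rw [hF _ (hmax t)]; exact hnonneg _ _ (hmax t)
    have hcont1 : Continuous fun t => ∫ x, φ x * F (max t 0) x := by
      refine continuous_iff_continuousAt.2 fun t => tendsto_iff_dist_tendsto_zero.2 ?_
      refine squeeze_zero (fun _ => dist_nonneg) (fun s => ?_)
        (by simpa using (hdist t).const_mul B)
      rw [Real.dist_eq, ← integral_sub (hφi _) (hφi _), ← integral_const_mul, ← Real.norm_eq_abs]
      refine norm_integral_le_of_norm_le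
        (((F (max s 0)).integrable.sub (F (max t 0)).integrable).abs.const_mul B)
        (Eventually.of_forall fun x => ?_)
      rw [← mul_sub, norm_mul]
      exact mul_le_mul_of_nonneg_right (hB x) (norm_nonneg _)
    have hcont2 : Continuous fun t => interaction ψ (F (max t 0)) := by
      refine continuous_iff_continuousAt.2 fun t => tendsto_iff_dist_tendsto_zero.2 ?_
      refine squeeze_zero (fun _ => dist_nonneg) (fun s => ?_)
        (by simpa using (hdist t).const_mul L)
      rw [Real.dist_eq]
      have := hψ.abs_interaction_sub_le hL ((F (max s 0)).integrable (μ := volume))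
        ((F (max t 0)).integrable (μ := volume))
      rw [hmass, hmass] at this
      linarith
    refine (intervalIntegral.integral_eq_sub_of_hasDerivAt_of_le hab hcont1.continuousOn
      (fun s hs => ?_) (hcont2.intervalIntegrable _ _)).symm
    have hs0 : 0 < s := ha.trans_lt hs.1
    obtain ⟨C, hC⟩ := ((isCompact_Icc (a := s / 2) (b := 2 * s)).prod hc).exists_bound_of_continuousOn
      (hg.mono (prod_mono (fun r hr => lt_of_lt_of_le (by positivity) hr.1) (subset_univ _)))
    have hnhds : Ioo (s / 2) (2 * s) ∈ 𝓝 s := Ioo_mem_nhds (by linarith) (by linarith)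
    have hgc : Continuous fun x => φ x * g (s, x) := by
      refine hφc.mul ?_
      exact hg.comp_continuous (by fun_prop) fun x => ⟨hs0, mem_univ x⟩
    have key := (hasDerivAt_integral_of_dominated_loc_of_deriv_le
      (F := fun t x => φ x * F (max t 0) x) (F' := fun t x => φ x * g (t, x))
      (bound := fun x => ‖φ x‖ * C) hnhds
      (Eventually.of_forall fun t => (hφi _).aestronglyMeasurable) (hφi _)
      hgc.aestronglyMeasurable ?_ ?_ ?_).2
    · have e : ∫ x, φ x * g (s, x) = interaction ψ (F (max s 0)) := by
        rw [max_eq_left hs0.le]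
        rw [← neg_neg (interaction ψ (F s)), ← integral_mul_deriv_mul_hilbert (F s) hL hφ hc hψ,
          ← integral_neg]
        refine integral_congr_ae (Eventually.of_forall fun x => ?_)
        have h := hpde s x hs0
        rw [(hgd s x hs0).deriv, hFm s hs0.le] at h
        simp only
        rw [eq_neg_of_add_eq_zero_left h]
        ring
      rw [e] at key
      exact key
    · refine Eventually.of_forall fun x t ht => ?_
      rw [norm_mul]
      by_cases hx : x ∈ tsupport φ
      · exact mul_le_mul_of_nonneg_left (hC (t, x) ⟨⟨ht.1.le, ht.2.le⟩, hx⟩) (norm_nonneg _)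
      · simp [image_eq_zero_of_notMem_tsupport hx]
    · exact (hφc.integrable_of_hasCompactSupport hc).norm.mul_const C
    · refine Eventually.of_forall fun x t ht => HasDerivAt.const_mul _ ?_
      have ht0 : 0 < t := lt_trans (by positivity) ht.1
      refine (hgd t x ht0).congr_of_eventuallyEq ?_
      filter_upwards [Ioi_mem_nhds ht0] with r hr
      rw [hF _ (hmax r), max_eq_left (le_of_lt hr)]
  · simp only [max_eq_left ht]
    exact hFm t ht

/-- The integral of `u x / (z - x) ^ n`. -/
noncomputable def cauchyPow (n : ℕ) (u : ℝ → ℝ) (z : ℂ) : ℂ :=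
  ∫ x, (u x : ℂ) * ((z - x)⁻¹) ^ n

theorem norm_inv_sub_le {ε : ℝ} (hε : 0 < ε) {z : ℂ} (hz : ε ≤ z.im) (x : ℝ) :
    ‖(z - x)⁻¹‖ ≤ ε⁻¹ := by
  rw [norm_inv]
  gcongr
  calc ε ≤ |(z - x).im| := by simpa using hz.trans (le_abs_self _)
    _ ≤ ‖z - x‖ := Complex.abs_im_le_norm _

theorem sub_ofReal_ne_zero {ε : ℝ} (hε : 0 < ε) {z : ℂ} (hz : ε ≤ z.im) (x : ℝ) :
    z - x ≠ 0 := by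
  intro h
  have := congrArg Complex.im h
  simp at this
  linarith

theorem continuous_inv_sub {ε : ℝ} (hε : 0 < ε) {z : ℂ} (hz : ε ≤ z.im) :
    Continuous fun x : ℝ => (z - x)⁻¹ :=
  Continuous.inv₀ (by fun_prop) (sub_ofReal_ne_zero hε hz)

theorem integrable_cauchyPow {ε : ℝ} (hε : 0 < ε) {z : ℂ} (hz : ε ≤ z.im) (n : ℕ) {u : ℝ → ℝ}
    (hu : Integrable u) : Integrable fun x => (u x : ℂ) * ((z - x)⁻¹) ^ n :=
  hu.ofReal.mul_bdd (c := (ε⁻¹) ^ n) ((continuous_inv_sub hε hz).pow n).aestronglyMeasurable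
    (Eventually.of_forall fun x => by
      rw [norm_pow]
      gcongr
      exact norm_inv_sub_le hε hz x)

theorem norm_cauchyPow_le {ε : ℝ} (hε : 0 < ε) {z : ℂ} (hz : ε ≤ z.im) {u : ℝ → ℝ}
    (hu : Integrable u) (h1 : ∫ x, |u x| = 1) : ‖cauchyPow 1 u z‖ ≤ ε⁻¹ := by
  have : ‖cauchyPow 1 u z‖ ≤ ∫ x, |u x| * ε⁻¹ := by
    refine norm_integral_le_of_norm_le (hu.abs.mul_const _) (Eventually.of_forall fun x => ?_)
    rw [norm_mul, pow_one, Complex.norm_real, Real.norm_eq_abs]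
    gcongr
    exact norm_inv_sub_le hε hz x
  rwa [integral_mul_const, h1, one_mul] at this

theorem re_cauchyPow {z : ℂ} (hz : 0 < z.im) {u : ℝ → ℝ} (hu : Integrable u) :
    (cauchyPow 1 u z).re = regHilbert z.im u z.re := by
  have := Complex.reCLM.integral_comp_comm (integrable_cauchyPow hz le_rfl 1 hu)
  simp only [Complex.reCLM_apply] at this
  unfold cauchyPow regHilbert
  rw [← this]
  refine integral_congr_ae (Eventually.of_forall fun x => ?_)
  simp [regKernel, Complex.inv_re, Complex.normSq_apply, sq]

theorem im_cauchyPow {z : ℂ} (hz : 0 < z.im) {u : ℝ → ℝ} (hu : Integrable u) :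
    (cauchyPow 1 u z).im = -∫ x, u x * (z.im / ((z.re - x) ^ 2 + z.im ^ 2)) := by
  have := Complex.imCLM.integral_comp_comm (integrable_cauchyPow hz le_rfl 1 hu)
  simp only [Complex.imCLM_apply] at this
  unfold cauchyPow
  rw [← this, ← integral_neg]
  refine integral_congr_ae (Eventually.of_forall fun x => ?_)
  simp [Complex.inv_im, Complex.normSq_apply, sq, neg_div]

theorem im_cauchyPow_nonpos {z : ℂ} (hz : 0 < z.im) {u : ℝ → ℝ} (hu : Integrable u)
    (hu0 : ∀ x, 0 ≤ u x) : (cauchyPow 1 u z).im ≤ 0 := by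
  rw [im_cauchyPow hz hu, neg_nonpos]
  exact integral_nonneg fun x => mul_nonneg (hu0 x) (by positivity)

theorem integral_poisson {y : ℝ} (hy : 0 < y) (x : ℝ) :
    Integrable (fun t => y / ((x - t) ^ 2 + y ^ 2)) ∧
      ∫ t, y / ((x - t) ^ 2 + y ^ 2) = Real.pi := by
  have e : (fun t => y / ((x - t) ^ 2 + y ^ 2))
      = fun t => y⁻¹ * (1 + ((x - t) / y) ^ 2)⁻¹ := by
    funext t
    field_simp
    ring
  rw [e]
  have h := (integrable_inv_one_add_sq.comp_div hy.ne').comp_sub_left x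
  refine ⟨h.const_mul _, ?_⟩
  rw [integral_const_mul, integral_sub_left_eq_self (fun t => (1 + (t / y) ^ 2)⁻¹) volume x,
    Measure.integral_comp_div (fun t => (1 + t ^ 2)⁻¹) y, integral_univ_inv_one_add_sq,
    abs_of_pos hy, smul_eq_mul, inv_mul_cancel_left₀ hy.ne']

theorem exists_norm_cauchyPow_le (f : SchwartzMap ℝ ℝ) :
    ∃ M, 0 ≤ M ∧ ∀ z : ℂ, 0 < z.im → ‖cauchyPow 1 f z‖ ≤ M := by
  obtain ⟨M, hM, h⟩ := exists_regHilbert_le f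
  obtain ⟨C, hC, hCf⟩ := exists_abs_le f
  refine ⟨M + C * Real.pi, by positivity, fun z hz => ?_⟩
  refine (Complex.norm_le_abs_re_add_abs_im _).trans (add_le_add ?_ ?_)
  · rw [re_cauchyPow hz f.integrable]
    exact h _ hz _
  · obtain ⟨hi, he⟩ := integral_poisson hz z.re
    rw [im_cauchyPow hz f.integrable, abs_neg, ← he, ← integral_const_mul, ← Real.norm_eq_abs]
    refine norm_integral_le_of_norm_le (hi.const_mul C) (Eventually.of_forall fun x => ?_)
    rw [Real.norm_eq_abs, abs_mul, abs_of_nonneg (by positivity :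
      0 ≤ z.im / ((z.re - x) ^ 2 + z.im ^ 2))]
    gcongr
    exact hCf x

theorem inv_sub_sub_inv_sub {ε : ℝ} (hε : 0 < ε) {z : ℂ} (hz : ε ≤ z.im) (x y : ℝ) :
    (z - x)⁻¹ - (z - y)⁻¹ = (x - y) * ((z - x)⁻¹ * (z - y)⁻¹) := by
  have hx := sub_ofReal_ne_zero hε hz x
  have hy := sub_ofReal_ne_zero hε hz y
  field_simp
  ring

theorem lipBound_re_inv_sq {ε : ℝ} (hε : 0 < ε) {z : ℂ} (hz : ε ≤ z.im) {c : ℂ} (hc : ‖c‖ = 1) :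
    LipBound (2 * ε⁻¹ ^ 3) (fun x : ℝ => (c * ((z - x)⁻¹) ^ 2).re) := by
  intro x y
  rw [← Complex.sub_re]
  refine (Complex.abs_re_le_norm _).trans ?_
  rw [← mul_sub, norm_mul, hc, one_mul, sq_sub_sq, inv_sub_sub_inv_sub hε hz, norm_mul, norm_mul,
    norm_mul]
  have hx := norm_inv_sub_le hε hz x
  have hy := norm_inv_sub_le hε hz y
  rw [← Complex.ofReal_sub, Complex.norm_real, Real.norm_eq_abs]
  calc ‖(z - x)⁻¹ + (z - y)⁻¹‖ * (|x - y| * (‖(z - x)⁻¹‖ * ‖(z - y)⁻¹‖))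
      ≤ (ε⁻¹ + ε⁻¹) * (|x - y| * (ε⁻¹ * ε⁻¹)) := by
        gcongr
        exact (norm_add_le _ _).trans (add_le_add hx hy)
    _ = _ := by ring

theorem hasDerivAt_re_inv {ε : ℝ} (hε : 0 < ε) {z : ℂ} (hz : ε ≤ z.im) (c : ℂ) (x : ℝ) :
    HasDerivAt (fun x : ℝ => (c * (z - x)⁻¹).re) (c * ((z - x)⁻¹) ^ 2).re x := by
  have h1 : HasDerivAt (fun x : ℝ => z - (x : ℂ)) (-1) x := by
    simpa using (Complex.ofRealCLM.hasDerivAt (x := x)).const_sub z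
  have h2 := (h1.fun_inv (sub_ofReal_ne_zero hε hz x)).const_mul c
  have h3 := Complex.reCLM.hasFDerivAt.comp_hasDerivAt x h2
  have e : Complex.reCLM (c * (-(-1) / (z - x) ^ 2)) = (c * ((z - x)⁻¹) ^ 2).re := by
    simp
  rw [e] at h3
  exact h3

theorem ae_fst_ne_snd : ∀ᵐ p : ℝ × ℝ, p.1 ≠ p.2 := by
  rw [Measure.volume_eq_prod, Measure.ae_prod_iff_ae_ae]
  · refine Eventually.of_forall fun x => ?_
    have : ({x}ᶜ : Set ℝ) ∈ ae volume := by simp [mem_ae_iff]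
    filter_upwards [this] with y hy
    exact fun h => hy h.symm
  · exact (measurableSet_eq_fun measurable_fst measurable_snd).compl

theorem interaction_re_inv_sq {ε : ℝ} (hε : 0 < ε) {z : ℂ} (hz : ε ≤ z.im) (c : ℂ) {u : ℝ → ℝ}
    (hu : Integrable u) :
    interaction (fun x : ℝ => (c * ((z - x)⁻¹) ^ 2).re) u
      = (c * (cauchyPow 1 u z * cauchyPow 2 u z)).re := by
  have i1 := integrable_cauchyPow hε hz 1 hu
  have i2 := integrable_cauchyPow hε hz 2 hu
  have key : ∀ᵐ p : ℝ × ℝ, diffQuot (fun x : ℝ => (c * ((z - x)⁻¹) ^ 2).re) p * (u p.1 * u p.2)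
      = (c * (((u p.1 : ℂ) * ((z - p.1)⁻¹) ^ 1) * ((u p.2 : ℂ) * ((z - p.2)⁻¹) ^ 2)
        + ((u p.1 : ℂ) * ((z - p.1)⁻¹) ^ 2) * ((u p.2 : ℂ) * ((z - p.2)⁻¹) ^ 1))).re := by
    filter_upwards [ae_fst_ne_snd] with p hp
    have hne : ((p.1 : ℂ) - p.2) ≠ 0 := by
      rw [← Complex.ofReal_sub]
      exact_mod_cast sub_ne_zero.2 hp
    have e : diffQuot (fun x : ℝ => (c * ((z - x)⁻¹) ^ 2).re) p * (u p.1 * u p.2)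
        = ((((p.1 - p.2)⁻¹ * (u p.1 * u p.2) : ℝ) : ℂ)
          * (c * ((z - p.1)⁻¹) ^ 2 - c * ((z - p.2)⁻¹) ^ 2)).re := by
      rw [Complex.re_ofReal_mul, Complex.sub_re]
      simp only [diffQuot]
      ring
    rw [e]
    congr 1
    have hx := sub_ofReal_ne_zero hε hz p.1
    have hy := sub_ofReal_ne_zero hε hz p.2
    rw [← mul_sub, sq_sub_sq, inv_sub_sub_inv_sub hε hz]
    push_cast
    field_simp
    ring
  unfold interaction
  rw [integral_congr_ae key, Measure.volume_eq_prod]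
  have i12 := i1.mul_prod i2
  have i21 := i2.mul_prod i1
  have hre := Complex.reCLM.integral_comp_comm ((i12.add i21).const_mul c)
  simp only [Complex.reCLM_apply, Pi.add_apply] at hre
  have hadd := integral_add i12 i21
  rw [hre, integral_const_mul, hadd,
    integral_prod_mul (fun x : ℝ => (u x : ℂ) * ((z - x)⁻¹) ^ 1)
      (fun x : ℝ => (u x : ℂ) * ((z - x)⁻¹) ^ 2),
    integral_prod_mul (fun x : ℝ => (u x : ℂ) * ((z - x)⁻¹) ^ 2)
      (fun x : ℝ => (u x : ℂ) * ((z - x)⁻¹) ^ 1)]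
  change (1 / 2) * (c * (cauchyPow 1 u z * cauchyPow 2 u z
    + cauchyPow 2 u z * cauchyPow 1 u z)).re = _
  rw [mul_comm (cauchyPow 2 u z), ← two_mul, mul_left_comm]
  rw [show (2 : ℂ) = ((2 : ℝ) : ℂ) by norm_num, Complex.re_ofReal_mul]
  ring

theorem integral_re_inv_mul {ε : ℝ} (hε : 0 < ε) {z : ℂ} (hz : ε ≤ z.im) (c : ℂ) {u : ℝ → ℝ}
    (hu : Integrable u) :
    ∫ x : ℝ, (c * (z - x)⁻¹).re * u x = (c * cauchyPow 1 u z).re := by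
  have hre := Complex.reCLM.integral_comp_comm ((integrable_cauchyPow hε hz 1 hu).const_mul c)
  simp only [Complex.reCLM_apply] at hre
  unfold cauchyPow
  rw [← integral_const_mul, ← hre]
  refine integral_congr_ae (Eventually.of_forall fun x => ?_)
  simp only
  rw [mul_left_comm, Complex.re_ofReal_mul, pow_one, mul_comm]

/-- Second order Taylor estimate for the Cauchy transform. -/
theorem norm_cauchyPow_taylor_le {ε : ℝ} (hε : 0 < ε) {z d : ℂ} (hz : ε ≤ z.im)
    (hzd : ε ≤ (z - d).im) {u : ℝ → ℝ} (hu : Integrable u) (h1 : ∫ x, |u x| = 1) :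
    ‖cauchyPow 1 u z + d * cauchyPow 2 u z - cauchyPow 1 u (z - d)‖ ≤ ‖d‖ ^ 2 * ε⁻¹ ^ 3 := by
  have i1 := integrable_cauchyPow hε hz 1 hu
  have i2 := integrable_cauchyPow hε hz 2 hu
  have i3 := integrable_cauchyPow hε hzd 1 hu
  unfold cauchyPow
  have hs := integral_sub (i1.add (i2.const_mul d)) i3
  simp only [Pi.add_apply] at hs
  rw [← integral_const_mul, ← integral_add i1 (i2.const_mul d), ← hs]
  have hb := norm_integral_le_of_norm_le (f := fun x : ℝ => (u x : ℂ) * ((z - x)⁻¹) ^ 1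
    + d * ((u x : ℂ) * ((z - x)⁻¹) ^ 2) - (u x : ℂ) * ((z - d - x)⁻¹) ^ 1)
    (hu.abs.mul_const (‖d‖ ^ 2 * ε⁻¹ ^ 3)) (Eventually.of_forall fun x => ?_)
  · rwa [integral_mul_const, h1, one_mul] at hb
  · have hx := sub_ofReal_ne_zero hε hz x
    have hy := sub_ofReal_ne_zero hε hzd x
    have e : (u x : ℂ) * ((z - x)⁻¹) ^ 1 + d * ((u x : ℂ) * ((z - x)⁻¹) ^ 2)
        - (u x : ℂ) * ((z - d - x)⁻¹) ^ 1
        = (u x : ℂ) * -(d ^ 2 * (((z - x)⁻¹) ^ 2 * (z - d - x)⁻¹)) := by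
      field_simp
      ring
    rw [e, norm_mul, norm_neg, Complex.norm_real, Real.norm_eq_abs, norm_mul, norm_mul, norm_pow,
      norm_pow]
    have h2 := norm_inv_sub_le hε hz x
    have h3 := norm_inv_sub_le hε hzd x
    gcongr
    calc ‖(z - x)⁻¹‖ ^ 2 * ‖(z - d - x)⁻¹‖ ≤ ε⁻¹ ^ 2 * ε⁻¹ := by gcongr
      _ = _ := by ring

namespace IsWeakSolution

variable {ρ : ℝ → SchwartzMap ℝ ℝ}

theorem norm_cauchyPow_step_le (hρ : IsWeakSolution ρ) {ε : ℝ} (hε : 0 < ε) {z : ℂ}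
    (hz : ε ≤ z.im) {t t' η : ℝ} (ht : 0 ≤ t) (htt' : t ≤ t')
    (hη : ∀ s ∈ Icc t t', ∫ x, |ρ s x - ρ t x| ≤ η) :
    ‖cauchyPow 1 (ρ t') z‖ ≤ ‖cauchyPow 1 (ρ t) (z - (t' - t : ℝ) * cauchyPow 1 (ρ t) z)‖
      + (2 * ε⁻¹ ^ 3 * η + (t' - t) * ε⁻¹ ^ 5) * (t' - t) := by
  have hρi : ∀ s, Integrable (ρ s) := fun s => (ρ s).integrable
  obtain ⟨c, hc, hce⟩ := Complex.exists_norm_eq_mul_self (cauchyPow 1 (ρ t') z)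
  have hL : 0 ≤ 2 * ε⁻¹ ^ 3 := by positivity
  have hlip := lipBound_re_inv_sq hε hz hc
  set ψ : ℝ → ℝ := fun x => (c * ((z - x)⁻¹) ^ 2).re with hψ
  have hweak := hρ.weak_of_bounded_deriv (B := ε⁻¹ ^ 2) hL (hasDerivAt_re_inv hε hz c)
    (fun x => by
      refine (Complex.abs_re_le_norm _).trans ?_
      rw [norm_mul, hc, one_mul, norm_pow]
      gcongr
      exact norm_inv_sub_le hε hz x) hlip ht htt'
  rw [integral_re_inv_mul hε hz c (hρi _), integral_re_inv_mul hε hz c (hρi _), ← hce,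
    Complex.ofReal_re] at hweak
  have hh : 0 ≤ t' - t := by linarith
  have hbound : |(∫ s in t..t', interaction ψ (ρ s)) - (t' - t) * interaction ψ (ρ t)|
      ≤ 2 * ε⁻¹ ^ 3 * η * (t' - t) := by
    have e : (∫ s in t..t', interaction ψ (ρ s)) - (t' - t) * interaction ψ (ρ t)
        = ∫ s in t..t', (interaction ψ (ρ s) - interaction ψ (ρ t)) := by
      rw [intervalIntegral.integral_sub
        ((hρ.continuous_interaction hL hlip).intervalIntegrable _ _) intervalIntegrable_const]
      simp
    rw [e, ← Real.norm_eq_abs, ← abs_of_nonneg hh]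
    refine intervalIntegral.norm_integral_le_of_norm_le_const fun s hs => ?_
    rw [uIoc_of_le htt'] at hs
    refine (hρ.abs_interaction_sub_le hL hlip s t).trans ?_
    gcongr
    exact hη s ⟨hs.1.le, hs.2⟩
  rw [interaction_re_inv_sq hε hz c (hρi t)] at hbound
  set G := cauchyPow 1 (ρ t) z with hG
  have hGim : G.im ≤ 0 := im_cauchyPow_nonpos (hε.trans_le hz) (hρi t) (hρ.nonneg t)
  have hGn : ‖G‖ ≤ ε⁻¹ := norm_cauchyPow_le hε hz (hρi t) (hρ.integral_abs t)
  have hzd : ε ≤ (z - (t' - t : ℝ) * G).im := by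
    rw [Complex.sub_im, Complex.im_ofReal_mul]
    nlinarith
  have htay := norm_cauchyPow_taylor_le hε hz hzd (hρi t) (hρ.integral_abs t)
  have hd : ‖((t' - t : ℝ) : ℂ) * G‖ ^ 2 * ε⁻¹ ^ 3 ≤ (t' - t) * ε⁻¹ ^ 5 * (t' - t) := by
    rw [norm_mul, Complex.norm_real, Real.norm_eq_abs, abs_of_nonneg hh]
    calc ((t' - t) * ‖G‖) ^ 2 * ε⁻¹ ^ 3 ≤ ((t' - t) * ε⁻¹) ^ 2 * ε⁻¹ ^ 3 := by gcongr
      _ = _ := by ring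
  have hre : (c * G).re + (t' - t) * (c * (G * cauchyPow 2 (ρ t) z)).re
      ≤ ‖G + (t' - t : ℝ) * G * cauchyPow 2 (ρ t) z‖ := by
    have e : (c * G).re + (t' - t) * (c * (G * cauchyPow 2 (ρ t) z)).re
        = (c * (G + (t' - t : ℝ) * G * cauchyPow 2 (ρ t) z)).re := by
      rw [mul_add, Complex.add_re, ← Complex.re_ofReal_mul]
      congr 2
      ring
    rw [e]
    refine (Complex.re_le_norm _).trans ?_
    rw [norm_mul, hc, one_mul]
  have htri := norm_le_norm_add_norm_sub' (G + (t' - t : ℝ) * G * cauchyPow 2 (ρ t) z)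
    (cauchyPow 1 (ρ t) (z - (t' - t : ℝ) * G))
  have := (abs_le.1 hbound).2
  linarith

theorem continuous_cauchyPow (hρ : IsWeakSolution ρ) {ε : ℝ} (hε : 0 < ε) {z : ℂ}
    (hz : ε ≤ z.im) : Continuous fun t => cauchyPow 1 (ρ t) z := by
  have hρi : ∀ s, Integrable (ρ s) := fun s => (ρ s).integrable
  refine continuous_iff_continuousAt.2 fun t => tendsto_iff_norm_sub_tendsto_zero.2 ?_
  refine squeeze_zero (fun _ => norm_nonneg _) (fun s => ?_)
    (by simpa using (hρ.tendsto_dist t).mul_const ε⁻¹)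
  unfold cauchyPow
  rw [← integral_sub (integrable_cauchyPow hε hz 1 (hρi s))
    (integrable_cauchyPow hε hz 1 (hρi t)), ← integral_mul_const]
  refine norm_integral_le_of_norm_le (((hρi s).sub (hρi t)).abs.mul_const _)
    (Eventually.of_forall fun x => ?_)
  rw [← sub_mul, norm_mul, pow_one, ← Complex.ofReal_sub, Complex.norm_real, Real.norm_eq_abs]
  gcongr
  exact norm_inv_sub_le hε hz x

/-- Maximum principle: the supremum of the Cauchy transform does not increase in time. -/
theorem norm_cauchyPow_le (hρ : IsWeakSolution ρ) {M : ℝ}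
    (hM : ∀ z : ℂ, 0 < z.im → ‖cauchyPow 1 (ρ 0) z‖ ≤ M) {t : ℝ} (ht : 0 ≤ t) {z : ℂ}
    (hz : 0 < z.im) : ‖cauchyPow 1 (ρ t) z‖ ≤ M := by
  set ε := z.im with hε
  have main : ∀ η, 0 < η → ∀ w : ℂ, ε ≤ w.im → ‖cauchyPow 1 (ρ t) w‖ ≤ M + η * t := by
    intro η hη
    let S : Set ℝ := {s | ∀ w : ℂ, ε ≤ w.im → ‖cauchyPow 1 (ρ s) w‖ ≤ M + η * s}
    have hS : IsClosed S := by
      have : S = ⋂ w : ℂ, ⋂ _ : ε ≤ w.im, {s | ‖cauchyPow 1 (ρ s) w‖ ≤ M + η * s} := by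
        ext s; simp [S]
      rw [this]
      refine isClosed_iInter fun w => isClosed_iInter fun hw => ?_
      exact isClosed_le (hρ.continuous_cauchyPow hz hw).norm (by fun_prop)
    have h0 : (0 : ℝ) ∈ S := fun w hw => by simpa using hM w (hz.trans_le hw)
    refine (hS.inter isClosed_Icc).Icc_subset_of_forall_mem_nhdsWithin (a := 0) (b := t) h0
      (fun s hs => ?_) ⟨ht, le_rfl⟩
    have hs0 : 0 ≤ s := hs.2.1
    set κ : ℝ := η / (4 * ε⁻¹ ^ 3) with hκ
    have hκ0 : 0 < κ := by positivity
    obtain ⟨δ, hδ, hball⟩ := Metric.eventually_nhds_iff.1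
      ((hρ.tendsto_dist s).eventually_lt_const hκ0)
    set δ' : ℝ := min δ (η / (2 * ε⁻¹ ^ 5)) with hδ'
    have hδ'0 : 0 < δ' := lt_min hδ (by positivity)
    have : Ioo s (s + δ') ∈ 𝓝[>] s := Ioo_mem_nhdsGT (by linarith)
    filter_upwards [this] with s' hs' w hw
    have hstep := hρ.norm_cauchyPow_step_le hz hw hs0 hs'.1.le (η := κ) (fun r hr => by
      refine (hball ?_).le
      rw [Real.dist_eq, abs_of_nonneg (by linarith [hr.1])]
      have := min_le_left δ (η / (2 * ε⁻¹ ^ 5))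
      linarith [hr.2, hs'.2])
    have hd : (s' - s) * ε⁻¹ ^ 5 ≤ η / 2 := by
      have h1 := min_le_right δ (η / (2 * ε⁻¹ ^ 5))
      have h2 : s' - s ≤ η / (2 * ε⁻¹ ^ 5) := by linarith [hs'.2]
      calc (s' - s) * ε⁻¹ ^ 5 ≤ η / (2 * ε⁻¹ ^ 5) * ε⁻¹ ^ 5 := by gcongr
        _ = η / 2 := by field_simp
    have hk : 2 * ε⁻¹ ^ 3 * κ = η / 2 := by
      rw [hκ]; field_simp; ring
    have hh : 0 ≤ s' - s := by linarith [hs'.1]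
    have him : ε ≤ (w - (s' - s : ℝ) * cauchyPow 1 (ρ s) w).im := by
      have := im_cauchyPow_nonpos (hz.trans_le hw) (ρ s).integrable (hρ.nonneg s)
      rw [Complex.sub_im, Complex.im_ofReal_mul]
      nlinarith
    have hprev := hs.1 _ him
    have : (2 * ε⁻¹ ^ 3 * κ + (s' - s) * ε⁻¹ ^ 5) * (s' - s) ≤ η * (s' - s) := by
      gcongr
      linarith
    linarith
  refine le_of_forall_pos_le_add fun e he => ?_
  have h := main (e / (t + 1)) (by positivity) z le_rfl
  have : e / (t + 1) * t ≤ e := by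
    rw [div_mul_eq_mul_div, div_le_iff₀ (by positivity)]
    nlinarith
  linarith

theorem exists_regHilbert_le (hρ : IsWeakSolution ρ) :
    ∃ M, 0 ≤ M ∧ ∀ t, 0 ≤ t → ∀ ε, 0 < ε → ∀ x, |regHilbert ε (ρ t) x| ≤ M := by
  obtain ⟨M, hM, h⟩ := exists_norm_cauchyPow_le (ρ 0)
  refine ⟨M, hM, fun t ht ε hε x => ?_⟩
  have h1 := hρ.norm_cauchyPow_le h ht (z := ⟨x, ε⟩) hε
  have h2 := re_cauchyPow (z := ⟨x, ε⟩) hε ((ρ t).integrable (μ := volume))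
  simp only at h2
  rw [← h2]
  exact (Complex.abs_re_le_norm _).trans h1

end IsWeakSolution

/-- The regularization `½ log (r ^ 2 + ε ^ 2)` of `log |r|`. -/
noncomputable def logKernel (ε r : ℝ) : ℝ := (1 / 2) * Real.log (r ^ 2 + ε ^ 2)

/-- The regularized logarithmic potential. -/
noncomputable def logPotential (ε : ℝ) (u : ℝ → ℝ) (x : ℝ) : ℝ := ∫ y, u y * logKernel ε (x - y)

theorem logKernel_neg (ε r : ℝ) : logKernel ε (-r) = logKernel ε r := by
  simp [logKernel]

theorem hasDerivAt_logKernel {ε : ℝ} (hε : 0 < ε) (r : ℝ) :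
    HasDerivAt (logKernel ε) (regKernel ε r) r := by
  have h1 : HasDerivAt (fun r : ℝ => r ^ 2 + ε ^ 2) (2 * r) r := by
    simpa using (hasDerivAt_pow 2 r).add_const (ε ^ 2)
  have h2 := (h1.log (by positivity)).const_mul (1 / 2)
  have e : 1 / 2 * (2 * r / (r ^ 2 + ε ^ 2)) = regKernel ε r := by
    unfold regKernel
    ring
  rw [e] at h2
  exact h2

theorem continuous_logKernel {ε : ℝ} (hε : 0 < ε) : Continuous (logKernel ε) :=
  continuous_iff_continuousAt.2 fun r => (hasDerivAt_logKernel hε r).continuousAt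

theorem abs_logKernel_le {ε : ℝ} (hε : 0 < ε) (r : ℝ) :
    |logKernel ε r| ≤ |logKernel ε 0| + ε⁻¹ * |r| := by
  have h := Convex.norm_image_sub_le_of_norm_hasDerivWithin_le (f := logKernel ε) (s := univ)
    (x := 0) (y := r) (C := ε⁻¹) (fun z _ => (hasDerivAt_logKernel hε z).hasDerivWithinAt)
    (fun z _ => abs_regKernel_le hε z) convex_univ (mem_univ _) (mem_univ _)
  simp only [Real.norm_eq_abs, sub_zero] at h
  have h2 := abs_add_le (logKernel ε r - logKernel ε 0) (logKernel ε 0)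
  rw [sub_add_cancel] at h2
  linarith

theorem integrable_abs_id_mul (f : SchwartzMap ℝ ℝ) : Integrable fun x => |x| * |f x| := by
  simpa using f.integrable_pow_mul volume 1

/-- Kernels of linear growth are integrable against products of Schwartz functions. -/
theorem integrable_prod_mul_of_le {k : ℝ → ℝ} (hk : Measurable k) {A B : ℝ} (hB : 0 ≤ B)
    (h : ∀ r, |k r| ≤ A + B * |r|) (f g : SchwartzMap ℝ ℝ) :
    Integrable fun p : ℝ × ℝ => g p.1 * (f p.2 * k (p.1 - p.2)) := by
  have hf : Integrable f := f.integrable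
  have hg : Integrable g := g.integrable
  have h1 := (hg.abs.mul_prod hf.abs).const_mul A
  have h2 := ((integrable_abs_id_mul g).mul_prod hf.abs).const_mul B
  have h3 := (hg.abs.mul_prod (integrable_abs_id_mul f)).const_mul B
  refine ((h1.add h2).add h3).mono' ?_ (Eventually.of_forall fun p => ?_)
  · have := g.continuous.measurable
    have := f.continuous.measurable
    exact Measurable.aestronglyMeasurable (by fun_prop)
  · simp only [Pi.add_apply, Real.norm_eq_abs, abs_mul]
    have h4 : |k (p.1 - p.2)| ≤ A + B * (|p.1| + |p.2|) :=
      (h _).trans (by gcongr; exact abs_sub _ _)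
    calc |g p.1| * (|f p.2| * |k (p.1 - p.2)|)
        ≤ |g p.1| * (|f p.2| * (A + B * (|p.1| + |p.2|))) := by gcongr
      _ = _ := by ring

theorem integrable_mul_logKernel {ε : ℝ} (hε : 0 < ε) (f : SchwartzMap ℝ ℝ) (x : ℝ) :
    Integrable fun y => f y * logKernel ε (x - y) := by
  have hf : Integrable f := f.integrable
  refine ((hf.abs.const_mul (|logKernel ε 0| + ε⁻¹ * |x|)).add
    ((integrable_abs_id_mul f).const_mul ε⁻¹)).mono' ?_ (Eventually.of_forall fun y => ?_)
  · exact (f.continuous.mul ((continuous_logKernel hε).comp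
      (continuous_const.sub continuous_id))).aestronglyMeasurable
  · simp only [Pi.add_apply, Real.norm_eq_abs, abs_mul]
    have h4 : |logKernel ε (x - y)| ≤ |logKernel ε 0| + ε⁻¹ * (|x| + |y|) :=
      (abs_logKernel_le hε _).trans (by gcongr; exact abs_sub _ _)
    calc |f y| * |logKernel ε (x - y)|
        ≤ |f y| * (|logKernel ε 0| + ε⁻¹ * (|x| + |y|)) := by gcongr
      _ = _ := by ring

theorem hasDerivAt_logPotential {ε : ℝ} (hε : 0 < ε) (f : SchwartzMap ℝ ℝ) (x : ℝ) :
    HasDerivAt (logPotential ε f) (regHilbert ε f x) x := by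
  have hf : Integrable f := f.integrable
  refine (hasDerivAt_integral_of_dominated_loc_of_deriv_le (s := univ)
    (F := fun x y => f y * logKernel ε (x - y)) (F' := fun x y => f y * regKernel ε (x - y))
    (bound := fun y => |f y| * ε⁻¹) Filter.univ_mem
    (Eventually.of_forall fun x => (integrable_mul_logKernel hε f x).aestronglyMeasurable)
    (integrable_mul_logKernel hε f x) (integrable_mul_regKernel hε hf x).aestronglyMeasurable
    (Eventually.of_forall fun y x _ => ?_) (hf.abs.mul_const _)
    (Eventually.of_forall fun y x _ => ?_)).2
  · rw [Real.norm_eq_abs, abs_mul]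
    gcongr
    exact abs_regKernel_le hε _
  · exact ((hasDerivAt_logKernel hε (x - y)).comp_sub_const x y).const_mul _

theorem integral_logPotential_mul {ε : ℝ} (hε : 0 < ε) (f g : SchwartzMap ℝ ℝ) :
    ∫ x, logPotential ε f x * g x
      = ∫ p : ℝ × ℝ, g p.1 * (f p.2 * logKernel ε (p.1 - p.2)) := by
  rw [Measure.volume_eq_prod, integral_prod _ (integrable_prod_mul_of_le
    (continuous_logKernel hε).measurable (inv_nonneg.2 hε.le) (abs_logKernel_le hε) f g)]
  refine integral_congr_ae (Eventually.of_forall fun x => ?_)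
  simp only
  rw [integral_const_mul, mul_comm]
  rfl

theorem integral_logPotential_mul_comm {ε : ℝ} (hε : 0 < ε) (f g : SchwartzMap ℝ ℝ) :
    ∫ x, logPotential ε f x * g x = ∫ x, logPotential ε g x * f x := by
  rw [integral_logPotential_mul hε, integral_logPotential_mul hε, Measure.volume_eq_prod,
    ← integral_prod_swap]
  refine integral_congr_ae (Eventually.of_forall fun p => ?_)
  simp only [Prod.fst_swap, Prod.snd_swap]
  rw [← logKernel_neg, neg_sub, mul_left_comm]

namespace IsWeakSolution

variable {ρ : ℝ → SchwartzMap ℝ ℝ}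

theorem abs_regHilbert_le (hρ : IsWeakSolution ρ) {ε : ℝ} (hε : 0 < ε) (t x : ℝ) :
    |regHilbert ε (ρ t) x| ≤ ε⁻¹ := by
  have hb := norm_integral_le_of_norm_le (f := fun y => ρ t y * regKernel ε (x - y))
    (((ρ t).integrable (μ := volume)).abs.mul_const ε⁻¹) (Eventually.of_forall fun y => by
      rw [Real.norm_eq_abs, abs_mul]
      gcongr
      exact abs_regKernel_le hε _)
  rwa [integral_mul_const, hρ.integral_abs, one_mul] at hb

theorem lipBound_regHilbert (hρ : IsWeakSolution ρ) {ε : ℝ} (hε : 0 < ε) (t : ℝ) :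
    LipBound (ε ^ 2)⁻¹ (regHilbert ε (ρ t)) := by
  have := DysonFlow.lipBound_regHilbert hε ((ρ t).integrable (μ := volume))
  rwa [hρ.integral_abs, mul_one] at this

/-- The rate of change of the regularized energy. -/
theorem abs_interaction_regHilbert_sub_le (hρ : IsWeakSolution ρ) {ε : ℝ} (hε : 0 < ε)
    (a b s : ℝ) :
    |interaction (regHilbert ε (ρ a)) (ρ s) - interaction (regHilbert ε (ρ b)) (ρ s)|
      ≤ (ε ^ 2)⁻¹ * ∫ x, |ρ a x - ρ b x| := by
  have ha : Integrable (ρ a) := (ρ a).integrable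
  have hb : Integrable (ρ b) := (ρ b).integrable
  have h0 : 0 ≤ (ε ^ 2)⁻¹ := by positivity
  rw [interaction_sub h0 (hρ.lipBound_regHilbert hε a) h0 (hρ.lipBound_regHilbert hε b)
    (ρ s).integrable]
  simp only [regHilbert_sub hε ha hb]
  have hi : 0 ≤ ∫ x, |ρ a x - ρ b x| := integral_nonneg fun _ => abs_nonneg _
  have := hρ.abs_interaction_le (by positivity) (DysonFlow.lipBound_regHilbert hε (ha.sub hb)) s
  simp only [Pi.sub_apply] at this
  refine this.trans ?_
  have : 0 ≤ (ε ^ 2)⁻¹ * ∫ x, |ρ a x - ρ b x| := by positivity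
  linarith

theorem continuous_interaction_regHilbert (hρ : IsWeakSolution ρ) {ε : ℝ} (hε : 0 < ε) :
    Continuous fun s => interaction (regHilbert ε (ρ s)) (ρ s) := by
  refine continuous_iff_continuousAt.2 fun t => tendsto_iff_dist_tendsto_zero.2 ?_
  have h0 : 0 ≤ (ε ^ 2)⁻¹ := by positivity
  refine squeeze_zero (fun _ => dist_nonneg) (fun s => ?_)
    (by simpa using (hρ.tendsto_dist t).const_mul (2 * (ε ^ 2)⁻¹))
  rw [Real.dist_eq]
  have h1 := hρ.abs_interaction_regHilbert_sub_le hε s t s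
  have h2 := hρ.abs_interaction_sub_le h0 (hρ.lipBound_regHilbert hε t) s t
  have h3 := abs_sub_le (interaction (regHilbert ε (ρ s)) (ρ s))
    (interaction (regHilbert ε (ρ t)) (ρ s)) (interaction (regHilbert ε (ρ t)) (ρ t))
  linarith

theorem regEnergy_sub (hρ : IsWeakSolution ρ) {ε : ℝ} (hε : 0 < ε) {a b : ℝ} (ha : 0 ≤ a)
    (hab : a ≤ b) :
    (∫ x, logPotential ε (ρ b) x * ρ b x) - (∫ x, logPotential ε (ρ a) x * ρ a x)
      = ∫ s in a..b, (interaction (regHilbert ε (ρ a)) (ρ s)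
        + interaction (regHilbert ε (ρ b)) (ρ s)) := by
  have h0 : 0 ≤ (ε ^ 2)⁻¹ := by positivity
  have hw := fun t => hρ.weak_of_bounded_deriv h0 (hasDerivAt_logPotential hε (ρ t))
    (hρ.abs_regHilbert_le hε t) (hρ.lipBound_regHilbert hε t) ha hab
  rw [intervalIntegral.integral_add
    ((hρ.continuous_interaction h0 (hρ.lipBound_regHilbert hε a)).intervalIntegrable _ _)
    ((hρ.continuous_interaction h0 (hρ.lipBound_regHilbert hε b)).intervalIntegrable _ _),
    ← hw a, ← hw b, integral_logPotential_mul_comm hε (ρ a) (ρ b)]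
  ring

theorem abs_regEnergy_sub_le (hρ : IsWeakSolution ρ) {ε : ℝ} (hε : 0 < ε) {a b : ℝ} (ha : 0 ≤ a)
    (hab : a ≤ b) :
    |(∫ x, logPotential ε (ρ b) x * ρ b x) - (∫ x, logPotential ε (ρ a) x * ρ a x)|
      ≤ (ε ^ 2)⁻¹ * (b - a) := by
  have h0 : 0 ≤ (ε ^ 2)⁻¹ := by positivity
  rw [hρ.regEnergy_sub hε ha hab]
  refine (intervalIntegral.norm_integral_le_of_norm_le_const (E := ℝ) (C := (ε ^ 2)⁻¹)
    fun s _ => ?_).trans_eq (by rw [abs_of_nonneg (sub_nonneg.2 hab)])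
  refine (abs_add_le _ _).trans ?_
  have h1 := hρ.abs_interaction_le h0 (hρ.lipBound_regHilbert hε a) s
  have h2 := hρ.abs_interaction_le h0 (hρ.lipBound_regHilbert hε b) s
  linarith

theorem abs_regEnergy_sub_sub_le (hρ : IsWeakSolution ρ) {ε η : ℝ} (hε : 0 < ε) {a b : ℝ}
    (ha : 0 ≤ a) (hab : a ≤ b) (hη : ∀ s ∈ Icc a b, ∫ x, |ρ s x - ρ a x| ≤ η) :
    |(∫ x, logPotential ε (ρ b) x * ρ b x) - (∫ x, logPotential ε (ρ a) x * ρ a x)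
      - 2 * ∫ s in a..b, interaction (regHilbert ε (ρ s)) (ρ s)|
      ≤ 4 * (ε ^ 2)⁻¹ * η * (b - a) := by
  have h0 : 0 ≤ (ε ^ 2)⁻¹ := by positivity
  rw [hρ.regEnergy_sub hε ha hab, ← intervalIntegral.integral_const_mul,
    ← intervalIntegral.integral_sub]
  · refine (intervalIntegral.norm_integral_le_of_norm_le_const (E := ℝ) (C := 4 * (ε ^ 2)⁻¹ * η)
      fun s hs => ?_).trans_eq (by rw [abs_of_nonneg (sub_nonneg.2 hab)])
    rw [uIoc_of_le hab] at hs
    have h1 := hρ.abs_interaction_regHilbert_sub_le hε s a s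
    have h2 := hρ.abs_interaction_regHilbert_sub_le hε b a s
    have h3 : (ε ^ 2)⁻¹ * ∫ x, |ρ s x - ρ a x| ≤ (ε ^ 2)⁻¹ * η := by
      gcongr; exact hη s ⟨hs.1.le, hs.2⟩
    have h4 : (ε ^ 2)⁻¹ * ∫ x, |ρ b x - ρ a x| ≤ (ε ^ 2)⁻¹ * η := by
      gcongr; exact hη b ⟨hab, le_rfl⟩
    rw [Real.norm_eq_abs]
    have h5 := abs_le.1 (h1.trans h3)
    have h6 := abs_le.1 (h2.trans h4)
    rw [abs_le]
    constructor <;> nlinarith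
  · exact ((hρ.continuous_interaction h0 (hρ.lipBound_regHilbert hε a)).add
      (hρ.continuous_interaction h0 (hρ.lipBound_regHilbert hε b))).intervalIntegrable _ _
  · exact ((hρ.continuous_interaction_regHilbert hε).const_mul 2).intervalIntegrable _ _

theorem regEnergy_identity (hρ : IsWeakSolution ρ) {ε : ℝ} (hε : 0 < ε) {a b : ℝ} (ha : 0 ≤ a)
    (hab : a ≤ b) :
    (∫ x, logPotential ε (ρ b) x * ρ b x) - (∫ x, logPotential ε (ρ a) x * ρ a x)
      = 2 * ∫ s in a..b, interaction (regHilbert ε (ρ s)) (ρ s) := by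
  have h0 : 0 ≤ (ε ^ 2)⁻¹ := by positivity
  have hΘ := hρ.continuous_interaction_regHilbert hε
  have hΘi : ∀ c d, IntervalIntegrable (fun s => interaction (regHilbert ε (ρ s)) (ρ s))
      volume c d := fun c d => hΘ.intervalIntegrable c d
  set e : ℝ → ℝ := fun t => ∫ x, logPotential ε (ρ t) x * ρ t x with he
  set Q : ℝ → ℝ := fun t => ∫ s in a..t, interaction (regHilbert ε (ρ s)) (ρ s) with hQ
  have hce : ContinuousOn e (Icc a b) := by
    have : LipschitzOnWith (NNReal.mk (ε ^ 2)⁻¹ h0) e (Icc a b) := by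
      refine LipschitzOnWith.of_dist_le_mul fun s hs t ht => ?_
      rw [Real.dist_eq, Real.dist_eq, NNReal.coe_mk]
      rcases le_total s t with hst | hst
      · rw [abs_sub_comm, abs_sub_comm s t, abs_of_nonneg (sub_nonneg.2 hst)]
        exact hρ.abs_regEnergy_sub_le hε (ha.trans hs.1) hst
      · rw [abs_of_nonneg (sub_nonneg.2 hst)]
        exact hρ.abs_regEnergy_sub_le hε (ha.trans ht.1) hst
    exact this.continuousOn
  have hcQ : Continuous Q := intervalIntegral.continuous_primitive hΘi a
  have key := constant_of_has_deriv_right_zero (f := fun t => e t - 2 * Q t) (a := a) (b := b)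
    (hce.sub (hcQ.const_mul 2).continuousOn) (fun t ht => ?_) b ⟨hab, le_rfl⟩
  · simp only [hQ, intervalIntegral.integral_same] at key
    linarith
  · have ht0 : 0 ≤ t := ha.trans ht.1
    rw [hasDerivWithinAt_iff_isLittleO, Asymptotics.isLittleO_iff]
    intro c hc
    have hκ : 0 < c / (4 * (ε ^ 2)⁻¹) := by positivity
    obtain ⟨δ, hδ, hball⟩ := Metric.eventually_nhds_iff.1
      ((hρ.tendsto_dist t).eventually_lt_const hκ)
    filter_upwards [Ico_mem_nhdsGE (show t < t + δ by linarith)] with t' ht'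
    have hest := hρ.abs_regEnergy_sub_sub_le hε ht0 ht'.1 (η := c / (4 * (ε ^ 2)⁻¹))
      (fun r hr => by
        refine (hball ?_).le
        rw [Real.dist_eq, abs_of_nonneg (by linarith [hr.1])]
        linarith [hr.2, ht'.2])
    rw [mul_div_cancel₀ _ (by positivity)] at hest
    rw [smul_zero, sub_zero, Real.norm_eq_abs, Real.norm_eq_abs,
      abs_of_nonneg (sub_nonneg.2 ht'.1)]
    convert hest using 2
    have := intervalIntegral.integral_add_adjacent_intervals (hΘi a t) (hΘi t t')
    simp only [hQ, he]
    rw [← this]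
    ring

end IsWeakSolution

theorem logKernel_eq_log {r : ℝ} : logKernel 0 r = Real.log |r| := by
  rw [logKernel, zero_pow two_ne_zero, add_zero, Real.log_pow, Real.log_abs]
  ring

theorem tendsto_logKernel {r : ℝ} (hr : r ≠ 0) :
    Tendsto (fun ε => logKernel ε r) (𝓝[>] 0) (𝓝 (Real.log |r|)) := by
  have h : ContinuousAt (fun ε => logKernel ε r) 0 := by
    unfold logKernel
    exact continuousAt_const.mul (ContinuousAt.log (by fun_prop) (by positivity))
  have := h.tendsto
  rw [logKernel_eq_log] at this
  exact this.mono_left nhdsWithin_le_nhds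

theorem abs_logKernel_le_abs_log {ε r : ℝ} (hε : 0 < ε) (hε1 : ε ≤ 1) (hr : r ≠ 0) :
    |logKernel ε r| ≤ |Real.log (|r|)| + |r| := by
  have hr' : 0 < |r| := abs_pos.2 hr
  have hlow : Real.log |r| ≤ logKernel ε r := by
    rw [← logKernel_eq_log]
    unfold logKernel
    gcongr
  have hup : logKernel ε r ≤ |r| := by
    have h1 : Real.log (r ^ 2 + ε ^ 2) ≤ Real.log ((1 + |r|) ^ 2) := by
      gcongr
      rw [← sq_abs r]
      nlinarith
    rw [Real.log_pow] at h1
    have h2 := Real.log_le_sub_one_of_pos (show 0 < 1 + |r| by linarith)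
    unfold logKernel
    push_cast at h1
    linarith
  rw [abs_le]
  constructor
  · have := neg_abs_le (Real.log |r|)
    linarith
  · have := abs_nonneg (Real.log |r|)
    linarith

theorem integrable_prod_mul_of_integrable {k : ℝ → ℝ} (hk : Integrable k) (f g : SchwartzMap ℝ ℝ) :
    Integrable fun p : ℝ × ℝ => g p.1 * (f p.2 * k (p.1 - p.2)) := by
  obtain ⟨C, -, hC⟩ := exists_abs_le g
  have hf : Integrable f := f.integrable
  have h := hf.convolution_integrand (ContinuousLinearMap.mul ℝ ℝ) hk
  simp only [ContinuousLinearMap.mul_apply'] at h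
  exact h.bdd_mul (c := C) (g.continuous.comp continuous_fst).aestronglyMeasurable
    (Eventually.of_forall fun p => hC _)

theorem abs_log_abs_le (r : ℝ) :
    |Real.log (|r|)| ≤ (Ioc (-1 : ℝ) 1).indicator (fun r => |Real.log r|) r + |r| := by
  rw [Real.log_abs]
  by_cases hr : r ∈ Ioc (-1 : ℝ) 1
  · rw [indicator_of_mem hr]
    linarith [abs_nonneg r]
  · rw [indicator_of_notMem hr, zero_add]
    have h1 : 1 ≤ |r| := by
      rw [mem_Ioc, not_and_or, not_lt, not_le] at hr
      rw [le_abs]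
      rcases hr with h | h
      · right; linarith
      · left; linarith
    rw [← Real.log_abs, abs_of_nonneg (Real.log_nonneg h1)]
    linarith [Real.log_le_sub_one_of_pos (show 0 < |r| by linarith)]

theorem integrable_prod_mul_log (f g : SchwartzMap ℝ ℝ) :
    Integrable fun p : ℝ × ℝ => g p.1 * (f p.2 * Real.log |p.1 - p.2|) := by
  have hk : Integrable ((Ioc (-1 : ℝ) 1).indicator fun r => |Real.log r|) := by
    exact (integrable_indicator_iff measurableSet_Ioc).2
      (intervalIntegral.intervalIntegrable_log' (a := -1) (b := 1)).1.abs
  have h1 := (integrable_prod_mul_of_integrable hk f g).abs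
  have h2 := (integrable_prod_mul_of_le (k := fun r => |r|) (A := 0) (B := 1) (by fun_prop)
    zero_le_one (fun r => by simp) f g).abs
  refine (h1.add h2).mono' ?_ (Eventually.of_forall fun p => ?_)
  · have := g.continuous.measurable
    have := f.continuous.measurable
    exact Measurable.aestronglyMeasurable (by fun_prop)
  · have h := abs_log_abs_le (p.1 - p.2)
    have h0 : 0 ≤ (Ioc (-1 : ℝ) 1).indicator (fun r => |Real.log r|) (p.1 - p.2) :=
      indicator_nonneg (fun _ _ => abs_nonneg _) _
    simp only [Pi.add_apply, Real.norm_eq_abs, abs_mul, abs_abs]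
    rw [abs_of_nonneg h0, ← mul_add, ← mul_add]
    gcongr

/-- The regularized energies converge to the logarithmic energy. -/
theorem tendsto_regEnergy (f : SchwartzMap ℝ ℝ) :
    Tendsto (fun ε => ∫ x, logPotential ε f x * f x) (𝓝[>] 0)
      (𝓝 (∫ p : ℝ × ℝ, f p.1 * (f p.2 * Real.log |p.1 - p.2|))) := by
  have h1 := (integrable_prod_mul_log f f).abs
  have h2 := (integrable_prod_mul_of_le (k := fun r => |r|) (A := 0) (B := 1) (by fun_prop)
    zero_le_one (fun r => by simp) f f).abs
  have hev : ∀ᶠ ε : ℝ in 𝓝[>] 0, 0 < ε ∧ ε ≤ 1 := by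
    filter_upwards [Ioc_mem_nhdsGT (show (0 : ℝ) < 1 by norm_num)] with ε hε using hε
  have key : Tendsto (fun ε => ∫ p : ℝ × ℝ, f p.1 * (f p.2 * logKernel ε (p.1 - p.2))) (𝓝[>] 0)
      (𝓝 (∫ p : ℝ × ℝ, f p.1 * (f p.2 * Real.log |p.1 - p.2|))) := by
    refine tendsto_integral_filter_of_dominated_convergence _ ?_ ?_ (h1.add h2) ?_
    · filter_upwards [hev] with ε hε
      exact (integrable_prod_mul_of_le (continuous_logKernel hε.1).measurable
        (inv_nonneg.2 hε.1.le) (abs_logKernel_le hε.1) f f).aestronglyMeasurable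
    · filter_upwards [hev] with ε hε
      filter_upwards [ae_fst_ne_snd] with p hp
      simp only [Pi.add_apply, Real.norm_eq_abs, abs_mul, abs_abs]
      rw [← mul_add, ← mul_add]
      gcongr
      exact abs_logKernel_le_abs_log hε.1 hε.2 (sub_ne_zero.2 hp)
    · filter_upwards [ae_fst_ne_snd] with p hp
      exact ((tendsto_logKernel (sub_ne_zero.2 hp)).const_mul _).const_mul _
  refine key.congr' ?_
  filter_upwards [hev] with ε hε
  exact (integral_logPotential_mul hε.1 f f).symm

theorem freeEntropy_withDensity (f : SchwartzMap ℝ ℝ) (hf : ∀ x, 0 ≤ f x) :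
    freeEntropy (volume.withDensity fun x => ENNReal.ofReal (f x))
      = (((1 / 2) * ∫ p : ℝ × ℝ, f p.1 * (f p.2 * Real.log |p.1 - p.2|) : ℝ) : EReal) := by
  have hG := integrable_prod_mul_log f f
  have hn : Integrable fun p : ℝ × ℝ => -(f p.1 * (f p.2 * Real.log |p.1 - p.2|)) := hG.neg
  have hfm := f.continuous.measurable
  have hm : Measurable fun x => ENNReal.ofReal (f x) := hfm.ennreal_ofReal
  have hl : ∀ g : ℝ × ℝ → ℝ, Measurable g →
      ∫⁻ p, ENNReal.ofReal (g p) ∂((volume.withDensity fun x => ENNReal.ofReal (f x)).prod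
        (volume.withDensity fun x => ENNReal.ofReal (f x)))
      = ∫⁻ p : ℝ × ℝ, ENNReal.ofReal (f p.1 * (f p.2 * g p)) := by
    intro g hg
    rw [prod_withDensity hm hm, lintegral_withDensity_eq_lintegral_mul _ (by fun_prop)
      hg.ennreal_ofReal, Measure.volume_eq_prod]
    refine lintegral_congr fun p => ?_
    rw [Pi.mul_apply, ENNReal.ofReal_mul (hf _), ENNReal.ofReal_mul (hf _), mul_assoc]
  unfold freeEntropy
  rw [hl _ (by fun_prop), hl _ (by fun_prop),
    integral_eq_lintegral_pos_part_sub_lintegral_neg_part hG, EReal.coe_mul, EReal.coe_sub,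
    EReal.coe_ennreal_toReal hG.lintegral_lt_top.ne,
    EReal.coe_ennreal_toReal hn.lintegral_lt_top.ne]
  simp only [mul_neg]

namespace IsWeakSolution

variable {ρ : ℝ → SchwartzMap ℝ ℝ}

theorem tendsto_integral_interaction (hρ : IsWeakSolution ρ) {a b : ℝ} (ha : 0 ≤ a) (hab : a ≤ b) :
    Tendsto (fun ε => ∫ s in a..b, interaction (regHilbert ε (ρ s)) (ρ s)) (𝓝[>] 0)
      (𝓝 (∫ s in a..b, ∫ x, hilbert (ρ s) x ^ 2 * ρ s x)) := by
  obtain ⟨M, hM, h⟩ := hρ.exists_regHilbert_le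
  have hev : ∀ᶠ ε : ℝ in 𝓝[>] 0, 0 < ε := self_mem_nhdsWithin
  have hH : ∀ t, 0 ≤ t → ∀ x, |hilbert (ρ t) x| ≤ M := fun t ht x =>
    le_of_tendsto (tendsto_regHilbert (ρ t) x).abs (hev.mono fun ε hε => h t ht ε hε x)
  have hrep : ∀ ε, 0 < ε → ∀ t, interaction (regHilbert ε (ρ t)) (ρ t)
      = ∫ x, regHilbert ε (ρ t) x * (ρ t x * hilbert (ρ t) x) := fun ε hε t =>
    (integral_mul_hilbert (ρ t) (by positivity) (hρ.lipBound_regHilbert hε t)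
      (hρ.abs_regHilbert_le hε t)).symm
  have hle : ∀ ε, 0 < ε → ∀ t, 0 ≤ t → ∀ x,
      ‖regHilbert ε (ρ t) x * (ρ t x * hilbert (ρ t) x)‖ ≤ M * (|ρ t x| * M) := by
    intro ε hε t ht x
    rw [Real.norm_eq_abs, abs_mul, abs_mul]
    gcongr
    · exact h t ht ε hε x
    · exact hH t ht x
  have hbi : ∀ t, Integrable fun x => M * (|ρ t x| * M) := fun t =>
    (((ρ t).integrable (μ := volume)).abs.mul_const M).const_mul M
  refine intervalIntegral.tendsto_integral_filter_of_dominated_convergence (fun _ => M * M) ?_ ?_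
    intervalIntegrable_const ?_
  · filter_upwards [hev] with ε hε
    exact (hρ.continuous_interaction_regHilbert hε).aestronglyMeasurable
  · filter_upwards [hev] with ε hε
    refine Eventually.of_forall fun s hs => ?_
    rw [uIoc_of_le hab] at hs
    rw [hrep ε hε]
    refine (norm_integral_le_of_norm_le (hbi s)
      (Eventually.of_forall (hle ε hε s (ha.trans hs.1.le)))).trans_eq ?_
    rw [integral_const_mul, integral_mul_const, hρ.integral_abs, one_mul]
  · refine Eventually.of_forall fun s hs => ?_
    rw [uIoc_of_le hab] at hs
    have hs0 : 0 ≤ s := ha.trans hs.1.le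
    have key : Tendsto (fun ε => ∫ x, regHilbert ε (ρ s) x * (ρ s x * hilbert (ρ s) x)) (𝓝[>] 0)
        (𝓝 (∫ x, hilbert (ρ s) x * (ρ s x * hilbert (ρ s) x))) := by
      refine tendsto_integral_filter_of_dominated_convergence _ ?_ ?_ (hbi s) ?_
      · filter_upwards [hev] with ε hε
        exact ((hρ.lipBound_regHilbert hε s).continuous.mul
          ((ρ s).continuous.mul (continuous_hilbert (ρ s)))).aestronglyMeasurable
      · filter_upwards [hev] with ε hε
        exact Eventually.of_forall (hle ε hε s hs0)
      · exact Eventually.of_forall fun x => (tendsto_regHilbert (ρ s) x).mul_const _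
    have e : ∫ x, hilbert (ρ s) x ^ 2 * ρ s x
        = ∫ x, hilbert (ρ s) x * (ρ s x * hilbert (ρ s) x) :=
      integral_congr_ae (Eventually.of_forall fun x => by ring)
    rw [e]
    refine key.congr' ?_
    filter_upwards [hev] with ε hε
    exact (hrep ε hε s).symm

theorem energy_identity (hρ : IsWeakSolution ρ) {a b : ℝ} (ha : 0 ≤ a) (hab : a ≤ b) :
    (∫ p : ℝ × ℝ, ρ b p.1 * (ρ b p.2 * Real.log |p.1 - p.2|))
      - (∫ p : ℝ × ℝ, ρ a p.1 * (ρ a p.2 * Real.log |p.1 - p.2|))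
      = 2 * ∫ s in a..b, ∫ x, hilbert (ρ s) x ^ 2 * ρ s x := by
  have h1 := (tendsto_regEnergy (ρ b)).sub (tendsto_regEnergy (ρ a))
  refine tendsto_nhds_unique (h1.congr' ?_) ((hρ.tendsto_integral_interaction ha hab).const_mul 2)
  filter_upwards [self_mem_nhdsWithin] with ε hε
  exact hρ.regEnergy_identity hε ha hab

end IsWeakSolution

end DysonFlow

/-- **Evolution of the free entropy along the Dyson flow.**
If `m` is a smooth solution of `∂ₜm + ∂ₓ(m H[m]) = 0`, with `m(t,·)` a Schwartz probability
density for each `t ≥ 0`, then `E(m_t) = E(m_{t'}) + ∫_{t'}^t ∫ H[m_s]² m_s dx ds` for all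
`0 ≤ t' ≤ t`; in particular `s ↦ E(m_s)` is non-decreasing. -/
theorem freeEntropy_dyson_identity (m : ℝ → ℝ → ℝ)
    (hsmooth : ContDiffOn ℝ (⊤ : ℕ∞) (Function.uncurry m) (Ici 0 ×ˢ univ))
    (hschwartz : ∀ t, 0 ≤ t → ∃ f : SchwartzMap ℝ ℝ, ∀ x, f x = m t x)
    (hnonneg : ∀ t x, 0 ≤ t → 0 ≤ m t x)
    (hprob : ∀ t, 0 ≤ t → ∫ x, m t x = 1)
    (hpde : ∀ t x, 0 < t →
      deriv (fun s => m s x) t + deriv (fun y => m t y * hilbert (m t) y) x = 0) :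
    (∀ t' t : ℝ, 0 ≤ t' → t' ≤ t →
      freeEntropy (densMeasure m t)
        = freeEntropy (densMeasure m t')
          + ((∫ s in t'..t, ∫ x, (hilbert (m s) x) ^ 2 * m s x : ℝ) : EReal)) ∧
    (∀ t' t : ℝ, 0 ≤ t' → t' ≤ t →
      freeEntropy (densMeasure m t') ≤ freeEntropy (densMeasure m t)) := by
  obtain ⟨ρ, hρ, hm⟩ := DysonFlow.exists_isWeakSolution hsmooth hschwartz hnonneg hprob hpde
  have hE : ∀ t, 0 ≤ t → freeEntropy (densMeasure m t)
      = (((1 / 2) * ∫ p : ℝ × ℝ, ρ t p.1 * (ρ t p.2 * Real.log |p.1 - p.2|) : ℝ) : EReal) := by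
    intro t ht
    unfold densMeasure
    rw [hm t ht]
    exact DysonFlow.freeEntropy_withDensity (ρ t) (hρ.nonneg t)
  have main : ∀ t' t : ℝ, 0 ≤ t' → t' ≤ t →
      freeEntropy (densMeasure m t)
        = freeEntropy (densMeasure m t')
          + ((∫ s in t'..t, ∫ x, (hilbert (m s) x) ^ 2 * m s x : ℝ) : EReal) := by
    intro t' t ht' htt'
    rw [hE t (ht'.trans htt'), hE t' ht', ← EReal.coe_add, EReal.coe_eq_coe_iff]
    have e : ∫ s in t'..t, ∫ x, (hilbert (m s) x) ^ 2 * m s x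
        = ∫ s in t'..t, ∫ x, (hilbert (ρ s) x) ^ 2 * ρ s x := by
      refine intervalIntegral.integral_congr fun s hs => ?_
      rw [uIcc_of_le htt'] at hs
      rw [hm s (ht'.trans hs.1)]
    have := hρ.energy_identity ht' htt'
    rw [e]
    linarith
  refine ⟨main, fun t' t ht' htt' => ?_⟩
  rw [main t' t ht' htt']
  refine le_add_of_nonneg_right (EReal.coe_nonneg.2 ?_)
  refine intervalIntegral.integral_nonneg htt' fun s hs => integral_nonneg fun x => ?_
  exact mul_nonneg (sq_nonneg _) (hnonneg s x (ht'.trans hs.1))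
end

section
/- Let T > 0 and let m, n : [0,T] × ℝ → [0,∞) be smooth in (t,x), with m(t,·) and n(t,·) probability densities with finite second moments for every t, solving classically ∂ₜm + ∂ₓ(m H[m]) = 0 and ∂ₜn + ∂ₓ(n H[n]) = 0 on (0,T] × ℝ, and such that the velocity fields (t,x) ↦ H[m(t,·)](x) and (t,x) ↦ H[n(t,·)](x) are bounded, continuous, and Lipschitz in x uniformly in t. Let µ_t and ν_t be the probability measures with densities m(t,·) and n(t,·). Then the map t ↦ W₂(µ_t, ν_t) is non-increasing on [0,T]. -/
open MeasureTheory Filter Set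
open scoped Topology ENNReal

/-- The `2`-Wasserstein distance between two probability measures on `ℝ`: the infimum of
`(∫ |x−y|² dγ)^{1/2}` over all couplings `γ`. -/
noncomputable def W2 (mu nu : Measure ℝ) : ℝ :=
  sInf {c : ℝ | ∃ γ : Measure (ℝ × ℝ), IsProbabilityMeasure γ ∧
    γ.map Prod.fst = mu ∧ γ.map Prod.snd = nu ∧
    c = Real.sqrt (∫ p : ℝ × ℝ, |p.1 - p.2| ^ 2 ∂γ)}

/-- A smooth probability-density solution of the Dyson equation on `[0,T]` whose velocity
field `H[m(t,·)]` is bounded, continuous and Lipschitz in `x` uniformly in `t`. -/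
def IsNiceDysonSolution (T : ℝ) (m : ℝ → ℝ → ℝ) : Prop :=
  ContDiffOn ℝ (⊤ : ℕ∞) (Function.uncurry m) (Icc 0 T ×ˢ univ) ∧
  (∀ t x, 0 ≤ t → t ≤ T → 0 ≤ m t x) ∧
  (∀ t, 0 ≤ t → t ≤ T → Integrable (m t)) ∧
  (∀ t, 0 ≤ t → t ≤ T → ∫ x, m t x = 1) ∧
  (∀ t, 0 ≤ t → t ≤ T → Integrable (fun x => x ^ 2 * m t x)) ∧
  (∀ t x, 0 ≤ t → t ≤ T →
    ∃ l : ℝ, Tendsto (fun δ => truncHilbert (m t) δ x) (𝓝[>] (0 : ℝ)) (𝓝 l)) ∧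
  (∀ t x, 0 < t → t ≤ T →
    deriv (fun s => m s x) t + deriv (fun y => m t y * hilbert (m t) y) x = 0) ∧
  (∃ M : ℝ, ∀ t x, 0 ≤ t → t ≤ T → |hilbert (m t) x| ≤ M) ∧
  ContinuousOn (fun p : ℝ × ℝ => hilbert (m p.1) p.2) (Icc 0 T ×ˢ univ) ∧
  (∃ K : NNReal, ∀ t, 0 ≤ t → t ≤ T → LipschitzWith K (hilbert (m t)))

lemma measurableSet_quadrant {S : Type*} [MeasurableSpace S] {f g : S → ℝ} (hf : Measurable f)
    (hg : Measurable g) (a b : ℝ) : MeasurableSet {p | f p ≤ a ∧ b < g p} :=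
  (measurableSet_le hf measurable_const).inter (measurableSet_lt measurable_const hg)

lemma lintegral_triangle (x y : ℝ) :
    ∫⁻ a : ℝ, ∫⁻ b : ℝ, {q : ℝ × ℝ | y ≤ q.1 ∧ q.1 ≤ q.2 ∧ q.2 < x}.indicator 1 (a, b)
      = ENNReal.ofReal ((max (x - y) 0) ^ 2 / 2) := by
  have inner (a : ℝ) : ∫⁻ b : ℝ,
      {q : ℝ × ℝ | y ≤ q.1 ∧ q.1 ≤ q.2 ∧ q.2 < x}.indicator 1 (a, b)
        = (Icc y x).indicator (fun a => ENNReal.ofReal (x - a)) a := by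
    by_cases ha : a ∈ Icc y x
    · have : (fun b : ℝ => ({q : ℝ × ℝ | y ≤ q.1 ∧ q.1 ≤ q.2 ∧ q.2 < x}.indicator 1 (a, b) : ℝ≥0∞))
          = (Ico a x).indicator 1 := by
        funext b
        simp only [indicator, mem_ofPred_eq, mem_Ico, Pi.one_apply, ha.1, true_and]
      rw [this, lintegral_indicator_one measurableSet_Ico, Real.volume_Ico, indicator_of_mem ha]
    · rw [indicator_of_notMem ha]
      convert lintegral_zero with b
      rw [indicator_of_notMem]
      rintro ⟨h1, h2, h3⟩
      exact ha ⟨h1, h2.trans h3.le⟩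
  simp_rw [inner]
  rw [lintegral_indicator measurableSet_Icc]
  rcases le_total y x with h | h
  · rw [max_eq_left (by linarith), ← ofReal_integral_eq_lintegral_ofReal,
      integral_Icc_eq_integral_Ioc, ← intervalIntegral.integral_of_le h]
    · congr 1
      have : ∫ a in y..x, (x - a) = ∫ a in (x - x)..(x - y), a :=
        intervalIntegral.integral_comp_sub_left (fun a => a) x
      rw [this, integral_id]
      ring
    · exact (by fun_prop : Continuous fun a : ℝ => x - a).integrableOn_Icc
    · filter_upwards [ae_restrict_mem measurableSet_Icc] with a ha
      simpa using ha.2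
  · have : volume.restrict (Icc y x) = 0 := by
      rw [Measure.restrict_eq_zero, Real.volume_Icc]
      simpa using h
    rw [this, lintegral_zero_measure, max_eq_right (by linarith)]
    simp

lemma lintegral_pos_part_sq (γ : Measure (ℝ × ℝ)) [SFinite γ] :
    ∫⁻ p, ENNReal.ofReal ((max (p.1 - p.2) 0) ^ 2 / 2) ∂γ
      = ∫⁻ a : ℝ, ∫⁻ b : ℝ, (if a ≤ b then γ {p | p.2 ≤ a ∧ b < p.1} else 0) := by
  have hS : MeasurableSet {r : (ℝ × ℝ) × (ℝ × ℝ) |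
      r.1.2 ≤ r.2.1 ∧ r.2.1 ≤ r.2.2 ∧ r.2.2 < r.1.1} := by
    measurability
  have hm : Measurable fun r : (ℝ × ℝ) × (ℝ × ℝ) =>
      ({q : ℝ × ℝ | r.1.2 ≤ q.1 ∧ q.1 ≤ q.2 ∧ q.2 < r.1.1}.indicator 1 r.2 : ℝ≥0∞) :=
    (measurable_one.indicator hS)
  calc _ = ∫⁻ p : ℝ × ℝ, (∫⁻ q : ℝ × ℝ,
        {q : ℝ × ℝ | p.2 ≤ q.1 ∧ q.1 ≤ q.2 ∧ q.2 < p.1}.indicator 1 q) ∂γ := by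
        refine lintegral_congr fun p => ?_
        rw [← lintegral_triangle, Measure.volume_eq_prod, lintegral_prod]
        exact (hm.comp (measurable_const.prodMk measurable_id)).aemeasurable
    _ = ∫⁻ q : ℝ × ℝ, ∫⁻ p : ℝ × ℝ,
        {q : ℝ × ℝ | p.2 ≤ q.1 ∧ q.1 ≤ q.2 ∧ q.2 < p.1}.indicator 1 q ∂γ :=
        lintegral_lintegral_swap hm.aemeasurable
    _ = _ := by
        rw [Measure.volume_eq_prod, lintegral_prod _ hm.lintegral_prod_left'.aemeasurable]
        refine lintegral_congr fun a => lintegral_congr fun b => ?_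
        split_ifs with h
        · rw [← lintegral_indicator_one (measurableSet_quadrant (by fun_prop) (by fun_prop) a b)]
          refine lintegral_congr fun p => ?_
          simp [indicator, h]
        · simp [indicator, h]

lemma lintegral_sq_le_of_quadrant_le {γ γ' : Measure (ℝ × ℝ)} [SFinite γ] [SFinite γ']
    (h₁ : ∀ a b, γ {p | p.2 ≤ a ∧ b < p.1} ≤ γ' {p | p.2 ≤ a ∧ b < p.1})
    (h₂ : ∀ a b, γ {p | p.1 ≤ a ∧ b < p.2} ≤ γ' {p | p.1 ≤ a ∧ b < p.2}) :
    ∫⁻ p, ENNReal.ofReal ((p.1 - p.2) ^ 2) ∂γ ≤ ∫⁻ p, ENNReal.ofReal ((p.1 - p.2) ^ 2) ∂γ' := by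
  have key (η : Measure (ℝ × ℝ)) [SFinite η] : ∫⁻ p, ENNReal.ofReal ((p.1 - p.2) ^ 2) ∂η
      = 2 * (∫⁻ p, ENNReal.ofReal ((max (p.1 - p.2) 0) ^ 2 / 2) ∂η
        + ∫⁻ p, ENNReal.ofReal ((max (p.1 - p.2) 0) ^ 2 / 2) ∂(η.map Prod.swap)) := by
    rw [lintegral_map (by fun_prop) measurable_swap, ← lintegral_add_left (by fun_prop),
      ← lintegral_const_mul _ (by fun_prop)]
    refine lintegral_congr fun p => ?_
    rw [← ENNReal.ofReal_add (by positivity) (by positivity),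
      show (2 : ℝ≥0∞) = ENNReal.ofReal 2 by simp, ← ENNReal.ofReal_mul (by norm_num)]
    congr 1
    rcases le_total p.1 p.2 with h | h
    · rw [max_eq_right (by linarith), max_eq_left (by simpa using h)]
      simp only [Prod.fst_swap, Prod.snd_swap]; ring
    · rw [max_eq_left (by linarith), max_eq_right (by simpa using h)]
      ring
  rw [key γ, key γ']
  simp_rw [lintegral_pos_part_sq]
  gcongr with a b a b
  · split_ifs
    exacts [h₁ a b, le_rfl]
  · split_ifs
    · rw [Measure.map_apply measurable_swap, Measure.map_apply measurable_swap]
      · exact h₂ a b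
      all_goals exact measurableSet_quadrant (by fun_prop) (by fun_prop) a b
    · exact le_rfl

lemma measure_quadrant_le_of_monotone {Ω : Type*} [MeasurableSpace Ω] [LinearOrder Ω]
    {P : Measure Ω} [IsProbabilityMeasure P] {X Y : Ω → ℝ} (hX : Monotone X) (hY : Monotone Y)
    (hXm : Measurable X) (hYm : Measurable Y) {S : Type*} [MeasurableSpace S] {γ : Measure S}
    {f g : S → ℝ} (hf : Measurable f) (hg : Measurable g)
    (h₁ : γ.map f = P.map X) (h₂ : γ.map g = P.map Y) (a b : ℝ) :
    P {u | Y u ≤ a ∧ b < X u} ≤ γ {p | g p ≤ a ∧ b < f p} := by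
  have e₁ : γ {p | f p ≤ b} = P {u | X u ≤ b} := by
    have := congrArg (fun ρ : Measure ℝ => ρ (Iic b)) h₁
    simpa [Measure.map_apply hf measurableSet_Iic, Measure.map_apply hXm measurableSet_Iic]
      using! this
  have e₂ : γ {p | g p ≤ a} = P {u | Y u ≤ a} := by
    have := congrArg (fun ρ : Measure ℝ => ρ (Iic a)) h₂
    simpa [Measure.map_apply hg measurableSet_Iic, Measure.map_apply hYm measurableSet_Iic]
      using! this
  have dX : {u | Y u ≤ a ∧ b < X u} = {u | Y u ≤ a} \ {u | X u ≤ b} := by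
    ext u; simp
  have dγ : {p | g p ≤ a ∧ b < f p} = {p | g p ≤ a} \ {p | f p ≤ b} := by
    ext u; simp
  have lX : IsLowerSet {u | X u ≤ b} := fun u v huv hu => (hX huv).trans hu
  have lY : IsLowerSet {u | Y u ≤ a} := fun u v huv hu => (hY huv).trans hu
  rw [dX, dγ]
  rcases lX.total lY with h | h
  · rw [measure_sdiff h (measurableSet_le hXm measurable_const).nullMeasurableSet
      (measure_ne_top _ _), ← e₁, ← e₂]
    exact le_measure_sdiff
  · rw [sdiff_eq_empty.2 h]
    simp

/-- A comonotone pair has the smallest quadratic cost among all pairs with the same marginals. -/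
lemma lintegral_sq_le_of_monotone {Ω : Type*} [MeasurableSpace Ω] [LinearOrder Ω]
    {P : Measure Ω} [IsProbabilityMeasure P] {X Y : Ω → ℝ} (hX : Monotone X) (hY : Monotone Y)
    (hXm : Measurable X) (hYm : Measurable Y) {γ : Measure (ℝ × ℝ)} [SFinite γ]
    (h₁ : γ.map Prod.fst = P.map X) (h₂ : γ.map Prod.snd = P.map Y) :
    ∫⁻ u, ENNReal.ofReal ((X u - Y u) ^ 2) ∂P ≤ ∫⁻ p, ENNReal.ofReal ((p.1 - p.2) ^ 2) ∂γ := by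
  have hXY : Measurable fun u => (X u, Y u) := hXm.prodMk hYm
  have := lintegral_sq_le_of_quadrant_le (γ := P.map fun u => (X u, Y u)) (γ' := γ)
    (fun a b => ?_) (fun a b => ?_)
  · rwa [lintegral_map (by fun_prop) hXY] at this
  · rw [Measure.map_apply hXY (measurableSet_quadrant (by fun_prop) (by fun_prop) a b)]
    exact measure_quadrant_le_of_monotone hX hY hXm hYm measurable_fst measurable_snd h₁ h₂ a b
  · rw [Measure.map_apply hXY (measurableSet_quadrant (by fun_prop) (by fun_prop) a b)]
    exact measure_quadrant_le_of_monotone hY hX hYm hXm measurable_snd measurable_fst h₂ h₁ a b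

/-- The kernel `1/z` cut off at distance `δ` from the origin. -/
noncomputable def truncKernel (δ z : ℝ) : ℝ := if δ ≤ |z| then z⁻¹ else 0

/-- A `1/R`-Lipschitz cutoff supported in `[-R, R]`. -/
noncomputable def tent (R x : ℝ) : ℝ := max 0 (1 - |x| / R)

lemma truncKernel_neg (δ z : ℝ) : truncKernel δ (-z) = -truncKernel δ z := by
  unfold truncKernel
  split_ifs <;> simp_all

lemma abs_truncKernel_le {δ : ℝ} (hδ : 0 < δ) (z : ℝ) : |truncKernel δ z| ≤ δ⁻¹ := by
  unfold truncKernel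
  split_ifs with h
  · rw [abs_inv]
    gcongr
  · simpa using hδ.le

lemma measurable_truncKernel (δ : ℝ) : Measurable (truncKernel δ) :=
  Measurable.ite (measurableSet_le measurable_const (by fun_prop)) measurable_inv measurable_const

lemma tent_nonneg (R x : ℝ) : 0 ≤ tent R x := le_max_left _ _

lemma tent_le_one {R : ℝ} (hR : 0 < R) (x : ℝ) : tent R x ≤ 1 := by
  unfold tent
  have : 0 ≤ |x| / R := by positivity
  exact max_le zero_le_one (by linarith)

lemma continuous_tent (R : ℝ) : Continuous (tent R) := by
  unfold tent
  fun_prop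

lemma tent_eq_zero {R x : ℝ} (hR : 0 < R) (hx : R ≤ |x|) : tent R x = 0 := by
  refine max_eq_left ?_
  have : 1 ≤ |x| / R := (one_le_div hR).2 hx
  linarith

lemma abs_tent_sub_le {R : ℝ} (hR : 0 < R) (x y : ℝ) :
    |tent R x - tent R y| ≤ |x - y| / R := by
  unfold tent
  refine (abs_max_sub_max_le_max _ _ _ _).trans ?_
  have h : 1 - |x| / R - (1 - |y| / R) = (|y| - |x|) / R := by ring
  rw [sub_self, abs_zero, max_eq_right (abs_nonneg _), h, abs_div, abs_of_pos hR]
  refine div_le_div_of_nonneg_right ?_ hR.le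
  rw [abs_sub_comm x y]
  exact abs_abs_sub_abs_le y x

lemma tendsto_tent (x : ℝ) : Tendsto (fun R => tent R x) atTop (𝓝 1) := by
  have : Tendsto (fun R => max 0 (1 - |x| / R)) atTop (𝓝 (max 0 (1 - 0))) :=
    tendsto_const_nhds.max (tendsto_const_nhds.sub (tendsto_const_nhds.div_atTop tendsto_id))
  simpa using! this

lemma diff_mul_truncKernel_le {δ R : ℝ} (hδ : 0 < δ) (hR : 0 < R) {a b : ℝ} (hab : 0 ≤ a * b)
    (x y : ℝ) :
    tent R x * (a - b) * truncKernel δ a - tent R y * (a - b) * truncKernel δ b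
      ≤ |tent R x - tent R y| + (if |a| < δ then 1 else 0) + (if |b| < δ then 1 else 0) := by
  have hx₀ := tent_nonneg R x
  have hy₀ := tent_nonneg R y
  have hx₁ := tent_le_one hR x
  have hy₁ := tent_le_one hR y
  generalize tent R x = p at *
  generalize tent R y = q at *
  have hpq := abs_nonneg (p - q)
  have one_sub {c d : ℝ} (hc : δ ≤ |c|) : (c - d) * c⁻¹ = 1 - d / c := by
    have : c ≠ 0 := abs_pos.1 (hδ.trans_le hc)
    field_simp
  have div_nn {c d : ℝ} (h : 0 ≤ c * d) : 0 ≤ d / c := by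
    rw [div_nonneg_iff]
    rcases mul_nonneg_iff.1 h with h | h
    · exact .inl h.symm
    · exact .inr h.symm
  unfold truncKernel
  by_cases ha : δ ≤ |a| <;> by_cases hb : δ ≤ |b|
  · rw [if_pos ha, if_pos hb, if_neg (not_lt.2 ha), if_neg (not_lt.2 hb), mul_assoc, mul_assoc,
      one_sub ha, show (a - b) * b⁻¹ = -((b - a) * b⁻¹) by ring, one_sub hb]
    have ha₀ : a ≠ 0 := abs_pos.1 (hδ.trans_le ha)
    have hb₀ : b ≠ 0 := abs_pos.1 (hδ.trans_le hb)
    have hr : 0 < b / a := lt_of_le_of_ne (div_nn hab) (div_ne_zero hb₀ ha₀).symm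
    have hrs : (b / a) * (a / b) = 1 := by field_simp
    generalize b / a = r at *
    generalize a / b = s at *
    have hs : 0 < s := by
      by_contra hs
      nlinarith
    have h1 := le_abs_self (p - q)
    have h2 := neg_abs_le (p - q)
    rcases le_total r 1 with h | h
    · have : 1 ≤ s := by nlinarith
      have h3 : 1 - r ≤ s - 1 := by nlinarith [sq_nonneg (r - 1), sq_nonneg (s - 1)]
      nlinarith
    · have : s ≤ 1 := by nlinarith
      have h3 : 1 - s ≤ r - 1 := by nlinarith [sq_nonneg (r - 1), sq_nonneg (s - 1)]
      nlinarith
  · rw [if_pos ha, if_neg hb, if_neg (not_lt.2 ha), if_pos (not_le.1 hb), mul_assoc, one_sub ha]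
    have := div_nn hab
    nlinarith
  · rw [if_neg ha, if_pos hb, if_pos (not_le.1 ha), if_neg (not_lt.2 hb), mul_assoc q,
      show (a - b) * b⁻¹ = -((b - a) * b⁻¹) by ring, one_sub hb]
    have := div_nn (by rwa [mul_comm] : 0 ≤ b * a)
    nlinarith
  · rw [if_neg ha, if_neg hb, if_pos (not_le.1 ha), if_pos (not_le.1 hb)]
    linarith

lemma tent_sub_mul_truncKernel_le {δ R : ℝ} (hR : 0 < R) (x x' : ℝ) :
    |(tent R x - tent R x') * truncKernel δ (x - x')| ≤ R⁻¹ := by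
  unfold truncKernel
  split_ifs with h
  · rcases eq_or_ne x x' with rfl | hne
    · simpa using hR.le
    have h0 : 0 < |x - x'| := abs_pos.2 (sub_ne_zero.2 hne)
    rw [abs_mul, abs_inv]
    calc _ ≤ |x - x'| / R * |x - x'|⁻¹ := by gcongr; exact abs_tent_sub_le hR x x'
      _ = R⁻¹ := by field_simp
  · simpa using hR.le

lemma symmetrized_truncKernel_le {δ R : ℝ} (hδ : 0 < δ) (hR : 0 < R) {x x' y y' : ℝ}
    (h : 0 ≤ (x - x') * (y - y')) :
    (tent R x * (x - y) * truncKernel δ (x - x') - tent R y * (x - y) * truncKernel δ (y - y'))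
      + (tent R x' * (x' - y') * truncKernel δ (x' - x)
        - tent R y' * (x' - y') * truncKernel δ (y' - y))
      ≤ |tent R x - tent R y| + (if |x - x'| < δ then 1 else 0)
        + (if |y - y'| < δ then 1 else 0) + 2 * R⁻¹ * |x' - y'| := by
  have h1 := diff_mul_truncKernel_le hδ hR h x y
  have h2 := tent_sub_mul_truncKernel_le (δ := δ) hR x x'
  have h3 := tent_sub_mul_truncKernel_le (δ := δ) hR y y'
  rw [← neg_sub x x', ← neg_sub y y', truncKernel_neg, truncKernel_neg]
  generalize truncKernel δ (x - x') = k at *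
  generalize truncKernel δ (y - y') = l at *
  have h4 : (x' - y') * ((tent R x - tent R x') * k) ≤ |x' - y'| * R⁻¹ := by
    refine (le_abs_self _).trans ?_
    rw [abs_mul]
    gcongr
  have h5 : -((x' - y') * ((tent R y - tent R y') * l)) ≤ |x' - y'| * R⁻¹ := by
    refine (neg_le_abs _).trans ?_
    rw [abs_mul]
    gcongr
  linear_combination h1 + h4 + h5

section Comonotone

variable {Ω : Type*} [MeasurableSpace Ω] {P : Measure Ω} [IsProbabilityMeasure P] {X Y : Ω → ℝ}

lemma measurable_truncKernel_sub (hX : Measurable X) (δ : ℝ) :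
    Measurable fun z : Ω × Ω => truncKernel δ (X z.1 - X z.2) :=
  (measurable_truncKernel δ).comp (by fun_prop)

lemma integrable_mul_truncKernel (hX : Measurable X) {W : Ω → ℝ} (hW : Integrable W P) {δ : ℝ}
    (hδ : 0 < δ) : Integrable (fun z : Ω × Ω => W z.1 * truncKernel δ (X z.1 - X z.2))
      (P.prod P) := by
  refine (hW.comp_fst P).mul_bdd (measurable_truncKernel_sub hX δ).aestronglyMeasurable
    (c := δ⁻¹) (ae_of_all _ fun z => abs_truncKernel_le hδ _)

lemma integrable_tent_mul {Ω : Type*} [MeasurableSpace Ω] {P : Measure Ω} {X W : Ω → ℝ}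
    (hX : Measurable X) (hW : Integrable W P) {R : ℝ} (hR : 0 < R) :
    Integrable (fun u => tent R (X u) * W u) P :=
  hW.bdd_mul ((continuous_tent R).measurable.comp hX).aestronglyMeasurable
    (c := 1) (ae_of_all _ fun u => by
      rw [Real.norm_of_nonneg (tent_nonneg _ _)]; exact tent_le_one hR _)

lemma ae_prod_ne (hX : Measurable X) (hX₀ : ∀ x, P {v | X v = x} = 0) :
    ∀ᵐ z ∂(P.prod P), X z.1 - X z.2 ≠ 0 := by
  have hs : MeasurableSet {z : Ω × Ω | X z.1 - X z.2 = 0} :=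
    measurableSet_eq_fun (by fun_prop) measurable_const
  have : (P.prod P) {z : Ω × Ω | X z.1 - X z.2 = 0} = 0 := by
    rw [Measure.measure_prod_null hs]
    refine ae_of_all _ fun u => ?_
    have h : Prod.mk u ⁻¹' {z : Ω × Ω | X z.1 - X z.2 = 0} = {v | X v = X u} := by
      ext v
      simp [sub_eq_zero, eq_comm]
    exact (congrArg P h).trans (hX₀ _)
  simpa [ae_iff] using this

/-- The error term in the symmetrization of the truncated interaction. -/
noncomputable def interactionError (X Y : Ω → ℝ) (δ R : ℝ) (z : Ω × Ω) : ℝ :=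
  |tent R (X z.1) - tent R (Y z.1)| + (if |X z.1 - X z.2| < δ then 1 else 0)
        + (if |Y z.1 - Y z.2| < δ then 1 else 0) + 2 * R⁻¹ * |X z.2 - Y z.2|

lemma measurable_interactionError (hX : Measurable X) (hY : Measurable Y) (δ R : ℝ) :
    Measurable (interactionError X Y δ R) := by
  have hc := (continuous_tent R).measurable
  have h1 : MeasurableSet {z : Ω × Ω | |X z.1 - X z.2| < δ} :=
    measurableSet_lt (by fun_prop) measurable_const
  have h2 : MeasurableSet {z : Ω × Ω | |Y z.1 - Y z.2| < δ} :=
    measurableSet_lt (by fun_prop) measurable_const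
  exact (((by fun_prop : Measurable fun z : Ω × Ω => |tent R (X z.1) - tent R (Y z.1)|).add
    (Measurable.ite h1 measurable_const measurable_const)).add
    (Measurable.ite h2 measurable_const measurable_const)).add (by fun_prop)

lemma abs_interactionError_le {Ω : Type*} {X Y : Ω → ℝ} {δ R : ℝ} (hR : 0 < R) (z : Ω × Ω) :
    |interactionError X Y δ R z| ≤ 3 + 2 * R⁻¹ * |X z.2 - Y z.2| := by
  unfold interactionError
  have h1 : |tent R (X z.1) - tent R (Y z.1)| ≤ 1 := by
    have := tent_nonneg R (X z.1)
    have := tent_nonneg R (Y z.1)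
    have := tent_le_one hR (X z.1)
    have := tent_le_one hR (Y z.1)
    rw [abs_le]
    constructor <;> linarith
  have h2 : 0 ≤ 2 * R⁻¹ * |X z.2 - Y z.2| := by positivity
  have h3 := abs_nonneg (tent R (X z.1) - tent R (Y z.1))
  rw [abs_of_nonneg (by positivity)]
  split_ifs <;> linarith

lemma integral_truncated_interaction_le [LinearOrder Ω] (hX : Monotone X) (hY : Monotone Y)
    (hXm : Measurable X) (hYm : Measurable Y) (hZ : Integrable (fun u => X u - Y u) P)
    {δ R : ℝ} (hδ : 0 < δ) (hR : 0 < R) :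
    2 * ∫ u, (tent R (X u) * (X u - Y u) * ∫ v, truncKernel δ (X u - X v) ∂P)
        - (tent R (Y u) * (X u - Y u) * ∫ v, truncKernel δ (Y u - Y v) ∂P) ∂P
      ≤ ∫ z, interactionError X Y δ R z ∂(P.prod P) := by
  have hF : Integrable (fun z : Ω × Ω =>
      tent R (X z.1) * (X z.1 - Y z.1) * truncKernel δ (X z.1 - X z.2)
        - tent R (Y z.1) * (X z.1 - Y z.1) * truncKernel δ (Y z.1 - Y z.2)) (P.prod P) :=
    (integrable_mul_truncKernel hXm (integrable_tent_mul hXm hZ hR) hδ).sub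
      (integrable_mul_truncKernel hYm (integrable_tent_mul hYm hZ hR) hδ)
  have hB : Integrable (interactionError X Y δ R) (P.prod P) := by
    refine Integrable.mono' (g := fun z => 3 + 2 * R⁻¹ * |X z.2 - Y z.2|) ?_
      (measurable_interactionError hXm hYm δ R).aestronglyMeasurable
      (ae_of_all _ fun z => abs_interactionError_le hR z)
    exact (integrable_const _).add ((hZ.abs.comp_snd P).const_mul _)
  have e1 : ∫ u, (tent R (X u) * (X u - Y u) * ∫ v, truncKernel δ (X u - X v) ∂P)
        - (tent R (Y u) * (X u - Y u) * ∫ v, truncKernel δ (Y u - Y v) ∂P) ∂P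
      = ∫ z : Ω × Ω, (tent R (X z.1) * (X z.1 - Y z.1) * truncKernel δ (X z.1 - X z.2)
        - tent R (Y z.1) * (X z.1 - Y z.1) * truncKernel δ (Y z.1 - Y z.2)) ∂(P.prod P) := by
    rw [integral_prod _ hF]
    refine integral_congr_ae (ae_of_all _ fun u => ?_)
    have hk {W : Ω → ℝ} (hW : Measurable W) :
        Integrable (fun v => truncKernel δ (W u - W v)) P :=
      Integrable.of_bound ((measurable_truncKernel δ).comp (by fun_prop)).aestronglyMeasurable
        δ⁻¹ (ae_of_all _ fun v => abs_truncKernel_le hδ _)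
    dsimp only
    rw [integral_sub ((hk hXm).const_mul _) ((hk hYm).const_mul _), integral_const_mul,
      integral_const_mul]
  rw [e1, two_mul]
  nth_rewrite 2 [← integral_prod_swap]
  refine (integral_add hF hF.swap).symm.trans_le ?_
  refine integral_mono (hF.add hF.swap) hB fun z => ?_
  refine symmetrized_truncKernel_le hδ hR ?_
  rcases le_total z.1 z.2 with h | h
  · exact mul_nonneg_of_nonpos_of_nonpos (sub_nonpos.2 (hX h)) (sub_nonpos.2 (hY h))
  · exact mul_nonneg (sub_nonneg.2 (hX h)) (sub_nonneg.2 (hY h))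

lemma tendsto_integral_interactionError (hXm : Measurable X) (hYm : Measurable Y)
    (hZ : Integrable (fun u => X u - Y u) P) (hX₀ : ∀ x, P {v | X v = x} = 0)
    (hY₀ : ∀ x, P {v | Y v = x} = 0) {R : ℝ} (hR : 0 < R) :
    Tendsto (fun δ => ∫ z, interactionError X Y δ R z ∂(P.prod P)) (𝓝[>] 0)
      (𝓝 (∫ z : Ω × Ω, (|tent R (X z.1) - tent R (Y z.1)| + 2 * R⁻¹ * |X z.2 - Y z.2|)
        ∂(P.prod P))) := by
  refine tendsto_integral_filter_of_dominated_convergence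
    (fun z => 3 + 2 * R⁻¹ * |X z.2 - Y z.2|)
    (.of_forall fun δ => (measurable_interactionError hXm hYm δ R).aestronglyMeasurable)
    (.of_forall fun δ => ae_of_all _ fun z => abs_interactionError_le hR z)
    ((integrable_const _).add ((hZ.abs.comp_snd P).const_mul _)) ?_
  filter_upwards [ae_prod_ne hXm hX₀, ae_prod_ne hYm hY₀] with z h1 h2
  refine tendsto_const_nhds.congr' ?_
  have ev {c : ℝ} (hc : c ≠ 0) : ∀ᶠ δ in 𝓝[>] (0 : ℝ), δ < |c| :=
    nhdsWithin_le_nhds (eventually_lt_nhds (abs_pos.2 hc))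
  filter_upwards [ev h1, ev h2] with δ h1 h2
  rw [interactionError, if_neg (not_lt.2 h1.le), if_neg (not_lt.2 h2.le)]
  ring

lemma integral_tent_interaction_le [LinearOrder Ω] (hX : Monotone X) (hY : Monotone Y)
    (hXm : Measurable X) (hYm : Measurable Y) (hZ : Integrable (fun u => X u - Y u) P)
    (hX₀ : ∀ x, P {v | X v = x} = 0) (hY₀ : ∀ x, P {v | Y v = x} = 0) {A B : ℝ → ℝ}
    (hA : ∀ x, Tendsto (fun δ => ∫ v, truncKernel δ (x - X v) ∂P) (𝓝[>] 0) (𝓝 (A x)))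
    (hB : ∀ x, Tendsto (fun δ => ∫ v, truncKernel δ (x - Y v) ∂P) (𝓝[>] 0) (𝓝 (B x)))
    (hA' : ∀ R, ∃ C, ∀ x, |x| ≤ R → ∀ δ, 0 < δ → δ < 1 → |∫ v, truncKernel δ (x - X v) ∂P| ≤ C)
    (hB' : ∀ R, ∃ C, ∀ x, |x| ≤ R → ∀ δ, 0 < δ → δ < 1 → |∫ v, truncKernel δ (x - Y v) ∂P| ≤ C)
    {R : ℝ} (hR : 0 < R) :
    2 * ∫ u, tent R (X u) * (X u - Y u) * A (X u) - tent R (Y u) * (X u - Y u) * B (Y u) ∂P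
      ≤ ∫ z : Ω × Ω, (|tent R (X z.1) - tent R (Y z.1)| + 2 * R⁻¹ * |X z.2 - Y z.2|)
        ∂(P.prod P) := by
  obtain ⟨C, hC⟩ := hA' R
  obtain ⟨D, hD⟩ := hB' R
  have small : ∀ᶠ δ in 𝓝[>] (0 : ℝ), 0 < δ ∧ δ < 1 :=
    (eventually_mem_nhdsWithin).and (nhdsWithin_le_nhds (eventually_lt_nhds one_pos))
  refine le_of_tendsto_of_tendsto (Tendsto.const_mul 2 ?_)
    (tendsto_integral_interactionError hXm hYm hZ hX₀ hY₀ hR)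
    (small.mono fun δ hδ => integral_truncated_interaction_le hX hY hXm hYm hZ hδ.1 hR)
  have meas {W : Ω → ℝ} (hW : Measurable W) (δ : ℝ) : AEStronglyMeasurable
      (fun u => tent R (W u) * (X u - Y u) * ∫ v, truncKernel δ (W u - W v) ∂P) P := by
    have hc := (continuous_tent R).measurable
    exact (by fun_prop : Measurable fun u => tent R (W u) * (X u - Y u)).aestronglyMeasurable.mul
      (measurable_truncKernel_sub hW δ).stronglyMeasurable.integral_prod_right'.aestronglyMeasurable
  have bd {W : Ω → ℝ} {E δ : ℝ} (hE : ∀ x, |x| ≤ R → |∫ v, truncKernel δ (x - W v) ∂P| ≤ E)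
      (u : Ω) : |tent R (W u) * (X u - Y u) * ∫ v, truncKernel δ (W u - W v) ∂P|
        ≤ |X u - Y u| * |E| := by
    rcases le_total |W u| R with h | h
    · rw [abs_mul, abs_mul, abs_of_nonneg (tent_nonneg _ _)]
      have h1 := tent_le_one hR (W u)
      have h2 := tent_nonneg R (W u)
      exact mul_le_mul (mul_le_of_le_one_left (abs_nonneg _) h1)
        ((hE _ h).trans (le_abs_self _)) (abs_nonneg _) (abs_nonneg _)
    · rw [tent_eq_zero hR h]
      simp only [zero_mul, abs_zero]
      positivity
  refine tendsto_integral_filter_of_dominated_convergence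
    (fun u => |X u - Y u| * |C| + |X u - Y u| * |D|)
    (.of_forall fun δ => (meas hXm δ).sub (meas hYm δ))
    (small.mono fun δ hδ => ae_of_all _ fun u => ?_)
    ((hZ.abs.mul_const _).add (hZ.abs.mul_const _)) (ae_of_all _ fun u => ?_)
  · exact (abs_sub _ _).trans (add_le_add (bd (fun x hx => hC x hx δ hδ.1 hδ.2) u)
      (bd (fun x hx => hD x hx δ hδ.1 hδ.2) u))
  · exact ((hA _).const_mul _).sub ((hB _).const_mul _)

/-- The principal value interaction decreases the distance of a comonotone pair. -/
lemma integral_interaction_nonpos [LinearOrder Ω] (hX : Monotone X) (hY : Monotone Y)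
    (hXm : Measurable X) (hYm : Measurable Y) (hZ : Integrable (fun u => X u - Y u) P)
    (hX₀ : ∀ x, P {v | X v = x} = 0) (hY₀ : ∀ x, P {v | Y v = x} = 0) {A B : ℝ → ℝ}
    (hAm : Measurable A) (hBm : Measurable B)
    {C D : ℝ} (hAC : ∀ x, |A x| ≤ C) (hBD : ∀ x, |B x| ≤ D)
    (hA : ∀ x, Tendsto (fun δ => ∫ v, truncKernel δ (x - X v) ∂P) (𝓝[>] 0) (𝓝 (A x)))
    (hB : ∀ x, Tendsto (fun δ => ∫ v, truncKernel δ (x - Y v) ∂P) (𝓝[>] 0) (𝓝 (B x)))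
    (hA' : ∀ R, ∃ C, ∀ x, |x| ≤ R → ∀ δ, 0 < δ → δ < 1 → |∫ v, truncKernel δ (x - X v) ∂P| ≤ C)
    (hB' : ∀ R, ∃ C, ∀ x, |x| ≤ R → ∀ δ, 0 < δ → δ < 1 → |∫ v, truncKernel δ (x - Y v) ∂P| ≤ C) :
    ∫ u, (X u - Y u) * (A (X u) - B (Y u)) ∂P ≤ 0 := by
  have lim1 : Tendsto (fun R => 2 * ∫ u, tent R (X u) * (X u - Y u) * A (X u)
      - tent R (Y u) * (X u - Y u) * B (Y u) ∂P) atTop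
      (𝓝 (2 * ∫ u, 1 * (X u - Y u) * A (X u) - 1 * (X u - Y u) * B (Y u) ∂P)) := by
    refine Tendsto.const_mul 2 (tendsto_integral_filter_of_dominated_convergence
      (fun u => |X u - Y u| * C + |X u - Y u| * D)
      (.of_forall fun R => ?_)
      ((eventually_gt_atTop 0).mono fun R hR => ae_of_all _ fun u => ?_)
      ((hZ.abs.mul_const _).add (hZ.abs.mul_const _)) (ae_of_all _ fun u => ?_))
    · have hc := (continuous_tent R).measurable
      exact Measurable.aestronglyMeasurable (by fun_prop)
    · have bd (w a : ℝ) : |tent R w * (X u - Y u) * a| ≤ |X u - Y u| * |a| := by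
        rw [abs_mul, abs_mul, abs_of_nonneg (tent_nonneg _ _)]
        gcongr
        exact mul_le_of_le_one_left (abs_nonneg _) (tent_le_one hR w)
      refine (abs_sub _ _).trans (add_le_add ((bd _ _).trans ?_) ((bd _ _).trans ?_))
      · gcongr; exact hAC _
      · gcongr; exact hBD _
    · exact (((tendsto_tent _).mul_const _).mul_const _).sub
        (((tendsto_tent _).mul_const _).mul_const _)
  have lim2 : Tendsto (fun R => ∫ z : Ω × Ω, (|tent R (X z.1) - tent R (Y z.1)|
      + 2 * R⁻¹ * |X z.2 - Y z.2|) ∂(P.prod P)) atTop (𝓝 (∫ z : Ω × Ω, (0 : ℝ) ∂(P.prod P))) := by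
    refine tendsto_integral_filter_of_dominated_convergence
      (fun z => 1 + 2 * |X z.2 - Y z.2|)
      (.of_forall fun R => ?_)
      ((eventually_ge_atTop 1).mono fun R hR => ae_of_all _ fun z => ?_)
      ((integrable_const _).add ((hZ.abs.comp_snd P).const_mul _)) (ae_of_all _ fun z => ?_)
    · have hc := (continuous_tent R).measurable
      exact Measurable.aestronglyMeasurable (by fun_prop)
    · have hR' : 0 < R := by linarith
      have h0 := tent_nonneg R (X z.1)
      have h1 := tent_nonneg R (Y z.1)
      have h2 := tent_le_one hR' (X z.1)
      have h3 := tent_le_one hR' (Y z.1)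
      rw [Real.norm_of_nonneg (by positivity)]
      gcongr
      · rw [abs_le]
        constructor <;> linarith
      · have := inv_le_one_of_one_le₀ hR
        linarith
    · have h1 : Tendsto (fun R => |tent R (X z.1) - tent R (Y z.1)|) atTop (𝓝 |1 - 1|) :=
        ((tendsto_tent _).sub (tendsto_tent _)).abs
      have h2 : Tendsto (fun R : ℝ => 2 * R⁻¹ * |X z.2 - Y z.2|) atTop
          (𝓝 (2 * 0 * |X z.2 - Y z.2|)) :=
        (tendsto_inv_atTop_zero.const_mul 2).mul_const _
      simpa using h1.add h2
  have := le_of_tendsto_of_tendsto lim1 lim2 ((eventually_gt_atTop 0).mono fun R hR =>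
    integral_tent_interaction_le hX hY hXm hYm hZ hX₀ hY₀ hA hB hA' hB' hR)
  rw [integral_zero] at this
  have e : ∀ u, 1 * (X u - Y u) * A (X u) - 1 * (X u - Y u) * B (Y u)
      = (X u - Y u) * (A (X u) - B (Y u)) := fun u => by ring
  simp_rw [e] at this
  linarith

end Comonotone

section Density

variable {u : ℝ → ℝ} {Ω : Type*} [MeasurableSpace Ω] {P : Measure Ω} {X : Ω → ℝ}

lemma integral_withDensity_ofReal (hu : Measurable u) (hu₀ : ∀ x, 0 ≤ u x) (f : ℝ → ℝ) :
    ∫ y, f y ∂(volume.withDensity fun x => ENNReal.ofReal (u x)) = ∫ y, u y * f y := by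
  rw [integral_withDensity_eq_integral_toReal_smul (by fun_prop) (by simp)]
  simp [hu₀]

lemma isProbabilityMeasure_withDensity (hu : Integrable u) (hu₀ : ∀ x, 0 ≤ u x)
    (hu₁ : ∫ x, u x = 1) :
    IsProbabilityMeasure (volume.withDensity fun x => ENNReal.ofReal (u x)) := by
  refine ⟨?_⟩
  rw [withDensity_apply _ MeasurableSet.univ, Measure.restrict_univ,
    ← ofReal_integral_eq_lintegral_ofReal hu (ae_of_all _ hu₀), hu₁, ENNReal.ofReal_one]

lemma truncHilbert_eq_integral (u : ℝ → ℝ) (δ x : ℝ) :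
    truncHilbert u δ x = ∫ y, u y * truncKernel δ (x - y) := by
  have hs : MeasurableSet {y : ℝ | δ ≤ |x - y|} :=
    measurableSet_le measurable_const (by fun_prop)
  rw [truncHilbert, ← integral_indicator hs]
  refine integral_congr_ae (ae_of_all _ fun y => ?_)
  by_cases h : δ ≤ |x - y|
  · simp [truncKernel, indicator, h, div_eq_mul_inv]
  · simp [truncKernel, indicator, h]

lemma integral_truncKernel_eq_truncHilbert (hu : Measurable u) (hu₀ : ∀ x, 0 ≤ u x)
    (hX : Measurable X) (hlaw : P.map X = volume.withDensity fun x => ENNReal.ofReal (u x))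
    (δ x : ℝ) : ∫ v, truncKernel δ (x - X v) ∂P = truncHilbert u δ x := by
  rw [truncHilbert_eq_integral, ← integral_withDensity_ofReal hu hu₀ fun y => truncKernel δ (x - y),
    ← hlaw, integral_map hX.aemeasurable]
  exact ((measurable_truncKernel δ).comp (by fun_prop)).aestronglyMeasurable

lemma measure_fiber_eq_zero (hX : Measurable X)
    (hlaw : P.map X = volume.withDensity fun x => ENNReal.ofReal (u x)) (x : ℝ) :
    P {v | X v = x} = 0 := by
  have h : P.map X {x} = 0 := by
    rw [hlaw]
    exact withDensity_absolutelyContinuous _ _ Real.volume_singleton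
  rwa [Measure.map_apply hX (measurableSet_singleton x)] at h

/-- Near the singularity, the odd kernel only sees the oscillation of a Lipschitz density. -/
lemma abs_truncHilbert_le (hui : Integrable u) (hu₀ : ∀ x, 0 ≤ u x)
    (hu₁ : ∫ x, u x = 1) {R L : ℝ}
    (hL : ∀ x y, |x| ≤ R + 1 → |y| ≤ R + 1 → |u x - u y| ≤ L * |x - y|) {x δ : ℝ} (hx : |x| ≤ R)
    (hδ : 0 < δ) (hδ₁ : δ < 1) : |truncHilbert u δ x| ≤ 1 + 2 * L := by
  have hk : Measurable fun y => truncKernel δ (x - y) :=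
    (measurable_truncKernel δ).comp (by fun_prop)
  have hs : MeasurableSet (Ioo (x - 1) (x + 1)) := measurableSet_Ioo
  have hi : Integrable fun y => u y * truncKernel δ (x - y) :=
    hui.mul_bdd hk.aestronglyMeasurable (c := δ⁻¹) (ae_of_all _ fun y => abs_truncKernel_le hδ _)
  have hi' : IntegrableOn (fun y => truncKernel δ (x - y)) (Ioo (x - 1) (x + 1)) :=
    Measure.integrableOn_of_bounded (by simp) hk.aestronglyMeasurable
      (M := δ⁻¹) (ae_of_all _ fun y => abs_truncKernel_le hδ _)
  have odd : ∫ y in Ioo (x - 1) (x + 1), truncKernel δ (x - y) = 0 := by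
    rw [← integral_Ioc_eq_integral_Ioo, ← intervalIntegral.integral_of_le (by linarith),
      intervalIntegral.integral_comp_sub_left fun z => truncKernel δ z]
    have h : ∫ z in (-1 : ℝ)..1, truncKernel δ z = -∫ z in (-1 : ℝ)..1, truncKernel δ z := by
      rw [← intervalIntegral.integral_neg]
      simp_rw [← truncKernel_neg]
      rw [intervalIntegral.integral_comp_neg, neg_neg]
    ring_nf at h ⊢
    linarith
  rw [truncHilbert_eq_integral, ← integral_add_compl hs hi]
  have near : |∫ y in Ioo (x - 1) (x + 1), u y * truncKernel δ (x - y)| ≤ 2 * L := by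
    have e : ∫ y in Ioo (x - 1) (x + 1), u y * truncKernel δ (x - y)
        = ∫ y in Ioo (x - 1) (x + 1), (u y - u x) * truncKernel δ (x - y) := by
      simp_rw [sub_mul]
      rw [integral_sub hi.integrableOn (hi'.const_mul _), integral_const_mul, odd, mul_zero,
        sub_zero]
    rw [e, ← Real.norm_eq_abs]
    have := norm_setIntegral_le_of_norm_le_const (μ := volume) (s := Ioo (x - 1) (x + 1))
      (f := fun y => (u y - u x) * truncKernel δ (x - y)) (C := L) (by simp) ?_
    · refine this.trans_eq ?_
      rw [Real.volume_real_Ioo_of_le (by linarith)]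
      ring
    · intro y hy
      have hxy : |y - x| ≤ 1 := by rw [abs_le]; constructor <;> linarith [hy.1, hy.2]
      have hy' : |y| ≤ R + 1 := by
        have := abs_sub_abs_le_abs_sub y x
        linarith
      have h1 := hL y x hy' (by linarith)
      unfold truncKernel
      have hL₀ : 0 ≤ L := by
        have h2 := hL (x + 1 / 2) x ?_ (by linarith)
        · have := (abs_nonneg _).trans h2
          rw [add_sub_cancel_left, abs_of_pos (by norm_num)] at this
          linarith
        · have := abs_add_le x (1 / 2)
          rw [abs_of_pos (by norm_num : (0 : ℝ) < 1 / 2)] at this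
          linarith
      split_ifs with h
      · rw [norm_mul, norm_inv, Real.norm_eq_abs, Real.norm_eq_abs, abs_sub_comm x y]
        rw [abs_sub_comm x y] at h
        rw [← div_eq_mul_inv, div_le_iff₀ (hδ.trans_le h)]
        exact h1
      · simpa using hL₀
  have far : |∫ y in (Ioo (x - 1) (x + 1))ᶜ, u y * truncKernel δ (x - y)| ≤ 1 := by
    rw [← Real.norm_eq_abs]
    refine le_of_le_of_eq ?_ hu₁
    refine (norm_integral_le_of_norm_le hui.integrableOn ?_).trans
      (setIntegral_le_integral hui (ae_of_all _ hu₀))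
    filter_upwards [ae_restrict_mem hs.compl] with y hy
    rw [norm_mul, Real.norm_of_nonneg (hu₀ y)]
    refine mul_le_of_le_one_right (hu₀ y) ?_
    unfold truncKernel
    have h1 : 1 ≤ |x - y| := by
      by_contra h
      rw [not_le, abs_lt] at h
      exact hy ⟨by linarith, by linarith⟩
    split_ifs
    · rw [norm_inv, Real.norm_eq_abs]
      exact inv_le_one_of_one_le₀ h1
    · simp
  exact (abs_add_le _ _).trans (by linarith)

end Density

section Flow

variable {T : ℝ} {v : ℝ → ℝ → ℝ}

/-- `α` solves the differential equation `x' = v t x` on `[0, T]`. -/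
def IsTrajectory (T : ℝ) (v : ℝ → ℝ → ℝ) (α : ℝ → ℝ) : Prop :=
  ∀ t ∈ Icc 0 T, HasDerivWithinAt α (v t (α t)) (Icc 0 T) t

lemma IsTrajectory.continuousOn {α : ℝ → ℝ} (h : IsTrajectory T v α) : ContinuousOn α (Icc 0 T) :=
  fun t ht => (h t ht).continuousWithinAt

lemma IsTrajectory.hasDerivAt {α : ℝ → ℝ} (h : IsTrajectory T v α) {t : ℝ} (ht : t ∈ Ioo 0 T) :
    HasDerivAt α (v t (α t)) t :=
  (h t (Ioo_subset_Icc_self ht)).hasDerivAt (Icc_mem_nhds ht.1 ht.2)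

lemma exists_isTrajectory {K : NNReal} (hK : ∀ t ∈ Icc 0 T, LipschitzWith K (v t))
    (hc : ContinuousOn (fun p : ℝ × ℝ => v p.1 p.2) (Icc 0 T ×ˢ univ)) {M : ℝ}
    (hM : ∀ t ∈ Icc 0 T, ∀ x, |v t x| ≤ M) {t₀ : ℝ} (ht₀ : t₀ ∈ Icc 0 T) (x : ℝ) :
    ∃ α, α t₀ = x ∧ IsTrajectory T v α := by
  have hT : 0 ≤ T := ht₀.1.trans ht₀.2
  have hM₀ : 0 ≤ M := (abs_nonneg _).trans (hM t₀ ht₀ 0)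
  have h : IsPicardLindelof v (⟨t₀, ht₀⟩ : Icc 0 T) x (⟨M, hM₀⟩ * ⟨T, hT⟩) 0 ⟨M, hM₀⟩ K :=
    { lipschitzOnWith := fun t ht => (hK t ht).lipschitzOnWith
      continuousOn := fun y _ => hc.comp (f := fun t => (t, y)) (by fun_prop) fun t ht => ⟨ht, mem_univ _⟩
      norm_le := fun t ht y _ => hM t ht y
      mul_max_le := by
        change M * max (T - t₀) (t₀ - 0) ≤ M * T - 0
        rw [sub_zero (M * T)]
        refine mul_le_mul_of_nonneg_left (max_le ?_ ?_) hM₀ <;> linarith [ht₀.1, ht₀.2] }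
  exact h.exists_eq_forall_mem_Icc_hasDerivWithinAt₀

lemma IsTrajectory.eqOn {K : NNReal} (hK : ∀ t ∈ Icc 0 T, LipschitzWith K (v t)) {α β : ℝ → ℝ}
    (hα : IsTrajectory T v α) (hβ : IsTrajectory T v β) {t₀ : ℝ} (ht₀ : t₀ ∈ Icc 0 T)
    (h : α t₀ = β t₀) : EqOn α β (Icc 0 T) := by
  have hr : Icc t₀ T ⊆ Icc 0 T := Icc_subset_Icc_left ht₀.1
  have hl : Icc 0 t₀ ⊆ Icc 0 T := Icc_subset_Icc_right ht₀.2
  have right {γ : ℝ → ℝ} (hγ : IsTrajectory T v γ) (t) (ht : t ∈ Ico t₀ T) :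
      HasDerivWithinAt γ (v t (γ t)) (Ici t) t :=
    (hγ t (hr (Ico_subset_Icc_self ht))).mono_of_mem_nhdsWithin
      (Icc_mem_nhdsGE_of_mem ⟨ht₀.1.trans ht.1, ht.2⟩)
  have left {γ : ℝ → ℝ} (hγ : IsTrajectory T v γ) (t) (ht : t ∈ Ioc 0 t₀) :
      HasDerivWithinAt γ (v t (γ t)) (Iic t) t :=
    (hγ t (hl (Ioc_subset_Icc_self ht))).mono_of_mem_nhdsWithin
      (Icc_mem_nhdsLE_of_mem ⟨ht.1, ht.2.trans ht₀.2⟩)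
  rw [← Icc_union_Icc_eq_Icc ht₀.1 ht₀.2]
  refine EqOn.union ?_ ?_
  · exact ODE_solution_unique_of_mem_Icc_left (s := fun _ => univ)
      (fun t ht => (hK t (hl (Ioc_subset_Icc_self ht))).lipschitzOnWith)
      (hα.continuousOn.mono hl) (left hα) (fun _ _ => mem_univ _)
      (hβ.continuousOn.mono hl) (left hβ) (fun _ _ => mem_univ _) h
  · exact ODE_solution_unique_of_mem_Icc_right (s := fun _ => univ)
      (fun t ht => (hK t (hr (Ico_subset_Icc_self ht))).lipschitzOnWith)
      (hα.continuousOn.mono hr) (right hα) (fun _ _ => mem_univ _)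
      (hβ.continuousOn.mono hr) (right hβ) (fun _ _ => mem_univ _) h

lemma IsTrajectory.lt {K : NNReal} (hK : ∀ t ∈ Icc 0 T, LipschitzWith K (v t)) {α β : ℝ → ℝ}
    (hα : IsTrajectory T v α) (hβ : IsTrajectory T v β) (h : α 0 < β 0) {t : ℝ}
    (ht : t ∈ Icc 0 T) : α t < β t := by
  by_contra! hle
  have h0 : (0 : ℝ) ∈ Icc 0 T := ⟨le_rfl, ht.1.trans ht.2⟩
  have hs : Icc 0 t ⊆ Icc 0 T := Icc_subset_Icc_right ht.2
  obtain ⟨s, hs', he⟩ := intermediate_value_Icc ht.1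
    ((hα.continuousOn.sub hβ.continuousOn).mono hs)
    (show (0 : ℝ) ∈ Icc (α 0 - β 0) (α t - β t) from ⟨by linarith, by linarith⟩)
  exact h.ne (hα.eqOn hK hβ (hs hs') (sub_eq_zero.1 he) h0)

lemma IsTrajectory.abs_sub_le {M : ℝ} (hM : ∀ t ∈ Icc 0 T, ∀ x, |v t x| ≤ M) {α : ℝ → ℝ}
    (hα : IsTrajectory T v α) {t : ℝ} (ht : t ∈ Icc 0 T) : |α t - α 0| ≤ M * T := by
  have hM₀ : 0 ≤ M := (abs_nonneg _).trans (hM t ht 0)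
  have h := (convex_Icc 0 T).norm_image_sub_le_of_norm_hasDerivWithin_le hα
    (fun s hs => hM s hs _) ⟨le_rfl, ht.1.trans ht.2⟩ ht
  refine h.trans (mul_le_mul_of_nonneg_left ?_ hM₀)
  rw [sub_zero, Real.norm_of_nonneg ht.1]
  exact ht.2

/-- The flow of a bounded, continuous and uniformly Lipschitz velocity field. -/
lemma exists_flow {K : NNReal} (hK : ∀ t ∈ Icc 0 T, LipschitzWith K (v t))
    (hc : ContinuousOn (fun p : ℝ × ℝ => v p.1 p.2) (Icc 0 T ×ˢ univ)) {M : ℝ}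
    (hM : ∀ t ∈ Icc 0 T, ∀ x, |v t x| ≤ M) (hT : 0 ≤ T) :
    ∃ Φ : ℝ → ℝ → ℝ, (∀ x, Φ x 0 = x) ∧ (∀ x, IsTrajectory T v (Φ x)) ∧
      (∀ t ∈ Icc 0 T, StrictMono (Φ · t)) ∧ (∀ t ∈ Icc 0 T, Function.Surjective (Φ · t)) := by
  have h0 : (0 : ℝ) ∈ Icc 0 T := ⟨le_rfl, hT⟩
  choose Φ h₀ hΦ using exists_isTrajectory hK hc hM h0
  refine ⟨Φ, h₀, hΦ, fun t ht x y hxy => ?_, fun t ht y => ?_⟩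
  · exact (hΦ x).lt hK (hΦ y) (by rwa [h₀, h₀]) ht
  · obtain ⟨α, rfl, hα⟩ := exists_isTrajectory hK hc hM ht y
    exact ⟨α 0, (hΦ _).eqOn hK hα h0 (h₀ _) ht⟩

end Flow

section Conservation

variable {T : ℝ} {m v : ℝ → ℝ → ℝ}

lemma contDiff_slice {k : ℕ∞} (hm : ContDiffOn ℝ k (Function.uncurry m) (Icc 0 T ×ˢ univ)) {t : ℝ}
    (ht : t ∈ Icc 0 T) : ContDiff ℝ k (m t) := by
  rw [← contDiffOn_univ]
  exact hm.comp (f := fun x => (t, x)) (by fun_prop) fun x _ => ⟨ht, mem_univ _⟩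

lemma hasDerivAt_time_slice (hm : ContDiffOn ℝ 1 (Function.uncurry m) (Icc 0 T ×ˢ univ))
    {t : ℝ} (ht : t ∈ Ioo 0 T) (x : ℝ) :
    HasDerivAt (fun s => m s x) (fderiv ℝ (Function.uncurry m) (t, x) (1, 0)) t := by
  have h : DifferentiableAt ℝ (Function.uncurry m) (t, x) :=
    (hm.contDiffAt (prod_mem_nhds (Icc_mem_nhds ht.1 ht.2) univ_mem)).differentiableAt one_ne_zero
  exact h.hasFDerivAt.comp_hasDerivAt (f := fun s => (s, x)) t
    ((hasDerivAt_id t).prodMk (hasDerivAt_const t x))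

lemma continuousOn_time_deriv (hm : ContDiffOn ℝ 1 (Function.uncurry m) (Icc 0 T ×ˢ univ)) :
    ContinuousOn (fun p : ℝ × ℝ => fderiv ℝ (Function.uncurry m) p (1, 0)) (Ioo 0 T ×ˢ univ) :=
  ((hm.mono (prod_mono Ioo_subset_Icc_self subset_rfl)).continuousOn_fderiv_of_isOpen
    (isOpen_Ioo.prod isOpen_univ) le_rfl).clm_apply continuousOn_const

lemma integral_deriv_flux (hm : ContDiffOn ℝ 1 (Function.uncurry m) (Icc 0 T ×ˢ univ))
    {K : NNReal} (hK : ∀ t ∈ Icc 0 T, LipschitzWith K (v t)) {t : ℝ} (ht : t ∈ Icc 0 T) (a b : ℝ) :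
    ∫ x in a..b, deriv (fun y => m t y * v t y) x = m t b * v t b - m t a * v t a := by
  have h1 : AbsolutelyContinuousOnInterval (m t) a b :=
    (contDiff_slice (k := 1) hm ht).contDiffOn.absolutelyContinuousOnInterval
  have h2 : AbsolutelyContinuousOnInterval (v t) a b :=
    (hK t ht).lipschitzOnWith.absolutelyContinuousOnInterval
  exact (h1.mul h2).integral_deriv_eq_sub

/-- The primitive of the density evolves by the flux through the endpoints. -/
lemma hasDerivAt_primitive_time (hm : ContDiffOn ℝ 1 (Function.uncurry m) (Icc 0 T ×ˢ univ))
    {K : NNReal} (hK : ∀ t ∈ Icc 0 T, LipschitzWith K (v t))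
    (heq : ∀ t ∈ Ioo 0 T, ∀ x,
      deriv (fun s => m s x) t + deriv (fun y => m t y * v t y) x = 0)
    {t : ℝ} (ht : t ∈ Ioo 0 T) (x : ℝ) :
    HasDerivAt (fun s => ∫ y in (0 : ℝ)..x, m s y) (m t 0 * v t 0 - m t x * v t x) t := by
  obtain ⟨c, hc, hcT⟩ := Metric.nhds_basis_closedBall.mem_iff.1 (isOpen_Ioo.mem_nhds ht)
  have hsub : Metric.closedBall t c ×ˢ uIcc 0 x ⊆ Ioo 0 T ×ˢ univ :=
    prod_mono hcT (subset_univ _)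
  obtain ⟨C, hC⟩ := ((isCompact_closedBall t c).prod isCompact_uIcc).exists_bound_of_continuousOn
    ((continuousOn_time_deriv hm).mono hsub)
  have hcont {s : ℝ} (hs : s ∈ Ioo 0 T) : Continuous (m s) :=
    (contDiff_slice (k := 1) hm (Ioo_subset_Icc_self hs)).continuous
  have key := (intervalIntegral.hasDerivAt_integral_of_dominated_loc_of_deriv_le
    (μ := volume) (F := m) (F' := fun s y => fderiv ℝ (Function.uncurry m) (s, y) (1, 0))
    (x₀ := t) (s := Metric.closedBall t c) (a := 0) (b := x) (bound := fun _ => C)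
    (Metric.closedBall_mem_nhds t hc)
    (Filter.mem_of_superset (isOpen_Ioo.mem_nhds ht) fun s hs =>
      (hcont hs).aestronglyMeasurable)
    ((hcont ht).intervalIntegrable _ _)
    (Continuous.aestronglyMeasurable (by
      rw [← continuousOn_univ]
      exact (continuousOn_time_deriv hm).comp (f := fun y => (t, y)) (by fun_prop)
        fun y _ => ⟨ht, mem_univ _⟩))
    (ae_of_all _ fun y hy s hs => hC (s, y) ⟨hs, uIoc_subset_uIcc hy⟩)
    (by simp)
    (ae_of_all _ fun y hy s hs => hasDerivAt_time_slice hm (hcT hs) y)).2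
  refine key.congr_deriv ?_
  rw [← neg_sub, ← integral_deriv_flux hm hK (Ioo_subset_Icc_self ht),
    ← intervalIntegral.integral_neg]
  refine intervalIntegral.integral_congr fun y _ => ?_
  have := heq t ht y
  rw [(hasDerivAt_time_slice hm ht y).deriv] at this
  linarith

lemma hasFDerivAt_primitive (hm : ContDiffOn ℝ 1 (Function.uncurry m) (Icc 0 T ×ˢ univ))
    {K : NNReal} (hK : ∀ t ∈ Icc 0 T, LipschitzWith K (v t))
    (hc : ContinuousOn (fun p : ℝ × ℝ => v p.1 p.2) (Icc 0 T ×ˢ univ))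
    (heq : ∀ t ∈ Ioo 0 T, ∀ x,
      deriv (fun s => m s x) t + deriv (fun y => m t y * v t y) x = 0)
    {t : ℝ} (ht : t ∈ Ioo 0 T) (x : ℝ) :
    HasFDerivAt (fun p : ℝ × ℝ => ∫ y in (0 : ℝ)..p.2, m p.1 y)
      (((1 : ℝ →L[ℝ] ℝ).smulRight (m t 0 * v t 0 - m t x * v t x)).coprod
        ((1 : ℝ →L[ℝ] ℝ).smulRight (m t x))) (t, x) := by
  have hev : ∀ᶠ p : ℝ × ℝ in 𝓝 (t, x), p.1 ∈ Ioo 0 T :=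
    continuous_fst.continuousAt.eventually (isOpen_Ioo.mem_nhds ht)
  have hnhds : Icc 0 T ×ˢ (univ : Set ℝ) ∈ 𝓝 (t, x) :=
    prod_mem_nhds (Icc_mem_nhds ht.1 ht.2) univ_mem
  have hnhds0 : Icc 0 T ×ˢ (univ : Set ℝ) ∈ 𝓝 (t, (0 : ℝ)) :=
    prod_mem_nhds (Icc_mem_nhds ht.1 ht.2) univ_mem
  have cm : ContinuousAt (fun p : ℝ × ℝ => m p.1 p.2) (t, x) := hm.continuousOn.continuousAt hnhds
  have cv : ContinuousAt (fun p : ℝ × ℝ => v p.1 p.2) (t, x) := hc.continuousAt hnhds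
  have cz : ContinuousAt (fun p : ℝ × ℝ => (p.1, (0 : ℝ))) (t, x) := by fun_prop
  have cm0 : ContinuousAt (fun p : ℝ × ℝ => m p.1 0) (t, x) :=
    ContinuousAt.comp' (f := fun p : ℝ × ℝ => (p.1, (0 : ℝ))) (hm.continuousOn.continuousAt hnhds0) cz
  have cv0 : ContinuousAt (fun p : ℝ × ℝ => v p.1 0) (t, x) := 
    ContinuousAt.comp' (f := fun p : ℝ × ℝ => (p.1, (0 : ℝ))) (hc.continuousAt hnhds0) cz
  exact (hasStrictFDerivAt_uncurry_coprod (u := (t, x)) (f := fun s z => ∫ y in (0 : ℝ)..z, m s y)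
    (f₁ := fun s z => (1 : ℝ →L[ℝ] ℝ).smulRight (m s 0 * v s 0 - m s z * v s z))
    (f₂ := fun s z => (1 : ℝ →L[ℝ] ℝ).smulRight (m s z))
    (hev.mono fun p hp => (hasDerivAt_primitive_time hm hK heq hp p.2).hasFDerivAt)
    (hev.mono fun p hp => (intervalIntegral.integral_hasDerivAt_right
      ((contDiff_slice (k := 1) hm (Ioo_subset_Icc_self hp)).continuous.intervalIntegrable _ _)
      ((contDiff_slice (k := 1) hm (Ioo_subset_Icc_self hp)).continuous.stronglyMeasurableAtFilter _ _)
      (contDiff_slice (k := 1) hm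
        (Ioo_subset_Icc_self hp)).continuous.continuousAt).hasFDerivAt)
    (((ContinuousLinearMap.smulRightL ℝ ℝ ℝ 1).continuous.continuousAt).comp
      ((cm0.mul cv0).sub (cm.mul cv)))
    (((ContinuousLinearMap.smulRightL ℝ ℝ ℝ 1).continuous.continuousAt).comp cm)).hasFDerivAt

/-- Along trajectories of the velocity field the mass between two particles is conserved. -/
lemma integral_between_trajectories
    (hm : ContDiffOn ℝ 1 (Function.uncurry m) (Icc 0 T ×ˢ univ))
    {K : NNReal} (hK : ∀ t ∈ Icc 0 T, LipschitzWith K (v t))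
    (hc : ContinuousOn (fun p : ℝ × ℝ => v p.1 p.2) (Icc 0 T ×ˢ univ))
    (heq : ∀ t ∈ Ioo 0 T, ∀ x,
      deriv (fun s => m s x) t + deriv (fun y => m t y * v t y) x = 0)
    {α β : ℝ → ℝ} (hα : IsTrajectory T v α) (hβ : IsTrajectory T v β) {t : ℝ}
    (ht : t ∈ Icc 0 T) : ∫ y in (α t)..(β t), m t y = ∫ y in (α 0)..(β 0), m 0 y := by
  have hT : 0 ≤ T := ht.1.trans ht.2
  set G : ℝ × ℝ → ℝ := fun p => ∫ y in (0 : ℝ)..p.2, m p.1 y with hG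
  have hGd {γ : ℝ → ℝ} (hγ : IsTrajectory T v γ) {s : ℝ} (hs : s ∈ Ioo 0 T) :
      HasDerivAt (fun s => G (s, γ s)) (m s 0 * v s 0) s := by
    have h := (hasFDerivAt_primitive hm hK hc heq hs (γ s)).comp_hasDerivAt
      (f := fun s => (s, γ s)) s ((hasDerivAt_id s).prodMk (hγ.hasDerivAt hs))
    convert! h using 1
    simp
    ring
  have hGc : ContinuousOn G (Icc 0 T ×ˢ univ) := by
    have hproj : Continuous fun p : ℝ × ℝ => m (projIcc 0 T hT p.1) p.2 :=
      hm.continuousOn.comp_continuous (f := fun p : ℝ × ℝ => ((projIcc 0 T hT p.1 : ℝ), p.2))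
        (by fun_prop) fun p => ⟨Subtype.coe_prop _, mem_univ _⟩
    have h := intervalIntegral.continuous_parametric_primitive_of_continuous (μ := volume)
      (a₀ := 0) (f := fun s y => m (projIcc 0 T hT s) y) hproj
    refine h.continuousOn.congr fun p hp => ?_
    simp only [hG, projIcc_of_mem hT hp.1]
  have hGt {γ : ℝ → ℝ} (hγ : IsTrajectory T v γ) :
      ContinuousOn (fun s => G (s, γ s)) (Icc 0 T) :=
    hGc.comp (continuousOn_id.prodMk hγ.continuousOn) fun s hs => ⟨hs, mem_univ _⟩
  have hint {s : ℝ} (hs : s ∈ Icc 0 T) :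
      ∫ y in (α s)..(β s), m s y = G (s, β s) - G (s, α s) := by
    have hi (a b : ℝ) : IntervalIntegrable (m s) volume a b :=
      (contDiff_slice (k := 1) hm hs).continuous.intervalIntegrable _ _
    exact (intervalIntegral.integral_interval_sub_left (hi _ _) (hi _ _)).symm
  rw [hint ht, hint ⟨le_rfl, hT⟩]
  rcases ht.1.eq_or_lt with rfl | ht₀
  · rfl
  have hsub : Icc 0 t ⊆ Icc 0 T := Icc_subset_Icc_right ht.2
  obtain ⟨s, hs, he⟩ := exists_hasDerivAt_eq_slope (fun s => G (s, β s) - G (s, α s))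
    (fun s => m s 0 * v s 0 - m s 0 * v s 0) ht₀ (((hGt hβ).sub (hGt hα)).mono hsub)
    fun s hs => (hGd hβ (Ioo_subset_Ioo_right ht.2 hs)).sub (hGd hα (Ioo_subset_Ioo_right ht.2 hs))
  rw [sub_self, eq_comm, div_eq_zero_iff, sub_eq_zero] at he
  exact he.resolve_right (by linarith)

end Conservation

section Quantile

/-- Lebesgue measure on the open unit interval. -/
noncomputable def unitMeasure : Measure (Ioo (0 : ℝ) 1) := volume.comap Subtype.val

lemma unitMeasure_preimage (s : Set ℝ) :
    unitMeasure (Subtype.val ⁻¹' s) = volume (Ioo 0 1 ∩ s) := by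
  rw [unitMeasure, (MeasurableEmbedding.subtype_coe measurableSet_Ioo).comap_apply,
    Subtype.image_preimage_coe]

instance : IsProbabilityMeasure unitMeasure := by
  refine ⟨?_⟩
  rw [← preimage_univ, unitMeasure_preimage]
  simp

open ProbabilityTheory in
/-- Every probability measure on the line is the law of a monotone function on the unit interval. -/
lemma exists_monotone_map_eq (μ : Measure ℝ) [IsProbabilityMeasure μ] :
    ∃ Q : Ioo (0 : ℝ) 1 → ℝ, Monotone Q ∧ unitMeasure.map Q = μ := by
  have ne (u : Ioo (0 : ℝ) 1) : {x | (u : ℝ) ≤ cdf μ x}.Nonempty :=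
    (((tendsto_cdf_atTop μ).eventually (eventually_gt_nhds u.2.2)).mono fun _ h => h.le).exists
  have bdd (u : Ioo (0 : ℝ) 1) : BddBelow {x | (u : ℝ) ≤ cdf μ x} := by
    obtain ⟨y, hy⟩ := ((tendsto_cdf_atBot μ).eventually (eventually_lt_nhds u.2.1)).exists
    refine ⟨y, fun x hx => ?_⟩
    by_contra! h
    exact absurd (hx.trans (monotone_cdf μ h.le)) (not_le.2 hy)
  have gc (u : Ioo (0 : ℝ) 1) (x : ℝ) :
      sInf {x | (u : ℝ) ≤ cdf μ x} ≤ x ↔ (u : ℝ) ≤ cdf μ x := by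
    refine ⟨fun h => ?_, fun h => csInf_le (bdd u) h⟩
    refine ge_of_tendsto (((cdf μ).right_continuous x).mono Ioi_subset_Ici_self)
      (eventually_mem_nhdsWithin.mono fun y hy => ?_)
    obtain ⟨z, hz, hzy⟩ := exists_lt_of_csInf_lt (ne u) (h.trans_lt hy)
    exact le_trans hz (monotone_cdf μ hzy.le)
  have hmono : Monotone fun u : Ioo (0 : ℝ) 1 => sInf {x | (u : ℝ) ≤ cdf μ x} := fun u w huw =>
    (gc u _).2 (le_trans huw ((gc w _).1 le_rfl))
  refine ⟨_, hmono, ?_⟩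
  have : IsProbabilityMeasure (unitMeasure.map fun u : Ioo (0 : ℝ) 1 =>
      sInf {x | (u : ℝ) ≤ cdf μ x}) :=
    Measure.isProbabilityMeasure_map hmono.measurable.aemeasurable
  refine Measure.ext_of_Iic _ _ fun x => ?_
  rw [Measure.map_apply hmono.measurable measurableSet_Iic, ← ofReal_cdf]
  have hpre : (fun u : Ioo (0 : ℝ) 1 => sInf {x | (u : ℝ) ≤ cdf μ x}) ⁻¹' Iic x
      = Subtype.val ⁻¹' Iic (cdf μ x) := by
    ext u
    exact gc u x
  rw [hpre, unitMeasure_preimage]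
  refine le_antisymm ?_ ?_
  · calc volume (Ioo 0 1 ∩ Iic (cdf μ x))
      _ ≤ volume (Ioc 0 (cdf μ x)) := measure_mono fun y hy => ⟨hy.1.1, hy.2⟩
      _ = _ := by simp
  · calc ENNReal.ofReal (cdf μ x)
      _ = volume (Ioo 0 (cdf μ x)) := by simp
      _ ≤ volume (Ioo 0 1 ∩ Iic (cdf μ x)) := measure_mono fun y hy => ⟨⟨hy.1, hy.2.trans_le (cdf_le_one μ x)⟩, hy.2.le⟩

end Quantile

section Transport

variable {T : ℝ} {m v : ℝ → ℝ → ℝ}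

lemma withDensity_Ioc {u : ℝ → ℝ} (hu : Integrable u) (hu₀ : ∀ x, 0 ≤ u x) {a b : ℝ}
    (hab : a ≤ b) : (volume.withDensity fun x => ENNReal.ofReal (u x)) (Ioc a b)
      = ENNReal.ofReal (∫ x in a..b, u x) := by
  rw [withDensity_apply _ measurableSet_Ioc, intervalIntegral.integral_of_le hab,
    ofReal_integral_eq_lintegral_ofReal hu.integrableOn (ae_of_all _ hu₀)]

/-- The flow of the velocity field transports the initial density to the density at time `t`. -/
lemma map_flow_densMeasure
    (hm : ContDiffOn ℝ 1 (Function.uncurry m) (Icc 0 T ×ˢ univ))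
    (hm₀ : ∀ t ∈ Icc 0 T, ∀ x, 0 ≤ m t x) (hmi : ∀ t ∈ Icc 0 T, Integrable (m t))
    {K : NNReal} (hK : ∀ t ∈ Icc 0 T, LipschitzWith K (v t))
    (hc : ContinuousOn (fun p : ℝ × ℝ => v p.1 p.2) (Icc 0 T ×ˢ univ))
    (heq : ∀ t ∈ Ioo 0 T, ∀ x,
      deriv (fun s => m s x) t + deriv (fun y => m t y * v t y) x = 0)
    {Φ : ℝ → ℝ → ℝ} (hΦ₀ : ∀ x, Φ x 0 = x) (hΦ : ∀ x, IsTrajectory T v (Φ x))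
    (hmono : ∀ t ∈ Icc 0 T, StrictMono (Φ · t))
    (hsurj : ∀ t ∈ Icc 0 T, Function.Surjective (Φ · t)) {t : ℝ} (ht : t ∈ Icc 0 T) :
    (densMeasure m 0).map (Φ · t) = densMeasure m t := by
  have h0 : (0 : ℝ) ∈ Icc 0 T := ⟨le_rfl, ht.1.trans ht.2⟩
  have hmeas : Measurable (Φ · t) := (hmono t ht).monotone.measurable
  have hmap {a b : ℝ} (hab : a < b) :
      (densMeasure m 0).map (Φ · t) (Ioc a b) = densMeasure m t (Ioc a b) := by
    obtain ⟨a, rfl⟩ := hsurj t ht a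
    obtain ⟨b, rfl⟩ := hsurj t ht b
    have hab' : a ≤ b := ((hmono t ht).lt_iff_lt.1 hab).le
    have hpre : (Φ · t) ⁻¹' Ioc (Φ a t) (Φ b t) = Ioc a b := by
      ext x
      exact and_congr (hmono t ht).lt_iff_lt (hmono t ht).le_iff_le
    rw [Measure.map_apply hmeas measurableSet_Ioc, hpre, densMeasure, densMeasure,
      withDensity_Ioc (hmi 0 h0) (hm₀ 0 h0) hab', withDensity_Ioc (hmi t ht) (hm₀ t ht) hab.le,
      integral_between_trajectories hm hK hc heq (hΦ a) (hΦ b) ht, hΦ₀, hΦ₀]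
  refine (Measure.ext_of_Ioc' _ _ (fun a b hab => ?_) fun a b hab => (hmap hab).symm).symm
  rw [densMeasure, withDensity_Ioc (hmi t ht) (hm₀ t ht) hab.le]
  exact ENNReal.ofReal_ne_top

end Transport

/-- The facts about a nice Dyson solution that are used along its flow: a monotone Lagrangian
representation on the unit interval, together with control of the truncated Hilbert transform. -/
lemma IsNiceDysonSolution.exists_lagrangian {T : ℝ} {m : ℝ → ℝ → ℝ} (hT : 0 < T)
    (hm : IsNiceDysonSolution T m) :
    ∃ X : ℝ → Ioo (0 : ℝ) 1 → ℝ, (∀ t ∈ Icc 0 T, Monotone (X t)) ∧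
      (∀ t ∈ Icc 0 T, unitMeasure.map (X t) = densMeasure m t) ∧
      ∀ u, IsTrajectory T (fun t => hilbert (m t)) (fun t => X t u) := by
  obtain ⟨hs, h0, hi, h1, -, -, heq, ⟨M, hM⟩, hc, K, hK⟩ := hm
  have hK' : ∀ t ∈ Icc 0 T, LipschitzWith K (hilbert (m t)) := fun t ht => hK t ht.1 ht.2
  obtain ⟨Φ, hΦ₀, hΦ, hmono, hsurj⟩ := exists_flow (v := fun t => hilbert (m t)) hK' hc
    (fun t ht x => hM t x ht.1 ht.2) hT.le
  have : IsProbabilityMeasure (densMeasure m 0) :=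
    isProbabilityMeasure_withDensity (hi 0 le_rfl hT.le) (fun x => h0 0 x le_rfl hT.le)
      (h1 0 le_rfl hT.le)
  obtain ⟨Q, hQ, hlaw⟩ := exists_monotone_map_eq (densMeasure m 0)
  refine ⟨fun t u => Φ (Q u) t, fun t ht => (hmono t ht).monotone.comp hQ, fun t ht => ?_,
    fun u => hΦ (Q u)⟩
  rw [← map_flow_densMeasure (hs.of_le (by norm_cast))
    (fun t ht x => h0 t x ht.1 ht.2) (fun t ht => hi t ht.1 ht.2) hK' hc
    (fun t ht x => heq t x ht.1 ht.2.le) hΦ₀ hΦ hmono hsurj ht, ← hlaw,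
    Measure.map_map (hmono t ht).monotone.measurable hQ.measurable]
  rfl

section Slices

variable {T : ℝ} {m : ℝ → ℝ → ℝ}

lemma IsNiceDysonSolution.contDiff (hm : IsNiceDysonSolution T m) {t : ℝ} (ht : t ∈ Icc 0 T) :
    ContDiff ℝ 1 (m t) :=
  contDiff_slice (k := 1) (hm.1.of_le (by norm_cast)) ht

lemma IsNiceDysonSolution.tendsto_hilbert (hm : IsNiceDysonSolution T m) {t : ℝ}
    (ht : t ∈ Icc 0 T) (x : ℝ) :
    Tendsto (fun δ => truncHilbert (m t) δ x) (𝓝[>] 0) (𝓝 (hilbert (m t) x)) := by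
  obtain ⟨-, -, -, -, -, hlim, -⟩ := hm
  exact tendsto_nhds_limUnder (hlim t x ht.1 ht.2)

lemma IsNiceDysonSolution.exists_abs_truncHilbert_le (hm : IsNiceDysonSolution T m) {t : ℝ}
    (ht : t ∈ Icc 0 T) (R : ℝ) :
    ∃ C, ∀ x, |x| ≤ R → ∀ δ, 0 < δ → δ < 1 → |truncHilbert (m t) δ x| ≤ C := by
  have hcd := hm.contDiff ht
  obtain ⟨-, h0, hi, h1, -⟩ := hm
  obtain ⟨L, hL⟩ := hcd.contDiffOn.exists_lipschitzOnWith one_ne_zero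
    (convex_Icc (-(R + 1)) (R + 1)) isCompact_Icc
  refine ⟨1 + 2 * L, fun x hx δ hδ hδ₁ => abs_truncHilbert_le (hi t ht.1 ht.2)
    (fun y => h0 t y ht.1 ht.2) (h1 t ht.1 ht.2) (fun y z hy hz => ?_) hx hδ hδ₁⟩
  simpa [Real.dist_eq] using hL.dist_le_mul y (abs_le.1 hy) z (abs_le.1 hz)

lemma IsNiceDysonSolution.integrable_sq (hm : IsNiceDysonSolution T m) {t : ℝ}
    (ht : t ∈ Icc 0 T) : Integrable (fun x => x ^ 2) (densMeasure m t) := by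
  have hcd := (hm.contDiff ht).continuous
  obtain ⟨-, h0, -, -, h2, -⟩ := hm
  rw [densMeasure, integrable_withDensity_iff (by fun_prop) (by simp)]
  refine (h2 t ht.1 ht.2).congr (ae_of_all _ fun x => ?_)
  simp [h0 t x ht.1 ht.2]

end Slices

section Wasserstein

variable {Ω : Type*} [MeasurableSpace Ω] {P : Measure Ω} {X Y : Ω → ℝ}

lemma memLp_two_of_map {μ : Measure ℝ} (hX : Measurable X) (hμ : P.map X = μ)
    (h : Integrable (fun x => x ^ 2) μ) : MemLp X 2 P := by
  rw [memLp_two_iff_integrable_sq hX.aestronglyMeasurable]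
  rw [← hμ] at h
  exact h.comp_measurable hX

/-- A comonotone coupling is optimal for the quadratic cost. -/
lemma W2_eq_of_monotone [IsProbabilityMeasure P] [LinearOrder Ω] {μ ν : Measure ℝ} (hX : Monotone X) (hY : Monotone Y)
    (hXm : Measurable X) (hYm : Measurable Y) (hμ : P.map X = μ) (hν : P.map Y = ν)
    (hμ₂ : Integrable (fun x => x ^ 2) μ) (hν₂ : Integrable (fun x => x ^ 2) ν) :
    W2 μ ν = Real.sqrt (∫ u, (X u - Y u) ^ 2 ∂P) := by
  have hXY : Measurable fun u => (X u, Y u) := hXm.prodMk hYm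
  have hsq : Integrable (fun u => (X u - Y u) ^ 2) P :=
    ((memLp_two_of_map hXm hμ hμ₂).sub (memLp_two_of_map hYm hν hν₂)).integrable_sq
  refine IsLeast.csInf_eq ⟨⟨P.map fun u => (X u, Y u),
    Measure.isProbabilityMeasure_map hXY.aemeasurable, ?_, ?_, ?_⟩, ?_⟩
  · rw [Measure.map_map measurable_fst hXY, ← hμ]
    rfl
  · rw [Measure.map_map measurable_snd hXY, ← hν]
    rfl
  · rw [integral_map hXY.aemeasurable (by fun_prop)]
    simp only [sq_abs]
  · rintro _ ⟨γ, hγ, h1, h2, rfl⟩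
    simp only [sq_abs]
    refine Real.sqrt_le_sqrt ?_
    have hγ₂ : Integrable (fun p : ℝ × ℝ => (p.1 - p.2) ^ 2) γ :=
      ((memLp_two_of_map measurable_fst h1 hμ₂).sub
        (memLp_two_of_map measurable_snd h2 hν₂)).integrable_sq
    have key := lintegral_sq_le_of_monotone hX hY hXm hYm (h1.trans hμ.symm) (h2.trans hν.symm)
    rw [← ofReal_integral_eq_lintegral_ofReal hsq (ae_of_all _ fun _ => sq_nonneg _),
      ← ofReal_integral_eq_lintegral_ofReal hγ₂ (ae_of_all _ fun _ => sq_nonneg _)] at key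
    exact (ENNReal.ofReal_le_ofReal_iff (integral_nonneg fun _ => sq_nonneg _)).1 key

end Wasserstein

/-- The quadratic cost between two monotone Lagrangian representations is non-increasing. -/
lemma antitoneOn_integral_sq_sub {T : ℝ} {m n : ℝ → ℝ → ℝ} (hm : IsNiceDysonSolution T m)
    (hn : IsNiceDysonSolution T n) {X Y : ℝ → Ioo (0 : ℝ) 1 → ℝ}
    (hX : ∀ t ∈ Icc 0 T, Monotone (X t)) (hY : ∀ t ∈ Icc 0 T, Monotone (Y t))
    (hXlaw : ∀ t ∈ Icc 0 T, unitMeasure.map (X t) = densMeasure m t)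
    (hYlaw : ∀ t ∈ Icc 0 T, unitMeasure.map (Y t) = densMeasure n t)
    (hXtraj : ∀ u, IsTrajectory T (fun t => hilbert (m t)) (fun t => X t u))
    (hYtraj : ∀ u, IsTrajectory T (fun t => hilbert (n t)) (fun t => Y t u)) :
    AntitoneOn (fun t => ∫ u, (X t u - Y t u) ^ 2 ∂unitMeasure) (Icc 0 T) := by
  obtain ⟨-, hm₀, -, -, -, -, -, ⟨M, hM⟩, -, K, hK⟩ := id hm
  obtain ⟨-, hn₀, -, -, -, -, -, ⟨N, hN⟩, -, L, hL⟩ := id hn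
  rcases (Icc (0 : ℝ) T).eq_empty_or_nonempty with hemp | hne
  · rw [hemp]
    exact fun _ h => h.elim
  have hT : 0 ≤ T := nonempty_Icc.1 hne
  have h0 : (0 : ℝ) ∈ Icc 0 T := ⟨le_rfl, hT⟩
  have hM₀ : 0 ≤ M := (abs_nonneg _).trans (hM 0 0 le_rfl hT)
  have hN₀ : 0 ≤ N := (abs_nonneg _).trans (hN 0 0 le_rfl hT)
  have hXm (t) (ht : t ∈ Icc 0 T) : Measurable (X t) := (hX t ht).measurable
  have hYm (t) (ht : t ∈ Icc 0 T) : Measurable (Y t) := (hY t ht).measurable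
  have hHm (t) (ht : t ∈ Icc 0 T) : Measurable (hilbert (m t)) :=
    (hK t ht.1 ht.2).continuous.measurable
  have hHn (t) (ht : t ∈ Icc 0 T) : Measurable (hilbert (n t)) :=
    (hL t ht.1 ht.2).continuous.measurable
  have hZ₂ (t) (ht : t ∈ Icc 0 T) : MemLp (fun u => X t u - Y t u) 2 unitMeasure :=
    (memLp_two_of_map (hXm t ht) (hXlaw t ht) (hm.integrable_sq ht)).sub
      (memLp_two_of_map (hYm t ht) (hYlaw t ht) (hn.integrable_sq ht))
  have hZ (t) (ht : t ∈ Icc 0 T) : Integrable (fun u => X t u - Y t u) unitMeasure :=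
    (hZ₂ t ht).integrable one_le_two
  set B : Ioo (0 : ℝ) 1 → ℝ := fun u => |X 0 u - Y 0 u| + (M + N) * T with hB
  have hB₂ : MemLp B 2 unitMeasure := (hZ₂ 0 h0).abs.add (memLp_const _)
  have hZB (t) (ht : t ∈ Icc 0 T) (u) : |X t u - Y t u| ≤ B u := by
    have h1 := (hXtraj u).abs_sub_le (fun s hs x => hM s x hs.1 hs.2) ht
    have h2 := (hYtraj u).abs_sub_le (fun s hs x => hN s x hs.1 hs.2) ht
    have e : X t u - Y t u = (X 0 u - Y 0 u) + ((X t u - X 0 u) - (Y t u - Y 0 u)) := by ring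
    rw [e]
    refine (abs_add_le _ _).trans (add_le_add_right ((abs_sub _ _).trans ?_) _)
    linarith
  have hmeas (t) (ht : t ∈ Icc 0 T) :
      AEStronglyMeasurable (fun u => (X t u - Y t u) ^ 2) unitMeasure :=
    (((hXm t ht).sub (hYm t ht)).pow_const 2).aestronglyMeasurable
  have hcont : ContinuousOn (fun t => ∫ u, (X t u - Y t u) ^ 2 ∂unitMeasure) (Icc 0 T) := by
    refine continuousOn_of_dominated (bound := fun u => B u ^ 2) hmeas (fun t ht =>
      ae_of_all _ fun u => ?_) hB₂.integrable_sq (ae_of_all _ fun u => ?_)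
    · rw [norm_pow]
      exact pow_le_pow_left₀ (norm_nonneg _) (hZB t ht u) 2
    · exact ((hXtraj u).continuousOn.sub (hYtraj u).continuousOn).pow 2
  have hderiv (t) (ht : t ∈ Ioo 0 T) :
      HasDerivAt (fun t => ∫ u, (X t u - Y t u) ^ 2 ∂unitMeasure)
        (∫ u, 2 * ((X t u - Y t u) * (hilbert (m t) (X t u) - hilbert (n t) (Y t u)))
          ∂unitMeasure) t := by
    have ht' := Ioo_subset_Icc_self ht
    refine (hasDerivAt_integral_of_dominated_loc_of_deriv_le (s := Ioo 0 T)
      (F := fun t u => (X t u - Y t u) ^ 2)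
      (F' := fun t u => 2 * ((X t u - Y t u) * (hilbert (m t) (X t u) - hilbert (n t) (Y t u))))
      (bound := fun u => 2 * (B u * (M + N))) (isOpen_Ioo.mem_nhds ht)
      (Filter.mem_of_superset (isOpen_Ioo.mem_nhds ht) fun s hs =>
        hmeas s (Ioo_subset_Icc_self hs))
      (hZ₂ t ht').integrable_sq ?_ (ae_of_all _ fun u s hs => ?_)
      (((hB₂.integrable one_le_two).mul_const _).const_mul _) (ae_of_all _ fun u s hs => ?_)).2
    · have h1 := hXm t ht'
      have h2 := hYm t ht'
      have h3 := hHm t ht'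
      have h4 := hHn t ht'
      exact Measurable.aestronglyMeasurable (by fun_prop)
    · have hs' := Ioo_subset_Icc_self hs
      rw [norm_mul, norm_mul, Real.norm_of_nonneg zero_le_two]
      refine mul_le_mul_of_nonneg_left (mul_le_mul (hZB s hs' u) ((abs_sub _ _).trans
        (add_le_add (hM _ _ hs'.1 hs'.2) (hN _ _ hs'.1 hs'.2))) (norm_nonneg _)
        ((abs_nonneg _).trans (hZB s hs' u))) zero_le_two
    · convert! (((hXtraj u).hasDerivAt hs).sub ((hYtraj u).hasDerivAt hs)).pow 2 using 1
      simp
      ring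
  refine antitoneOn_of_deriv_nonpos (convex_Icc 0 T) hcont ?_ ?_
  · rw [interior_Icc]
    exact fun t ht => (hderiv t ht).differentiableAt.differentiableWithinAt
  · rw [interior_Icc]
    intro t ht
    have ht' := Ioo_subset_Icc_self ht
    rw [(hderiv t ht).deriv, integral_const_mul]
    have hkm (δ x : ℝ) := integral_truncKernel_eq_truncHilbert
      (hm.contDiff ht').continuous.measurable (fun x => hm₀ t x ht'.1 ht'.2) (hXm t ht')
      (hXlaw t ht') δ x
    have hkn (δ x : ℝ) := integral_truncKernel_eq_truncHilbert
      (hn.contDiff ht').continuous.measurable (fun x => hn₀ t x ht'.1 ht'.2) (hYm t ht')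
      (hYlaw t ht') δ x
    refine mul_nonpos_of_nonneg_of_nonpos zero_le_two (integral_interaction_nonpos (hX t ht')
      (hY t ht') (hXm t ht') (hYm t ht') (hZ t ht') (measure_fiber_eq_zero (hXm t ht') (hXlaw t ht'))
      (measure_fiber_eq_zero (hYm t ht') (hYlaw t ht')) (hHm t ht') (hHn t ht')
      (fun x => hM t x ht'.1 ht'.2) (fun x => hN t x ht'.1 ht'.2) ?_ ?_ ?_ ?_)
    · simpa only [hkm] using hm.tendsto_hilbert ht'
    · simpa only [hkn] using hn.tendsto_hilbert ht'
    · simpa only [hkm] using hm.exists_abs_truncHilbert_le ht'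
    · simpa only [hkn] using hn.exists_abs_truncHilbert_le ht'

/-- **Contraction of the Dyson flow in the `2`-Wasserstein distance:**
for two nice solutions `m, n` of the Dyson equation, `t ↦ W₂(µ_t, ν_t)` is non-increasing. -/
theorem dyson_W2_contraction (T : ℝ) (hT : 0 < T) (m n : ℝ → ℝ → ℝ)
    (hm : IsNiceDysonSolution T m) (hn : IsNiceDysonSolution T n) :
    ∀ s t : ℝ, 0 ≤ s → s ≤ t → t ≤ T →
      W2 (densMeasure m t) (densMeasure n t) ≤ W2 (densMeasure m s) (densMeasure n s) := by
  intro s t hs hst htT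
  obtain ⟨X, hX, hXlaw, hXtraj⟩ := hm.exists_lagrangian hT
  obtain ⟨Y, hY, hYlaw, hYtraj⟩ := hn.exists_lagrangian hT
  have key (r) (hr : r ∈ Icc 0 T) : W2 (densMeasure m r) (densMeasure n r)
      = Real.sqrt (∫ u, (X r u - Y r u) ^ 2 ∂unitMeasure) :=
    W2_eq_of_monotone (hX r hr) (hY r hr) (hX r hr).measurable (hY r hr).measurable
      (hXlaw r hr) (hYlaw r hr) (hm.integrable_sq hr) (hn.integrable_sq hr)
  have hs' : s ∈ Icc 0 T := ⟨hs, hst.trans htT⟩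
  have ht' : t ∈ Icc 0 T := ⟨hs.trans hst, htT⟩
  rw [key s hs', key t ht']
  exact Real.sqrt_le_sqrt
    (antitoneOn_integral_sq_sub hm hn hX hY hXlaw hYlaw hXtraj hYtraj hs' ht' hst)
end
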